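/- arXiv:2303.02013 — 2 statements merged into one kernel-verified Lean document; each statement's English description precedes it below -/
import Mathlib

section
/- Let I be an inversive plane of even order q. Then there exists k ≥ 1 with q = 2^k, and, with F the field GaloisField 2 k of order q, there exist a nondegenerate alternating bilinear form B on the vector space V = F⁴, an injective map f from the points of I into the projective space ℙ(F, V) whose image O contains exactly one point of each totally isotropic two-dimensional subspace of V (i.e., O is an ovoid of the generalized quadrangle W(q)), and a bijection g from the circles of I onto the points of ℙ(F, V) not in O, such that for every point x and circle C of I: x lies on C if and only if B vanishes on representatives of f(x) and g(C) (i.e., f(x) and g(C) are collinear in W(q)). -/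
/-- An inversive plane of order `q` on a finite point set `P`:
`|P| = q² + 1`, every circle has `q + 1` points, and any three distinct
points lie in exactly one circle. -/
structure InversivePlane (q : ℕ) (P : Type) [Fintype P] where
  two_le : 2 ≤ q
  circles : Finset (Finset P)
  card_points : Fintype.card P = q ^ 2 + 1
  circle_card : ∀ C ∈ circles, C.card = q + 1
  three_points : ∀ x y z : P, x ≠ y → x ≠ z → y ≠ z →
      ∃! C, C ∈ circles ∧ x ∈ C ∧ y ∈ C ∧ z ∈ C

set_option autoImplicit false

/-- A finite symplectic-like polar geometry described by its perpendicularity relation. -/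
structure PolarGeom (X : Type) (perp : X → X → Prop) (q : ℕ) : Prop where
  two_le : 2 ≤ q
  refl : ∀ x, perp x x
  symm : ∀ x y, perp x y → perp y x
  three : ∀ x y z, ∃ w, perp w x ∧ perp w y ∧ perp w z
  reg : ∀ x y w w' u z, x ≠ y → w ≠ w' → perp w x → perp w y → perp w' x → perp w' y →
    perp u x → perp u y → perp z w → perp z w' → perp u z
  card : ∀ x y, x ≠ y → Nat.card {w // perp w x ∧ perp w y} = q + 1
  nondeg : ∀ x y, x ≠ y → ∃ w, perp w x ∧ ¬ perp w y

namespace PolarGeom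

variable {X : Type} {perp : X → X → Prop} {q : ℕ}

/-- The line through two points. -/
def L (perp : X → X → Prop) (x y : X) : Set X :=
  {z | ∀ w, perp w x → perp w y → perp w z}

theorem left_mem (x y : X) : x ∈ L perp x y := fun _ h _ => h
theorem right_mem (x y : X) : y ∈ L perp x y := fun _ _ h => h

theorem L_comm (x y : X) : L perp x y = L perp y x := by
  ext z; exact ⟨fun h w a b => h w b a, fun h w a b => h w b a⟩

theorem three_pts (G : PolarGeom X perp q) {x y : X} (h : x ≠ y) (a b : X) :
    ∃ w, w ≠ a ∧ w ≠ b ∧ perp w x ∧ perp w y := by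
  classical
  by_contra hc
  push Not at hc
  have h1 := G.card x y h
  have h2 := G.two_le
  have h3 : Nat.card {w // perp w x ∧ perp w y} ≤ Nat.card (({a, b} : Finset X) : Set X) := by
    apply Nat.card_le_card_of_injective
      (fun w : {w // perp w x ∧ perp w y} => (⟨w.1, by
        simp only [Finset.coe_insert, Finset.coe_singleton, Set.mem_insert_iff, Set.mem_singleton_iff]
        by_contra hh; push Not at hh
        exact hc w.1 hh.1 hh.2 w.2.1 w.2.2⟩ : (({a, b} : Finset X) : Set X)))
    intro u v huv
    simpa [Subtype.ext_iff] using huv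
  have h4 : Nat.card (({a, b} : Finset X) : Set X) ≤ 2 := by
    simpa using Finset.card_le_two (a := a) (b := b)
  omega

theorem two (G : PolarGeom X perp q) {x y : X} (h : x ≠ y) (a : X) :
    ∃ w, w ≠ a ∧ perp w x ∧ perp w y := by
  obtain ⟨w, h1, _, h2⟩ := G.three_pts h a a
  exact ⟨w, h1, h2⟩

theorem two' (G : PolarGeom X perp q) {x y : X} (h : x ≠ y) :
    ∃ w w', w ≠ w' ∧ perp w x ∧ perp w y ∧ perp w' x ∧ perp w' y := by
  obtain ⟨w, _, h1, h2⟩ := G.two h x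
  obtain ⟨w', h0, h3, h4⟩ := G.two h w
  exact ⟨w, w', h0.symm, h1, h2, h3, h4⟩

/-- The polar of a pair is the line spanned by any two of its points. -/
theorem polar_eq (G : PolarGeom X perp q) {x y w w' : X} (hxy : x ≠ y) (hw : w ≠ w')
    (h1 : perp w x) (h2 : perp w y) (h3 : perp w' x) (h4 : perp w' y) (u : X) :
    u ∈ L perp w w' ↔ perp u x ∧ perp u y := by
  constructor
  · intro h
    exact ⟨G.symm _ _ (h x (G.symm _ _ h1) (G.symm _ _ h3)),
      G.symm _ _ (h y (G.symm _ _ h2) (G.symm _ _ h4))⟩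
  · rintro ⟨h5, h6⟩ z hz hz'
    exact G.symm _ _ (G.reg x y w w' u z hxy hw h1 h2 h3 h4 h5 h6 hz hz')

theorem line_polar (G : PolarGeom X perp q) {x y : X} (hxy : x ≠ y) :
    ∃ w w', w ≠ w' ∧ ∀ u, u ∈ L perp x y ↔ perp u w ∧ perp u w' := by
  obtain ⟨w, w', hw, h1, h2, h3, h4⟩ := G.two' hxy
  exact ⟨w, w', hw, fun u => G.polar_eq hw hxy (G.symm _ _ h1) (G.symm _ _ h3) (G.symm _ _ h2)
    (G.symm _ _ h4) u⟩

theorem L_eq (G : PolarGeom X perp q) {x y z z' : X} (hxy : x ≠ y) (hz : z ≠ z')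
    (h : z ∈ L perp x y) (h' : z' ∈ L perp x y) : L perp z z' = L perp x y := by
  obtain ⟨w, w', hw, H⟩ := G.line_polar hxy
  ext u
  rw [H]
  rw [H] at h h'
  exact G.polar_eq hw hz h.1 h.2 h'.1 h'.2 u

theorem meet (G : PolarGeom X perp q) {x y : X} (hxy : x ≠ y) (w : X) :
    ∃ z ∈ L perp x y, perp z w := by
  obtain ⟨a, b, _, H⟩ := G.line_polar hxy
  obtain ⟨z, h1, h2, h3⟩ := G.three a b w
  exact ⟨z, (H z).2 ⟨h1, h2⟩, h3⟩

theorem third (G : PolarGeom X perp q) {x y : X} (hxy : x ≠ y) :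
    ∃ z ∈ L perp x y, z ≠ x ∧ z ≠ y := by
  obtain ⟨a, b, hab, H⟩ := G.line_polar hxy
  obtain ⟨z, h1, h2, h3, h4⟩ := G.three_pts hab x y
  exact ⟨z, (H z).2 ⟨h3, h4⟩, h1, h2⟩

/-- If two distinct points of a line are perpendicular to `w`, all are. -/
theorem line_perp (G : PolarGeom X perp q) {x y z z' w : X} (hxy : x ≠ y) (hz : z ≠ z')
    (h : z ∈ L perp x y) (h' : z' ∈ L perp x y) (hw : perp w z) (hw' : perp w z') {u : X}
    (hu : u ∈ L perp x y) : perp w u := by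
  rw [← G.L_eq hxy hz h h'] at hu
  exact hu w hw hw'

theorem coplanar_meet (G : PolarGeom X perp q) {x y u v w : X} (hxy : x ≠ y) (huv : u ≠ v)
    (h1 : perp w x) (h2 : perp w y) (h3 : perp w u) (h4 : perp w v) :
    ∃ z, z ∈ L perp x y ∧ z ∈ L perp u v := by
  obtain ⟨a, ha, ha1, ha2⟩ := G.two hxy w
  obtain ⟨b, hb, hb1, hb2⟩ := G.two huv w
  obtain ⟨z, hz, hza, hzb⟩ := G.three w a b
  refine ⟨z, ?_, ?_⟩
  · exact (G.polar_eq ha.symm hxy (G.symm _ _ h1) (G.symm _ _ ha1) (G.symm _ _ h2)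
      (G.symm _ _ ha2) z).2 ⟨hz, hza⟩
  · exact (G.polar_eq hb.symm huv (G.symm _ _ h3) (G.symm _ _ hb1) (G.symm _ _ h4)
      (G.symm _ _ hb2) z).2 ⟨hz, hzb⟩

theorem two_planes (G : PolarGeom X perp q) {w x : X} (hwx : w ≠ x) :
    ∃ g, ¬ perp g w ∧ ¬ perp g x := by
  obtain ⟨u, hu, hu'⟩ := G.nondeg w x hwx
  obtain ⟨v, hv, hv'⟩ := G.nondeg x w hwx.symm
  have huv : u ≠ v := by rintro rfl; exact hu' hv
  obtain ⟨g, hg, hgu, hgv⟩ := G.third huv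
  refine ⟨g, fun h => hv' ?_, fun h => hu' ?_⟩
  · exact G.symm _ _ (G.line_perp huv hgu hg (left_mem _ _) (G.symm _ _ h) (G.symm _ _ hu)
      (right_mem _ _))
  · exact G.symm _ _ (G.line_perp huv hgv hg (right_mem _ _) (G.symm _ _ h) (G.symm _ _ hv)
      (left_mem _ _))

theorem plane_unique (G : PolarGeom X perp q) {h a c w w' : X} (ha : h ≠ a)
    (hc : c ∉ L perp h a) (h1 : perp w h) (h2 : perp w a) (h3 : perp w c)
    (h1' : perp w' h) (h2' : perp w' a) (h3' : perp w' c) : w = w' := by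
  by_contra hw
  exact hc ((G.polar_eq hw ha (G.symm _ _ h1) (G.symm _ _ h1') (G.symm _ _ h2)
    (G.symm _ _ h2') c).2 ⟨G.symm _ _ h3, G.symm _ _ h3'⟩)


theorem ne_aff {o h a : X} (hh : perp h o) (ha : ¬ perp a o) : h ≠ a := by
  rintro rfl; exact ha hh

/-- fibres : `L h a` with `h` at infinity; membership gives equality -/
theorem fib_eq (G : PolarGeom X perp q) {o h a b : X} (hh : perp h o) (ha : ¬ perp a o)
    (hb : ¬ perp b o) (hab : b ∈ L perp h a) : L perp h a = L perp h b :=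
  (G.L_eq (ne_aff hh ha) (ne_aff hh hb) (left_mem _ _) hab).symm

theorem fib_mem {h a b : X} (e : L perp h a = L perp h b) : b ∈ L perp h a := by
  rw [e]; exact right_mem _ _

theorem fib_iff (G : PolarGeom X perp q) {o h a b : X} (hh : perp h o) (ha : ¬ perp a o)
    (hb : ¬ perp b o) (hab : a ≠ b) : L perp h a = L perp h b ↔ h ∈ L perp a b := by
  constructor
  · intro e
    rw [G.L_eq (ne_aff hh ha) hab (right_mem _ _) (fib_mem e)]; exact left_mem _ _
  · intro e
    rw [G.L_eq hab (ne_aff hh ha) e (left_mem _ _), G.L_eq hab (ne_aff hh hb) e (right_mem _ _)]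

theorem dir_exists (G : PolarGeom X perp q) {o a b : X} (ha : ¬ perp a o)
    (hb : ¬ perp b o) (hab : a ≠ b) : ∃ h, perp h o ∧ L perp h a = L perp h b := by
  obtain ⟨h, h1, h2⟩ := G.meet hab o
  exact ⟨h, h2, (G.fib_iff h2 ha hb hab).2 h1⟩

theorem dir_unique (G : PolarGeom X perp q) {o a b h k : X} (ha : ¬ perp a o)
    (hb : ¬ perp b o) (hab : a ≠ b) (hh : perp h o) (hk : perp k o)
    (e : L perp h a = L perp h b) (e' : L perp k a = L perp k b) : h = k := by
  by_contra hne
  rw [G.fib_iff hh ha hb hab] at e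
  rw [G.fib_iff hk ha hb hab] at e'
  exact ha (G.symm _ _ (G.line_perp hab hne e e' (G.symm _ _ hh) (G.symm _ _ hk) (left_mem _ _)))

theorem fib_perp {h a b w : X} (e : L perp h a = L perp h b) (hw : perp w h) (hwa : perp w a) :
    perp w b := (fib_mem e) w hw hwa

/-- parallelogram relation in direction `h`. -/
def Par (perp : X → X → Prop) (o h a b c d : X) : Prop :=
  L perp h a = L perp h b ∧ L perp h c = L perp h d ∧ L perp h a ≠ L perp h c ∧
    ∃ k, perp k o ∧ L perp k a = L perp k c ∧ L perp k b = L perp k d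

theorem Par.symm {o h a b c d : X} (H : Par perp o h a b c d) : Par perp o h c d a b := by
  obtain ⟨h1, h2, h3, k, hk, h4, h5⟩ := H
  exact ⟨h2, h1, h3.symm, k, hk, h4.symm, h5.symm⟩

theorem Par.flip {o h a b c d : X} (H : Par perp o h a b c d) : Par perp o h b a d c := by
  obtain ⟨h1, h2, h3, k, hk, h4, h5⟩ := H
  exact ⟨h1.symm, h2.symm, by rwa [← h1, ← h2], k, hk, h5, h4⟩

theorem Par.exists (G : PolarGeom X perp q) {o h a b c : X} (hh : perp h o) (ha : ¬ perp a o)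
    (hb : ¬ perp b o) (hc : ¬ perp c o) (hab : L perp h a = L perp h b)
    (hac : L perp h a ≠ L perp h c) : ∃ d, ¬ perp d o ∧ Par perp o h a b c d := by
  have hne : a ≠ c := by rintro rfl; exact hac rfl
  obtain ⟨k, hk, hkac⟩ := G.dir_exists ha hc hne
  obtain ⟨w, hwh, hwa, hwc⟩ := G.three h a c
  have hwk : perp w k := ((G.fib_iff hk ha hc hne).1 hkac) w hwa hwc
  have hwb : perp w b := fib_perp hab hwh hwa
  obtain ⟨d, hd1, hd2⟩ := G.coplanar_meet (ne_aff hk hb) (ne_aff hh hc) hwk hwb hwh hwc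
  have hd : ¬ perp d o := by
    intro hdo
    have e1 : d = h := by
      by_contra hne
      exact hc (G.symm _ _ (G.line_perp (ne_aff hh hc) hne hd2 (left_mem _ _) (G.symm _ _ hdo)
        (G.symm _ _ hh) (right_mem _ _)))
    have e2 : d = k := by
      by_contra hne
      exact hb (G.symm _ _ (G.line_perp (ne_aff hk hb) hne hd1 (left_mem _ _) (G.symm _ _ hdo)
        (G.symm _ _ hk) (right_mem _ _)))
    subst e1; subst e2
    exact hac hkac
  exact ⟨d, hd, hab, G.fib_eq hh hc hd hd2, hac, k, hk, hkac, G.fib_eq hk hb hd hd1⟩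

theorem Par.unique (G : PolarGeom X perp q) {o h a b c d d' : X} (hh : perp h o) (ha : ¬ perp a o)
    (hc : ¬ perp c o) (hd : ¬ perp d o) (hd' : ¬ perp d' o)
    (H : Par perp o h a b c d) (H' : Par perp o h a b c d') : d = d' := by
  obtain ⟨h1, h2, h3, k, hk, h4, h5⟩ := H
  obtain ⟨h1', h2', h3', k', hk', h4', h5'⟩ := H'
  have hne : a ≠ c := by rintro rfl; exact h3 rfl
  have := G.dir_unique ha hc hne hk hk' h4 h4'
  subst this
  by_contra hdd
  have := G.dir_unique hd hd' hdd hh hk (h2.symm.trans h2') (h5.symm.trans h5')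
  subst this
  exact h3 h4

theorem Par.prism (G : PolarGeom X perp q) {o h a b c d e f : X} (hh : perp h o)
    (ha : ¬ perp a o) (hb : ¬ perp b o) (hc : ¬ perp c o) (hd : ¬ perp d o) (he : ¬ perp e o)
    (hf : ¬ perp f o)
    (H : Par perp o h a b c d) (H' : Par perp o h a b e f)
    (nc : ∀ w, perp w h → perp w a → perp w c → ¬ perp w e) : Par perp o h c d e f := by
  obtain ⟨h1, h2, h3, k1, hk1, h4, h5⟩ := H
  obtain ⟨h1', h2', h3', k2, hk2, h4', h5'⟩ := H'
  have hce : L perp h c ≠ L perp h e := by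
    intro hce
    obtain ⟨w, hw1, hw2, hw3⟩ := G.three h a c
    exact nc w hw1 hw2 hw3 (fib_perp hce hw1 hw3)
  have hce' : c ≠ e := by rintro rfl; exact hce rfl
  have hdf' : d ≠ f := by rintro rfl; exact hce (h2.trans h2'.symm)
  obtain ⟨k, hk, hkce⟩ := G.dir_exists hc he hce'
  obtain ⟨k', hk', hkdf⟩ := G.dir_exists hd hf hdf'
  refine ⟨h2, h2', hce, k, hk, hkce, ?_⟩
  suffices k = k' by rwa [this]
  by_contra hkk
  obtain ⟨w1, w1a, w1c, w1e⟩ := G.three a c e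
  obtain ⟨w2, w2b, w2d, w2f⟩ := G.three b d f
  obtain ⟨v, vh, vc, ve⟩ := G.three h c e
  have vd := fib_perp h2 vh vc
  have vf := fib_perp h2' vh ve
  have key : ∀ {w x y z : X}, ¬ perp x o → ¬ perp y o → x ≠ y → perp z o →
      L perp z x = L perp z y → perp w x → perp w y → perp w z := by
    intro w x y z hx hy hxy hz hzz hwx hwy
    exact ((G.fib_iff hz hx hy hxy).1 hzz) w hwx hwy
  have hac : a ≠ c := by rintro rfl; exact h3 rfl
  have hae : a ≠ e := by rintro rfl; exact h3' rfl
  have hbd : b ≠ d := by rintro rfl; exact h3 (h1.trans h2.symm)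
  have hbf : b ≠ f := by rintro rfl; exact h3' (h1.trans h2'.symm)
  have hk12 : k1 ≠ k2 := by
    rintro rfl
    obtain ⟨w, hw1, hw2, hw3⟩ := G.three h a k1
    exact nc w hw1 hw2 (fib_perp h4 hw3 hw2) (fib_perp h4' hw3 hw2)
  have w1o : w1 ≠ o := by rintro rfl; exact ha (G.symm _ _ w1a)
  have w2o : w2 ≠ o := by rintro rfl; exact hb (G.symm _ _ w2b)
  have m1 : k ∈ L perp k1 k2 := by
    rw [G.polar_eq w1o hk12 (G.symm _ _ (key ha hc hac hk1 h4 w1a w1c)) hk1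
      (G.symm _ _ (key ha he hae hk2 h4' w1a w1e)) hk2]
    exact ⟨G.symm _ _ (key hc he hce' hk hkce w1c w1e), hk⟩
  have m2 : k' ∈ L perp k1 k2 := by
    rw [G.polar_eq w2o hk12 (G.symm _ _ (key hb hd hbd hk1 h5 w2b w2d)) hk1
      (G.symm _ _ (key hb hf hbf hk2 h5' w2b w2f)) hk2]
    exact ⟨G.symm _ _ (key hd hf hdf' hk' hkdf w2d w2f), hk'⟩
  have vk := key hc he hce' hk hkce vc ve
  have vk' := key hd hf hdf' hk' hkdf vd vf
  have vk1 : perp v k1 := G.line_perp hk12 hkk m1 m2 vk vk' (left_mem _ _)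
  exact nc v vh (fib_perp h4.symm vk1 vc) vc ve

theorem Par.trans (G : PolarGeom X perp q) {o h a b c d e f : X} (hh : perp h o)
    (ha : ¬ perp a o) (hb : ¬ perp b o) (hc : ¬ perp c o) (hd : ¬ perp d o) (he : ¬ perp e o)
    (hf : ¬ perp f o)
    (H : Par perp o h a b c d) (H' : Par perp o h a b e f)
    (hce : L perp h c ≠ L perp h e) : Par perp o h c d e f := by
  by_cases nc : ∀ w, perp w h → perp w a → perp w c → ¬ perp w e
  · exact Par.prism G hh ha hb hc hd he hf H H' nc
  push Not at nc
  obtain ⟨w, wh, wa, wc, we⟩ := nc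
  have wo : w ≠ o := by rintro rfl; exact ha (G.symm _ _ wa)
  obtain ⟨g, gw, go⟩ := G.two_planes wo
  have gf : ∀ x, perp w x → L perp h x ≠ L perp h g := by
    intro x hx e
    exact gw (G.symm _ _ (fib_perp e wh hx))
  obtain ⟨g', go', Hg⟩ := Par.exists G hh ha hb go H.1 (gf a wa)
  have hca : c ∉ L perp h a := fun hm => H.2.2.1 (G.fib_eq hh ha hc hm)
  have hea : e ∉ L perp h a := fun hm => H'.2.2.1 (G.fib_eq hh ha he hm)
  have hec : e ∉ L perp h c := fun hm => hce (G.fib_eq hh hc he hm)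
  have c1 := Par.prism G hh ha hb hc hd go go' H Hg (fun w' h1 h2 h3 h4 => by
    have := G.plane_unique (ne_aff hh ha) hca h1 h2 h3 wh wa wc
    subst this; exact gw (G.symm _ _ h4))
  have c2 := Par.prism G hh ha hb he hf go go' H' Hg (fun w' h1 h2 h3 h4 => by
    have := G.plane_unique (ne_aff hh ha) hea h1 h2 h3 wh wa we
    subst this; exact gw (G.symm _ _ h4))
  exact Par.prism G hh go go' hc hd he hf c1.symm c2.symm (fun w' h1 h2 h3 h4 => by
    have := G.plane_unique (ne_aff hh hc) hec h1 h3 h4 wh wc we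
    subst this; exact gw (G.symm _ _ h2))

end PolarGeom

set_option autoImplicit false
namespace PolarGeom
variable {X : Type} {perp : X → X → Prop} {q : ℕ}

/-- dilations of the affine part -/
def Dil (perp : X → X → Prop) (o : X) (t : {a // ¬ perp a o} → {a // ¬ perp a o}) : Prop :=
  ∀ a b k, perp k o → L perp k a.1 = L perp k b.1 → L perp k (t a).1 = L perp k (t b).1

/-- preserving all fibres in direction `h` -/
def Pres (perp : X → X → Prop) (o h : X) (t : {a // ¬ perp a o} → {a // ¬ perp a o}) : Prop :=
  ∀ a, L perp h a.1 = L perp h (t a).1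

theorem other_fib (G : PolarGeom X perp q) {o h : X} (hh : perp h o)
    (a c : {a // ¬ perp a o}) : ∃ g : {a // ¬ perp a o}, L perp h a.1 ≠ L perp h g.1 ∧
      L perp h c.1 ≠ L perp h g.1 := by
  obtain ⟨w, wh, wa, wc⟩ := G.three h a.1 c.1
  have wo : w ≠ o := by rintro rfl; exact a.2 (G.symm _ _ wa)
  obtain ⟨g, gw, go⟩ := G.two_planes wo
  exact ⟨⟨g, go⟩, fun e => gw (G.symm _ _ (fib_perp e wh wa)),
    fun e => gw (G.symm _ _ (fib_perp e wh wc))⟩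

theorem trans_exists [Finite X] (G : PolarGeom X perp q) {o h : X} (hh : perp h o)
    (a b : {a // ¬ perp a o}) (hab : L perp h a.1 = L perp h b.1) :
    ∃ t : Equiv.Perm {a // ¬ perp a o}, Dil perp o t ∧ Pres perp o h t ∧ t a = b := by
  classical
  obtain ⟨c, hac, -⟩ := G.other_fib hh a a
  obtain ⟨d, hd, Hcd⟩ := Par.exists G hh a.2 b.2 c.2 hab hac
  have ex : ∀ x : {a // ¬ perp a o}, ∃ y : {a // ¬ perp a o},
      Par perp o h a b x y ∨ Par perp o h c d x y := by
    intro x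
    by_cases hx : L perp h a.1 = L perp h x.1
    · obtain ⟨y, hy, Hy⟩ := Par.exists G hh c.2 hd x.2 Hcd.2.1 (by rw [← hx]; exact hac.symm)
      exact ⟨⟨y, hy⟩, Or.inr Hy⟩
    · obtain ⟨y, hy, Hy⟩ := Par.exists G hh a.2 b.2 x.2 hab hx
      exact ⟨⟨y, hy⟩, Or.inl Hy⟩
  choose t ht using ex
  have ha : ∀ x : {a // ¬ perp a o}, L perp h a.1 ≠ L perp h x.1 → Par perp o h a b x (t x) := by
    intro x hx
    rcases ht x with H | H
    · exact H
    · exact Par.trans G hh c.2 hd a.2 b.2 x.2 (t x).2 Hcd.symm H hx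
  have hc : ∀ x : {a // ¬ perp a o}, L perp h c.1 ≠ L perp h x.1 → Par perp o h c d x (t x) := by
    intro x hx
    rcases ht x with H | H
    · exact Par.trans G hh a.2 b.2 c.2 hd x.2 (t x).2 Hcd H hx
    · exact H
  have hpres : Pres perp o h t := by
    intro x
    rcases ht x with H | H <;> exact H.2.1
  have hpar : ∀ x x' : {a // ¬ perp a o}, L perp h x.1 ≠ L perp h x'.1 → Par perp o h x (t x) x' (t x') := by
    intro x x' hxx
    by_cases h1 : L perp h a.1 ≠ L perp h x.1 ∧ L perp h a.1 ≠ L perp h x'.1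
    · exact Par.trans G hh a.2 b.2 x.2 (t x).2 x'.2 (t x').2 (ha x h1.1) (ha x' h1.2) hxx
    by_cases h2 : L perp h c.1 ≠ L perp h x.1 ∧ L perp h c.1 ≠ L perp h x'.1
    · exact Par.trans G hh c.2 hd x.2 (t x).2 x'.2 (t x').2 (hc x h2.1) (hc x' h2.2) hxx
    obtain ⟨g, hga, hgc⟩ := G.other_fib hh a c
    have key : ∀ y : {a // ¬ perp a o}, (L perp h a.1 = L perp h y.1 ∨ L perp h c.1 = L perp h y.1) →
        Par perp o h g (t g) y (t y) := by
      rintro y (hy | hy)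
      · exact Par.trans G hh c.2 hd g.2 (t g).2 y.2 (t y).2 (hc g hgc)
          (hc y (by rw [← hy]; exact hac.symm)) (by rw [← hy]; exact hga.symm)
      · exact Par.trans G hh a.2 b.2 g.2 (t g).2 y.2 (t y).2 (ha g hga)
          (ha y (by rw [← hy]; exact hac)) (by rw [← hy]; exact hgc.symm)
    have hx : L perp h a.1 = L perp h x.1 ∨ L perp h c.1 = L perp h x.1 := by
      by_contra hcon
      push Not at hcon
      have e1 : L perp h a.1 = L perp h x'.1 := by
        by_contra hq; exact h1 ⟨hcon.1, hq⟩
      have e2 : L perp h c.1 = L perp h x'.1 := by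
        by_contra hq; exact h2 ⟨hcon.2, hq⟩
      exact hac (e1.trans e2.symm)
    have hx' : L perp h a.1 = L perp h x'.1 ∨ L perp h c.1 = L perp h x'.1 := by
      by_contra hcon
      push Not at hcon
      have e1 : L perp h a.1 = L perp h x.1 := by
        by_contra hq; exact h1 ⟨hq, hcon.1⟩
      have e2 : L perp h c.1 = L perp h x.1 := by
        by_contra hq; exact h2 ⟨hq, hcon.2⟩
      exact hac (e1.trans e2.symm)
    exact Par.trans G hh g.2 (t g).2 x.2 (t x).2 x'.2 (t x').2 (key x hx) (key x' hx') hxx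
  have hinj : Function.Injective t := by
    intro x x' e
    obtain ⟨g, hg, -⟩ := G.other_fib hh x x
    have hfx : L perp h x.1 = L perp h x'.1 := by rw [hpres x, e, ← hpres x']
    have p1 := (hpar g x hg.symm).flip
    have p2 := (hpar g x' (by rw [← hfx]; exact hg.symm)).flip
    rw [← e] at p2
    exact Subtype.ext (Par.unique G hh (t g).2 (t x).2 x.2 x'.2 p1 p2)
  have hbij : Function.Bijective t := Finite.injective_iff_bijective.1 hinj
  refine ⟨Equiv.ofBijective t hbij, ?_, hpres, ?_⟩
  · intro x x' k hk e
    change L perp k (t x).1 = L perp k (t x').1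
    by_cases hxx : x = x'
    · rw [hxx]
    have hxx' : x.1 ≠ x'.1 := fun e => hxx (Subtype.ext e)
    by_cases hf : L perp h x.1 = L perp h x'.1
    · have := G.dir_unique x.2 x'.2 hxx' hh hk hf e
      subst this
      rw [← hpres x, ← hpres x', hf]
    · obtain ⟨-, -, -, k', hk', e1, e2⟩ := hpar x x' hf
      have := G.dir_unique x.2 x'.2 hxx' hk' hk e1 e
      subst this
      exact e2
  · change t a = b
    exact Subtype.ext (Par.unique G hh c.2 a.2 (t a).2 b.2 (hc a hac.symm) Hcd.symm)

theorem pres_fix (G : PolarGeom X perp q) {o h : X} (hh : perp h o)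
    {t : Equiv.Perm {a // ¬ perp a o}} (ht : Dil perp o t) (hp : Pres perp o h t)
    {a : {a // ¬ perp a o}} (ha : t a = a) : t = 1 := by
  have step : ∀ a b : {a // ¬ perp a o}, t a = a → L perp h a.1 ≠ L perp h b.1 → t b = b := by
    intro a b ha hab
    have hne : a.1 ≠ b.1 := by intro e; rw [e] at hab; exact hab rfl
    obtain ⟨k, hk, e⟩ := G.dir_exists a.2 b.2 hne
    have e2 := ht a b k hk e
    rw [ha, e] at e2
    by_contra hb
    have := G.dir_unique b.2 (t b).2 (fun e => hb (Subtype.ext e.symm)) hh hk (hp b) e2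
    subst this
    exact hab e
  obtain ⟨g, hg, -⟩ := G.other_fib hh a a
  have hgg := step a g ha hg
  ext b
  simp only [Equiv.Perm.coe_one, id_eq]
  by_cases hb : L perp h a.1 = L perp h b.1
  · rw [step g b hgg (by rw [← hb]; exact hg.symm)]
  · rw [step a b ha hb]

/-- a fixed-point-free dilation is a translation -/
theorem fpf_pres (G : PolarGeom X perp q) {o : X} 
    {t : Equiv.Perm {a // ¬ perp a o}} (ht : Dil perp o t) (hf : ∀ a, t a ≠ a)
    (a : {a // ¬ perp a o}) : ∃ h, perp h o ∧ Pres perp o h t := by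
  have nev : ∀ c, c.1 ≠ (t c).1 := fun c e => hf c (Subtype.ext e.symm)
  obtain ⟨h, hh, e⟩ := G.dir_exists a.2 (t a).2 (nev a)
  refine ⟨h, hh, fun c => ?_⟩
  by_cases hc : L perp h a.1 = L perp h c.1
  · rw [← ht a c h hh hc, ← hc, e]
  obtain ⟨h', hh', e'⟩ := G.dir_exists c.2 (t c).2 (nev c)
  have hac : a.1 ≠ c.1 := by intro e; rw [e] at hc; exact hc rfl
  obtain ⟨k, hk, ek⟩ := G.dir_exists a.2 c.2 hac
  have ek' := ht a c k hk ek
  obtain ⟨w, w1, w2, w3⟩ := G.three k a.1 (t a).1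
  have w4 := fib_perp ek w1 w2
  have w5 := fib_perp ek' w1 w3
  obtain ⟨z, z1, z2⟩ := G.coplanar_meet (nev a) (nev c) w2 w3 w4 w5
  by_cases hz : perp z o
  · have e1 := (G.fib_iff hz a.2 (t a).2 (nev a)).2 z1
    have e2 := (G.fib_iff hz c.2 (t c).2 (nev c)).2 z2
    have := G.dir_unique a.2 (t a).2 (nev a) hh hz e e1
    subst this
    exact e2
  · exfalso
    have line : ∀ (a : {a // ¬ perp a o}) (h : X), perp h o → L perp h a.1 = L perp h (t a).1 →
        z ∈ L perp a.1 (t a).1 → L perp h z = L perp h (t ⟨z, hz⟩).1 ∧ L perp h a.1 = L perp h z := by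
      intro a h hh e za
      have hm : h ∈ L perp a.1 (t a).1 := (G.fib_iff hh a.2 (t a).2 (nev a)).1 e
      have e3 : L perp h a.1 = L perp h z := by
        apply G.fib_eq hh a.2 hz
        rw [G.L_eq (nev a) (ne_aff hh a.2) hm (left_mem _ _)]; exact za
      have := ht a ⟨z, hz⟩ h hh e3
      rw [← this, ← e, e3]; exact ⟨rfl, rfl⟩
    obtain ⟨l1, l2⟩ := line a h hh e z1
    obtain ⟨l1', l2'⟩ := line c h' hh' e' z2
    have := G.dir_unique hz (t ⟨z, hz⟩).2 (nev ⟨z, hz⟩) hh hh' l1 l1'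
    subst this
    exact hc (l2.trans l2'.symm)

def IsTrans (perp : X → X → Prop) (o : X) (t : Equiv.Perm {a // ¬ perp a o}) : Prop :=
  Dil perp o t ∧ ∃ h, perp h o ∧ Pres perp o h t

theorem Dil.mul {o : X} {s t : Equiv.Perm {a // ¬ perp a o}} (hs : Dil perp o s)
    (ht : Dil perp o t) : Dil perp o (s * t : Equiv.Perm _) := by
  intro a b k hk e
  exact hs _ _ k hk (ht _ _ k hk e)

theorem Dil.inv (G : PolarGeom X perp q) {o : X} {s : Equiv.Perm {a // ¬ perp a o}}
    (hs : Dil perp o s) : Dil perp o (s⁻¹ : Equiv.Perm _) := by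
  intro a b k hk e
  by_cases hab : a = b
  · rw [hab]
  have hne : (s⁻¹ a).1 ≠ (s⁻¹ b).1 := by
    intro e; exact hab (s⁻¹.injective (Subtype.ext e))
  obtain ⟨k', hk', e'⟩ := G.dir_exists (s⁻¹ a).2 (s⁻¹ b).2 hne
  have := hs _ _ k' hk' e'
  rw [Equiv.Perm.inv_def, Equiv.apply_symm_apply, Equiv.apply_symm_apply] at this
  have := G.dir_unique a.2 b.2 (fun e => hab (Subtype.ext e)) hk hk' e this
  subst this
  exact e'

theorem IsTrans.mul (G : PolarGeom X perp q) {o : X} {s t : Equiv.Perm {a // ¬ perp a o}}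
    (hs : IsTrans perp o s) (ht : IsTrans perp o t) : IsTrans perp o (s * t) := by
  obtain ⟨hs, h, hh, ps⟩ := hs
  obtain ⟨ht, k, hk, pt⟩ := ht
  refine ⟨hs.mul ht, ?_⟩
  by_cases hkh : h = k
  · subst hkh
    exact ⟨h, hh, fun a => (pt a).trans (ps _)⟩
  by_cases hf : ∃ a, (s * t) a = a
  · obtain ⟨a, ha⟩ := hf
    have e1 := pt a
    have e2 := ps (t a)
    change s (t a) = a at ha
    rw [ha] at e2
    by_cases hta : t a = a
    · rw [hta] at ha
      rw [G.pres_fix hh hs ps ha, G.pres_fix hk ht pt hta]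
      exact ⟨h, hh, fun a => by simp⟩
    · exact absurd (G.dir_unique a.2 (t a).2 (fun e => hta (Subtype.ext e.symm)) hh hk e2.symm e1) hkh
  · push Not at hf
    by_cases hA : Nonempty {a // ¬ perp a o}
    · exact G.fpf_pres (hs.mul ht) hf hA.some
    · exact ⟨h, hh, fun a => absurd ⟨a⟩ hA⟩

theorem comm_of_ne (G : PolarGeom X perp q) {o h k : X} (hh : perp h o) (hk : perp k o)
    (hkh : h ≠ k) {s t : Equiv.Perm {a // ¬ perp a o}}
    (hs : Dil perp o s) (ps : Pres perp o h s) (ht : Dil perp o t) (pt : Pres perp o k t) :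
    s * t = t * s := by
  ext a
  change (s (t a)).1 = (t (s a)).1
  by_contra hne
  have e1 : L perp h (t a).1 = L perp h (s (t a)).1 := ps _
  have e2 : L perp h (t a).1 = L perp h (t (s a)).1 := ht _ _ h hh (ps a)
  have e3 : L perp k (s a).1 = L perp k (t (s a)).1 := pt _
  have e4 : L perp k (s a).1 = L perp k (s (t a)).1 := hs _ _ k hk (pt a)
  exact hkh (G.dir_unique (s (t a)).2 (t (s a)).2 hne hh hk (e1.symm.trans e2) (e4.symm.trans e3))

theorem IsTrans.comm [Finite X] (G : PolarGeom X perp q) {o : X}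
    {s t : Equiv.Perm {a // ¬ perp a o}}
    (hs : IsTrans perp o s) (ht : IsTrans perp o t) : s * t = t * s := by
  obtain ⟨hs, h, hh, ps⟩ := id hs
  obtain ⟨ht', k, hk, pt⟩ := id ht
  by_cases hkh : h = k
  swap
  · exact comm_of_ne G hh hk hkh hs ps ht' pt
  subst hkh
  by_cases hA : Nonempty {a // ¬ perp a o}
  swap
  · ext a; exact absurd ⟨a⟩ hA
  obtain ⟨a⟩ := hA
  obtain ⟨g, hg, -⟩ := G.other_fib hh a a
  have hne : a.1 ≠ g.1 := by intro e; rw [e] at hg; exact hg rfl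
  obtain ⟨j, hj, ej⟩ := G.dir_exists a.2 g.2 hne
  have hjh : h ≠ j := by rintro rfl; exact hg ej
  obtain ⟨r, hr, pr, ra⟩ := G.trans_exists hj a g ej
  have c1 : s * r = r * s := comm_of_ne G hh hj hjh hs ps hr pr
  obtain ⟨htr, m, hm, pm⟩ := IsTrans.mul G ht ⟨hr, j, hj, pr⟩
  have hmh : h ≠ m := by
    rintro rfl
    have e1 : L perp h a.1 = L perp h (t (r a)).1 := pm a
    have e2 := pt (r a)
    rw [ra] at e1 e2
    exact hg (e1.trans e2.symm)
  have c2 : s * (t * r) = (t * r) * s := comm_of_ne G hh hm hmh hs ps htr pm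
  have : s * t * r = t * s * r := by
    rw [mul_assoc, c2, mul_assoc, ← c1, mul_assoc]
  exact mul_right_cancel this

/-- the affine part is a torsor of an abelian group of translations -/
theorem exists_group [Finite X] (G : PolarGeom X perp q) (o x : X) (hx : ¬ perp x o) :
    ∃ (T : Type) (_ : AddCommGroup T) (e : T → X), Function.Injective e ∧ e 0 = x ∧
      (∀ t, ¬ perp (e t) o) ∧ (∀ a, ¬ perp a o → ∃ t, e t = a) ∧
      ∀ h s s' t, perp h o → L perp h (e s) = L perp h (e s') →
        L perp h (e (s + t)) = L perp h (e (s' + t)) := by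
  let T : Subgroup (Equiv.Perm {a // ¬ perp a o}) :=
    { carrier := {t | IsTrans perp o t}
      mul_mem' := fun hs ht => IsTrans.mul G hs ht
      one_mem' := ⟨fun a b k _ e => e, o, G.refl o, fun a => rfl⟩
      inv_mem' := by
        rintro t ⟨ht, h, hh, pt⟩
        refine ⟨Dil.inv G ht, h, hh, fun a => ?_⟩
        have := pt (t⁻¹ a)
        rw [Equiv.Perm.inv_def, Equiv.apply_symm_apply] at this
        exact this.symm }
  let _ : CommGroup T :=
    { (inferInstance : Group T) with
      mul_comm := by
        rintro ⟨s, hs⟩ ⟨t, ht⟩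
        exact Subtype.ext (IsTrans.comm G hs ht) }
  refine ⟨Additive T, inferInstance, fun t => ((Additive.toMul t : T).1 ⟨x, hx⟩).1, ?_, rfl,
    fun t => ((Additive.toMul t : T).1 ⟨x, hx⟩).2, ?_, ?_⟩
  · intro s t hst
    obtain ⟨hd, h, hh, hp⟩ := (Additive.toMul (t - s) : T).2
    have hst' := Subtype.ext hst
    have : (Additive.toMul (t - s) : T).1 = 1 := by
      apply G.pres_fix hh hd hp (a := (Additive.toMul s : T).1 ⟨x, hx⟩)
      change ((Additive.toMul t / Additive.toMul s : T)).1 _ = _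
      rw [← Equiv.Perm.mul_apply]
      change (((Additive.toMul t / Additive.toMul s) * Additive.toMul s : T)).1 _ = _
      rw [div_mul_cancel, hst']
    have h2 : (Additive.toMul (t - s) : T) = 1 := Subtype.ext this
    have h3 : t - s = 0 := h2
    exact (sub_eq_zero.1 h3).symm
  · intro a ha
    by_cases hxa : x = a
    · exact ⟨0, hxa⟩
    obtain ⟨h, hh, e⟩ := G.dir_exists hx ha hxa
    obtain ⟨t, t1, t2, t3⟩ := G.trans_exists hh ⟨x, hx⟩ ⟨a, ha⟩ e
    exact ⟨Additive.ofMul ⟨t, t1, h, hh, t2⟩, congrArg Subtype.val t3⟩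
  · intro h s s' t hh e
    have := (Additive.toMul t : T).2.1 _ _ h hh e
    rw [add_comm s, add_comm s']
    exact this

end PolarGeom

set_option autoImplicit false

theorem exists_galois {K : Type} [CommRing K] [IsDomain K] [Finite K] {q : ℕ}
    (hK : Nat.card K = q) (hq : Even q) :
    ∃ k : ℕ, 1 ≤ k ∧ q = 2 ^ k ∧ Nonempty (K ≃+* GaloisField 2 k) := by
  classical
  have := Fintype.ofFinite K
  let _ : Field K := Fintype.fieldOfDomain K
  obtain ⟨p, hp⟩ := CharP.exists K
  obtain ⟨n, hpp, hn⟩ := FiniteField.card K p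
  rw [← Nat.card_eq_fintype_card, hK] at hn
  have h2 : p = 2 := by
    rw [hn] at hq
    have := (Nat.even_pow.1 hq).1
    exact (hpp.even_iff).1 this
  subst h2
  refine ⟨n, n.2, hn, ?_⟩
  have : Fact (Nat.Prime 2) := ⟨Nat.prime_two⟩
  have : Fintype (GaloisField 2 n) := Fintype.ofFinite _
  exact ⟨FiniteField.ringEquivOfCardEq (K := K) (K' := GaloisField 2 n) (by
    rw [← Nat.card_eq_fintype_card, ← Nat.card_eq_fintype_card, hK, GaloisField.card 2 n n.2.ne', hn])⟩

theorem alg_coord {U Z : Type} [AddCommGroup U] [AddCommGroup Z] [Finite U] [Finite Z]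
    (lam : U →+ U →+ Z) (alt : ∀ u, lam u u = 0)
    (tr : ∀ u v w, u ≠ 0 → lam u v = 0 → lam u w = 0 → lam v w = 0) {q : ℕ} (hq : Even q)
    (hZ : Nat.card Z = q) (hU : ∀ u, u ≠ 0 → Nat.card {v // lam u v = 0} = q)
    (e1 e2 : U) (he : lam e1 e2 ≠ 0) :
    ∃ k : ℕ, 1 ≤ k ∧ q = 2 ^ k ∧ ∃ (φ : U ≃+ (GaloisField 2 k × GaloisField 2 k))
      (ψ : Z ≃+ GaloisField 2 k),
      ∀ u v, ψ (lam u v) = (φ u).1 * (φ v).2 - (φ u).2 * (φ v).1 := by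
  classical
  have anti : ∀ u v, lam u v = - lam v u := by
    intro u v
    have := alt (u + v)
    simp only [map_add, AddMonoidHom.add_apply, alt, zero_add, add_zero] at this
    exact eq_neg_of_add_eq_zero_right this
  have anti0 : ∀ u v, lam u v = 0 → lam v u = 0 := by
    intro u v h; rw [anti, h, neg_zero]
  have inj : ∀ a b u, lam a b ≠ 0 → lam a u = 0 → lam b u = 0 → u = 0 := by
    intro a b u hab h1 h2
    by_contra hu
    exact hab (tr u a b hu (anti0 _ _ h1) (anti0 _ _ h2))
  have ex : ∀ a b, lam a b ≠ 0 → ∀ z, ∃ u, lam a u = 0 ∧ lam b u = z := by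
    intro a b hab z
    have ha : a ≠ 0 := by rintro rfl; simp at hab
    let f : {v // lam a v = 0} → Z := fun v => lam b v.1
    have fi : Function.Injective f := by
      intro u v huv
      have : u.1 - v.1 = 0 := inj a b _ hab (by rw [map_sub, u.2, v.2, sub_zero])
        (by rw [map_sub, sub_eq_zero]; exact huv)
      exact Subtype.ext (sub_eq_zero.1 this)
    have fb := (Nat.bijective_iff_injective_and_card f).2 ⟨fi, by rw [hU a ha, hZ]⟩
    obtain ⟨u, hu⟩ := fb.2 z
    exact ⟨u.1, u.2, hu⟩
  have he' : lam e2 e1 ≠ 0 := by rw [anti]; simpa using he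
  have exl : ∀ z, ∃ u, lam e1 u = 0 ∧ lam u e2 = z := by
    intro z
    obtain ⟨u, h1, h2⟩ := ex e1 e2 he (-z)
    exact ⟨u, h1, by rw [anti, h2, neg_neg]⟩
  choose l l1 l2 using exl
  choose m m1 m2 using ex e2 e1 he'
  have luniq : ∀ u z, lam e1 u = 0 → lam u e2 = z → u = l z := by
    intro u z h1 h2
    rw [← sub_eq_zero]
    apply inj e1 e2 _ he
    · rw [map_sub, h1, l1, sub_zero]
    · apply anti0; rw [map_sub, AddMonoidHom.sub_apply, h2, l2, sub_self]
  have muniq : ∀ u z, lam e2 u = 0 → lam e1 u = z → u = m z := by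
    intro u z h1 h2
    rw [← sub_eq_zero]
    apply inj e1 e2 _ he
    · rw [map_sub, h2, m2, sub_self]
    · rw [map_sub, h1, m1, sub_self]
  have ladd : ∀ a b, l (a + b) = l a + l b := fun a b =>
    (luniq _ _ (by rw [map_add, l1, l1, add_zero]) (by rw [map_add, AddMonoidHom.add_apply, l2, l2])).symm
  have madd : ∀ a b, m (a + b) = m a + m b := fun a b =>
    (muniq _ _ (by rw [map_add, m1, m1, add_zero]) (by rw [map_add, m2, m2])).symm
  have le1 : l (lam e1 e2) = e1 := (luniq _ _ (alt _) rfl).symm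
  have me2 : m (lam e1 e2) = e2 := (muniq _ _ (alt _) rfl).symm
  have e10 : e1 ≠ 0 := by rintro rfl; simp at he
  have e20 : e2 ≠ 0 := by rintro rfl; simp at he
  have ll : ∀ a b, lam (l a) (l b) = 0 := fun a b => tr e1 _ _ e10 (l1 a) (l1 b)
  have mm : ∀ a b, lam (m a) (m b) = 0 := fun a b => tr e2 _ _ e20 (m1 a) (m1 b)
  have form : ∀ c d c' d', lam (l c + m d) (l c' + m d') = lam (l c) (m d') - lam (l c') (m d) := by
    intro c d c' d'
    simp only [map_add, AddMonoidHom.add_apply, ll, mm]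
    rw [anti (m d) (l c')]; abel
  have ml : ∀ z, lam e1 (m z) = z := m2
  have key : ∀ c c' b, lam (l c) (m (lam (l c') (m b))) = lam (l c') (m (lam (l c) (m b))) := by
    intro c c' b
    have hne : l (lam e1 e2) + m b ≠ 0 := by
      intro h
      have h2 : lam (l (lam e1 e2) + m b) e2 = 0 := by rw [h]; simp
      rw [map_add, AddMonoidHom.add_apply, le1, anti (m b), m1, neg_zero, add_zero] at h2
      exact he h2
    have h0 : ∀ c, lam (l (lam e1 e2) + m b) (l c + m (lam (l c) (m b))) = 0 := by
      intro c; rw [form, le1, ml, sub_self]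
    have := tr _ _ _ hne (h0 c) (h0 c')
    rw [form, sub_eq_zero] at this
    exact this
  have mul1 : ∀ c, lam (l c) (m (lam e1 e2)) = c := fun c => by rw [me2, l2]
  have mcomm : ∀ c c', lam (l c) (m c') = lam (l c') (m c) := by
    intro c c'
    have := key c c' (lam e1 e2)
    rwa [mul1, mul1] at this
  let R : CommRing Z :=
    { (inferInstance : AddCommGroup Z) with
      mul := fun a b => lam (l a) (m b)
      one := lam e1 e2
      one_mul := fun a => by change lam (l (lam e1 e2)) (m a) = a; rw [le1, ml]
      mul_one := mul1
      left_distrib := fun a b c => by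
        change lam (l a) (m (b + c)) = lam (l a) (m b) + lam (l a) (m c)
        rw [madd, map_add]
      right_distrib := fun a b c => by
        change lam (l (a + b)) (m c) = lam (l a) (m c) + lam (l b) (m c)
        rw [ladd, map_add, AddMonoidHom.add_apply]
      zero_mul := fun a => by
        change lam (l 0) (m a) = 0
        have : l 0 = 0 := (luniq 0 0 (by simp) (by simp)).symm
        rw [this]; simp
      mul_zero := fun a => by
        change lam (l a) (m 0) = 0
        have : m 0 = 0 := (muniq 0 0 (by simp) (by simp)).symm
        rw [this]; simp
      mul_comm := mcomm
      mul_assoc := fun a b c => by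
        change lam (l (lam (l a) (m b))) (m c) = lam (l a) (m (lam (l b) (m c)))
        rw [mcomm _ c, mcomm b c, key] }
  have hmul : ∀ a b : Z, a * b = lam (l a) (m b) := fun a b => rfl
  have : Nontrivial Z := ⟨lam e1 e2, 0, he⟩
  have : NoZeroDivisors Z := ⟨by
    intro a b hab
    rw [hmul] at hab
    by_contra hne
    push Not at hne
    have hla : l a ≠ 0 := by
      intro h; have := l2 a; rw [h] at this; exact hne.1 (by simpa using this.symm)
    have := tr (l a) e1 (m b) hla (anti0 _ _ (l1 a)) hab
    rw [m2] at this
    exact hne.2 this⟩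
  have : IsDomain Z := NoZeroDivisors.to_isDomain Z
  obtain ⟨k, hk1, hk, ⟨ψ⟩⟩ := exists_galois (K := Z) hZ hq
  refine ⟨k, hk1, hk, ?_⟩
  have decomp : ∀ u, l (lam u e2) + m (lam e1 u) = u := by
    intro u
    have h1 : u - l (lam u e2) = m (lam e1 u) := by
      apply muniq
      · apply anti0; rw [map_sub, AddMonoidHom.sub_apply, l2, sub_self]
      · rw [map_sub, l1, sub_zero]
    rw [← h1]; abel
  let φ : U ≃+ (GaloisField 2 k × GaloisField 2 k) :=
    { toFun := fun u => (ψ (lam u e2), ψ (lam e1 u))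
      invFun := fun p => l (ψ.symm p.1) + m (ψ.symm p.2)
      left_inv := fun u => by simp [decomp]
      right_inv := fun p => by
        ext
        · simp only [map_add, AddMonoidHom.add_apply, l2]
          rw [anti (m _), m1]; simp
        · simp only [map_add, l1, m2]; simp
      map_add' := fun u v => by simp }
  refine ⟨φ, ψ.toAddEquiv, fun u v => ?_⟩
  change ψ (lam u v) = ψ (lam u e2) * ψ (lam e1 v) - ψ (lam e1 u) * ψ (lam v e2)
  conv_lhs => rw [← decomp u, ← decomp v]
  rw [form, ← hmul, ← hmul, map_sub, map_mul, map_mul, mul_comm (ψ (lam v e2))]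

set_option autoImplicit false
namespace PolarGeom
variable {X : Type} {perp : X → X → Prop} {q : ℕ}

theorem coordsT [Finite X] (G : PolarGeom X perp q) (hq : Even q) (o x : X) (hx : ¬ perp x o) :
    ∃ k : ℕ, 1 ≤ k ∧ q = 2 ^ k ∧ ∃ (T : Type) (_ : AddCommGroup T) (e : T → X)
      (κ : T ≃+ (GaloisField 2 k × GaloisField 2 k) × GaloisField 2 k),
      Function.Injective e ∧
      (∀ t, ¬ perp (e t) o) ∧ (∀ a, ¬ perp a o → ∃ t, e t = a) ∧
      (∀ h s s' t, perp h o → L perp h (e s) = L perp h (e s') →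
        L perp h (e (s + t)) = L perp h (e (s' + t))) ∧
      ∀ s t, perp (e t) (e s) ↔ (κ t).2 - (κ s).2 =
        (κ s).1.1 * (κ t).1.2 - (κ s).1.2 * (κ t).1.1 := by
  classical
  obtain ⟨T, iT, e, einj, e0, eA, esurj, D⟩ := G.exists_group o x hx
  have : Finite T := Finite.of_injective e einj
  have heap : ∀ w s1 s2 s3, perp w (e s1) → perp w (e s2) → perp w (e s3) →
      perp w (e (s1 - s2 + s3)) := by
    intro w s1 s2 s3 h1 h2 h3
    by_cases h12 : s1 = s2
    · subst h12; simpa using h3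
    have hne : e s1 ≠ e s2 := fun h => h12 (einj h)
    obtain ⟨h, hh, eh⟩ := G.dir_exists (eA s1) (eA s2) hne
    have hwh : perp w h := (G.fib_iff hh (eA _) (eA _) hne).1 eh w h1 h2
    have := D h _ _ (s3 - s2) hh eh
    rw [show s2 + (s3 - s2) = s3 by abel, show s1 + (s3 - s2) = s1 - s2 + s3 by abel] at this
    exact fib_perp this.symm hwh h3
  let Z : AddSubgroup T :=
    { carrier := {t | L perp o (e 0) = L perp o (e t)}
      zero_mem' := rfl
      add_mem' := by
        intro s t hs ht
        have := D o _ _ t (G.refl o) hs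
        rw [zero_add] at this
        exact Eq.trans ht this
      neg_mem' := by
        intro s hs
        have := D o _ _ (-s) (G.refl o) hs
        rw [zero_add, add_neg_cancel] at this
        exact this.symm }
  have memZ : ∀ t, t ∈ Z ↔ L perp o (e 0) = L perp o (e t) := fun t => Iff.rfl
  let U : AddSubgroup T :=
    { carrier := {t | perp (e 0) (e t)}
      zero_mem' := G.refl _
      add_mem' := by
        intro s t hs ht
        have := heap (e 0) s 0 t hs (G.refl _) ht
        rw [sub_zero] at this
        exact this
      neg_mem' := by
        intro s hs
        have := heap (e 0) 0 s 0 (G.refl _) hs (G.refl _)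
        rw [add_zero, zero_sub] at this
        exact this }
  have memU : ∀ t, t ∈ U ↔ perp (e 0) (e t) := fun t => Iff.rfl
  have vert : ∀ u z, z ∈ Z → L perp o (e u) = L perp o (e (u + z)) := by
    intro u z hz
    have := D o _ _ u (G.refl o) hz
    rwa [zero_add, add_comm] at this
  have shift : ∀ s u z, z ∈ Z → perp (e s) (e u) → perp (e (s + z)) (e (u + z)) := by
    intro s u z hz hsu
    by_cases hne : s = u
    · subst hne; exact G.refl _
    have hne : e s ≠ e u := fun h => hne (einj h)
    obtain ⟨h, hh, eh⟩ := G.dir_exists (eA s) (eA u) hne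
    have huh : perp (e u) h := (G.fib_iff hh (eA _) (eA _) hne).1 eh _ (G.symm _ _ hsu) (G.refl _)
    have h1 : perp h (e (u + z)) := fib_perp (vert u z hz) hh (G.symm _ _ huh)
    have h2 := D h _ _ z hh eh
    exact G.symm _ _ (fib_perp h2.symm (G.symm _ _ h1) (G.refl _))
  have exz : ∀ s t, ∃ z ∈ Z, perp (e (t + z)) (e s) := by
    intro s t
    have ho : o ≠ e t := ne_aff (G.refl o) (eA t)
    obtain ⟨y, y1, y2⟩ := G.meet ho (e s)
    have hy : ¬ perp y o := by
      intro hy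
      by_cases hyo : y = o
      · subst hyo; exact eA s (G.symm _ _ y2)
      · exact eA t (G.symm _ _ (G.line_perp ho hyo y1 (left_mem _ _) (G.symm _ _ hy) (G.refl _)
          (right_mem _ _)))
    obtain ⟨t', rfl⟩ := esurj y hy
    refine ⟨t' - t, ?_, by rwa [add_sub_cancel]⟩
    have := D o _ _ (-t) (G.refl o) (G.fib_eq (G.refl o) (eA t) hy y1)
    rw [add_neg_cancel, ← sub_eq_add_neg] at this
    exact this
  have unz : ∀ s t z z', z ∈ Z → z' ∈ Z → perp (e (t + z)) (e s) → perp (e (t + z')) (e s) →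
      z = z' := by
    intro s t z z' hz hz' h1 h2
    by_contra hne
    have hne : e (t + z) ≠ e (t + z') := fun h => hne (by simpa using einj h)
    have := (G.fib_iff (G.refl o) (eA _) (eA _) hne).1 ((vert t z hz).symm.trans (vert t z' hz'))
    exact eA s (this _ (G.symm _ _ h1) (G.symm _ _ h2))
  have exl : ∀ u v : U, ∃ z : Z, perp (e (v.1 + z.1)) (e u.1) := by
    intro u v
    obtain ⟨z, hz, h⟩ := exz u.1 v.1
    exact ⟨⟨z, hz⟩, h⟩
  choose lm hlm using exl
  have main : ∀ (u v : U) (z z' : Z), perp (e (v.1 + z'.1)) (e (u.1 + z.1)) ↔ z' - z = lm u v := by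
    intro u v z z'
    constructor
    · intro h
      have := shift _ _ (-z.1) (Z.neg_mem z.2) h
      rw [add_neg_cancel_right, add_assoc] at this
      have := unz u.1 v.1 _ _ (Z.add_mem z'.2 (Z.neg_mem z.2)) (lm u v).2 this (hlm u v)
      apply Subtype.ext
      rw [← this]; simp [sub_eq_add_neg]
    · intro h
      have := shift _ _ z.1 z.2 (hlm u v)
      rw [← h] at this
      simpa [add_assoc] using this
  have luniq : ∀ (u v : U) (z : Z), perp (e (v.1 + z.1)) (e u.1) → z = lm u v := by
    intro u v z h
    have := (main u v 0 z).1 (by simpa using h)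
    simpa using this
  have ladd : ∀ u v w, lm u (v + w) = lm u v + lm u w := by
    intro u v w
    symm
    apply luniq
    have := heap (e u.1) (v.1 + (lm u v).1) 0 (w.1 + (lm u w).1) (G.symm _ _ (hlm u v))
      (G.symm _ _ u.2) (G.symm _ _ (hlm u w))
    apply G.symm
    convert this using 2
    simp only [AddSubgroup.coe_add, sub_zero]
    abel
  have lanti : ∀ u v, lm u v = - lm v u := by
    intro u v
    symm
    have := (main v u (-lm v u) 0).2 (by simp)
    have := (main u v 0 (-lm v u)).1 (G.symm _ _ this)
    simpa using this
  have ladd' : ∀ u v w, lm (u + v) w = lm u w + lm v w := by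
    intro u v w
    rw [lanti, ladd, lanti u, lanti v, neg_add]
  let lam : U →+ U →+ Z :=
    AddMonoidHom.mk' (fun u => AddMonoidHom.mk' (fun v => lm u v) (ladd u)) (by
      intro u v; ext w; exact congrArg _ (ladd' u v w))
  have hlam : ∀ u v, lam u v = lm u v := fun u v => rfl
  have lam0 : ∀ u v, lam u v = 0 ↔ perp (e v.1) (e u.1) := by
    intro u v
    have := main u v 0 0
    simp only [AddSubgroup.coe_zero, add_zero, sub_zero] at this
    rw [this, hlam]; exact eq_comm
  have alt : ∀ u, lam u u = 0 := fun u => (lam0 u u).2 (G.refl _)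
  have tri : ∀ a b c d, a ≠ b → perp a b → perp c a → perp c b → perp d a → perp d b → perp c d := by
    intro a b c d hab h1 h2 h3 h4 h5
    exact G.reg a b a b c d hab hab (G.refl _) h1 (G.symm _ _ h1) (G.refl _) h2 h3 h4 h5
  have ene : ∀ u : U, u ≠ 0 → e 0 ≠ e u.1 := by
    intro u hu h
    exact hu (Subtype.ext (einj h).symm)
  have tr : ∀ u v w, u ≠ 0 → lam u v = 0 → lam u w = 0 → lam v w = 0 := by
    intro u v w hu h1 h2
    rw [lam0] at h1 h2 ⊢
    exact tri _ _ _ _ (ene u hu) u.2 (G.symm _ _ w.2) h2 (G.symm _ _ v.2) h1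
  have hZ : Nat.card Z = q := by
    have ho : o ≠ e 0 := ne_aff (G.refl o) (eA 0)
    obtain ⟨w, w', hw, H⟩ := G.line_polar ho
    have hc := G.card w w' hw
    have hb : Function.Bijective (fun z : Option Z => (match z with
        | none => ⟨o, (H o).1 (left_mem _ _)⟩
        | some z => ⟨e z.1, (H _).1 (fib_mem ((memZ z.1).1 z.2))⟩ : {u // perp u w ∧ perp u w'})) := by
      constructor
      · rintro (_ | z) (_ | z') h
        · rfl
        · exact absurd (Subtype.ext_iff.1 h) (ne_aff (G.refl o) (eA _))
        · exact absurd (Subtype.ext_iff.1 h).symm (ne_aff (G.refl o) (eA _))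
        · rw [Subtype.ext (einj (Subtype.ext_iff.1 h))]
      · rintro ⟨u, hu⟩
        by_cases huo : u = o
        · exact ⟨none, Subtype.ext huo.symm⟩
        have hm := (H u).2 hu
        have hA : ¬ perp u o := by
          intro hy
          exact eA 0 (G.symm _ _ (G.line_perp ho huo hm (left_mem _ _) (G.symm _ _ hy) (G.refl _)
            (right_mem _ _)))
        obtain ⟨t, rfl⟩ := esurj u hA
        exact ⟨some ⟨t, G.fib_eq (G.refl o) (eA 0) hA hm⟩, rfl⟩
    have := Nat.card_eq_of_bijective _ hb
    rw [hc, Finite.card_option] at this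
    omega
  have hU : ∀ u, u ≠ 0 → Nat.card {v // lam u v = 0} = q := by
    intro u hu
    have hne := ene u hu
    have hc := G.card _ _ hne
    obtain ⟨h, hh, eh⟩ := G.dir_exists (eA 0) (eA u.1) hne
    have hm := (G.fib_iff hh (eA _) (eA _) hne).1 eh
    have h1 : perp h (e 0) := G.symm _ _ (hm _ (G.refl _) u.2)
    have h2 : perp h (e u.1) := G.symm _ _ (hm _ (G.symm _ _ u.2) (G.refl _))
    have hb : Function.Bijective (fun z : Option {v // lam u v = 0} => (match z with
        | none => ⟨h, h1, h2⟩
        | some z => ⟨e z.1.1, G.symm _ _ z.1.2, (lam0 _ _).1 z.2⟩ :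
          {w // perp w (e 0) ∧ perp w (e u.1)})) := by
      constructor
      · rintro (_ | z) (_ | z') h
        · rfl
        · exact absurd (Subtype.ext_iff.1 h) (ne_aff hh (eA _))
        · exact absurd (Subtype.ext_iff.1 h).symm (ne_aff hh (eA _))
        · rw [Subtype.ext (Subtype.ext (einj (Subtype.ext_iff.1 h)))]
      · rintro ⟨w, hw⟩
        by_cases hwh : w = h
        · exact ⟨none, Subtype.ext hwh.symm⟩
        have hA : ¬ perp w o := by
          intro hy
          have hm' : w ∈ L perp (e 0) (e u.1) := by
            intro y y1 y2
            exact tri _ _ _ _ hne u.2 y1 y2 hw.1 hw.2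
          exact eA 0 (G.symm _ _ (G.line_perp hne hwh hm' hm (G.symm _ _ hy) (G.symm _ _ hh)
            (left_mem _ _)))
        obtain ⟨t, rfl⟩ := esurj w hA
        exact ⟨some ⟨⟨t, G.symm _ _ hw.1⟩, (lam0 _ _).2 hw.2⟩, rfl⟩
    have := Nat.card_eq_of_bijective _ hb
    rw [hc, Finite.card_option] at this
    omega
  obtain ⟨u1, u2, hu12⟩ : ∃ u1 u2 : U, lam u1 u2 ≠ 0 := by
    obtain ⟨h, h1, h2, -⟩ := G.three o (e 0) (e 0)
    have hne := ne_aff h1 (eA 0)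
    obtain ⟨y, ym, y1, y2⟩ := G.third hne
    have yA : ¬ perp y o := fun hy => eA 0 (G.symm _ _ (G.line_perp hne y1 ym (left_mem _ _)
      (G.symm _ _ hy) (G.symm _ _ h1) (right_mem _ _)))
    have yp : perp (e 0) y := ym _ (G.symm _ _ h2) (G.refl _)
    have : ∃ g, perp (e 0) g ∧ ¬ perp g o ∧ ¬ perp g y := by
      obtain ⟨g, g1, g2⟩ := G.nondeg (e 0) y y2.symm
      by_cases go : perp g o
      swap
      · exact ⟨g, G.symm _ _ g1, go, g2⟩
      have gne : g ≠ e 0 := ne_aff go (eA 0)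
      obtain ⟨g', gm, g3, g4⟩ := G.third gne
      refine ⟨g', gm _ (G.symm _ _ g1) (G.refl _), fun hg => ?_, fun hg => ?_⟩
      · exact eA 0 (G.symm _ _ (G.line_perp gne g3 gm (left_mem _ _)
          (G.symm _ _ hg) (G.symm _ _ go) (right_mem _ _)))
      · exact g2 (G.symm _ _ (G.line_perp gne g4 gm (right_mem _ _)
          (G.symm _ _ hg) (G.symm _ _ yp) (left_mem _ _)))
    obtain ⟨g, g1, g2, g3⟩ := this
    obtain ⟨t, rfl⟩ := esurj y yA
    obtain ⟨s, rfl⟩ := esurj g g2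
    exact ⟨⟨t, yp⟩, ⟨s, g1⟩, fun h => g3 ((lam0 _ _).1 h)⟩
  obtain ⟨k, hk1, hk, φ, ψ, hφ⟩ := alg_coord lam alt tr hq hZ hU u1 u2 hu12
  let f : U × Z →+ T := U.subtype.coprod Z.subtype
  have hf : ∀ u z, f (u, z) = u.1 + z.1 := fun u z => rfl
  have fb : Function.Bijective f := by
    constructor
    · rw [injective_iff_map_eq_zero]
      rintro ⟨u, z⟩ h
      rw [hf] at h
      have h1 := (main 0 u 0 z).1 (by rw [h]; simpa using G.refl _)
      have h2 : lm 0 u = 0 := by rw [← hlam]; simp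
      rw [h2, sub_zero] at h1
      subst h1
      have : u = 0 := Subtype.ext (by simpa using h)
      rw [this]; rfl
    · intro t
      obtain ⟨z, hz, h⟩ := exz 0 t
      exact ⟨(⟨t + z, G.symm _ _ h⟩, ⟨-z, Z.neg_mem hz⟩), by rw [hf]; simp⟩
  let F := AddEquiv.ofBijective f fb
  refine ⟨k, hk1, hk, T, iT, e, F.symm.trans (φ.prodCongr ψ), einj, eA, esurj, D, ?_⟩
  intro s t
  obtain ⟨⟨u, z⟩, rfl⟩ := F.surjective s
  obtain ⟨⟨v, z'⟩, rfl⟩ := F.surjective t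
  have e1 : F (u, z) = u.1 + z.1 := rfl
  have e2 : F (v, z') = v.1 + z'.1 := rfl
  simp only [AddEquiv.trans_apply, AddEquiv.symm_apply_apply]
  rw [e1, e2, main, ← hlam, ← ψ.injective.eq_iff, hφ, map_sub]
  rfl

end PolarGeom

set_option autoImplicit false

/-- the standard symplectic form in coordinates -/
def sform {F : Type} [Field F] (v w : Fin 4 → F) : F :=
  v 0 * w 3 - v 3 * w 0 - (v 1 * w 2 - v 2 * w 1)

namespace PolarGeom
variable {X : Type} {perp : X → X → Prop} {q : ℕ}

theorem coordsX [Finite X] (G : PolarGeom X perp q) (hq : Even q) (o x : X) (hx : ¬ perp x o) :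
    ∃ k, 1 ≤ k ∧ q = 2 ^ k ∧ ∃ Ψ : (Fin 4 → GaloisField 2 k) → X,
      (∀ v w, v ≠ 0 → w ≠ 0 → (perp (Ψ v) (Ψ w) ↔ sform v w = 0)) ∧
      ∀ a, ∃ v, v ≠ 0 ∧ Ψ v = a := by
  classical
  obtain ⟨k, hk, hqk, T, iT, e, κ, einj, eA, esurj, eD, eP⟩ := G.coordsT hq o x hx
  refine ⟨k, hk, hqk, ?_⟩
  have hdir : ∀ t, ∃ h, t ≠ 0 → perp h o ∧ L perp h (e 0) = L perp h (e t) := by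
    intro t
    by_cases ht : t = 0
    · exact ⟨o, fun h => absurd ht h⟩
    · obtain ⟨h, h1, h2⟩ := G.dir_exists (eA 0) (eA t) (fun h => ht (einj h).symm)
      exact ⟨h, fun _ => ⟨h1, h2⟩⟩
  choose dp hdp using hdir
  have hfib : ∀ t s, t ≠ 0 → L perp (dp t) (e s) = L perp (dp t) (e (t + s)) := by
    intro t s ht
    have := eD (dp t) 0 t s (hdp t ht).1 (hdp t ht).2
    rwa [zero_add] at this
  have hne : ∀ t s, t ≠ 0 → e s ≠ e (t + s) := by
    intro t s ht h
    have := einj h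
    exact ht (by simpa using this)
  have hline : ∀ t s, t ≠ 0 → dp t ∈ L perp (e s) (e (t + s)) := fun t s ht =>
    (G.fib_iff (hdp t ht).1 (eA s) (eA _) (hne t s ht)).1 (hfib t s ht)
  have daff : ∀ t s, t ≠ 0 → (perp (dp t) (e s) ↔
      (κ t).2 = (κ s).1.1 * (κ t).1.2 - (κ s).1.2 * (κ t).1.1) := by
    intro t s ht
    have h1 : perp (dp t) (e s) ↔ perp (e (t + s)) (e s) := by
      constructor
      · intro h
        exact G.symm _ _ (fib_perp (hfib t s ht) (G.symm _ _ h) (G.refl _))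
      · intro h
        exact G.symm _ _ (hline t s ht _ (G.refl _) (G.symm _ _ h))
    rw [h1, eP, map_add]
    simp only [Prod.fst_add, Prod.snd_add]
    constructor <;> intro h <;> linear_combination h
  have dd : ∀ t t', t ≠ 0 → t' ≠ 0 → (perp (dp t) (dp t') ↔
      (κ t).1.1 * (κ t').1.2 - (κ t).1.2 * (κ t').1.1 = 0) := by
    intro t t' ht ht'
    by_cases hz : (κ t).1 = 0
    · have hz2 : (κ t).2 ≠ 0 := by
        intro h
        apply ht
        apply κ.injective
        rw [map_zero]
        exact Prod.ext hz h
      have ho : dp t = o := by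
        by_contra hno
        obtain ⟨w, hw1, hw2⟩ := G.nondeg _ _ hno
        obtain ⟨s, rfl⟩ := esurj w hw2
        have := (daff t s ht).1 (G.symm _ _ hw1)
        rw [hz] at this
        simp at this
        exact hz2 this
      rw [ho, hz]
      simp only [Prod.fst_zero, Prod.snd_zero, zero_mul, sub_zero, iff_true]
      exact G.symm _ _ (hdp t' ht').1
    · have hs : ∃ s, (κ t).2 = (κ s).1.1 * (κ t).1.2 - (κ s).1.2 * (κ t).1.1 := by
        by_cases h1 : (κ t).1.1 = 0
        · have h2 : (κ t).1.2 ≠ 0 := fun h => hz (Prod.ext h1 h)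
          refine ⟨κ.symm ((((κ t).2 / (κ t).1.2), 0), 0), ?_⟩
          simp [h2]
        · refine ⟨κ.symm ((0, -((κ t).2 / (κ t).1.1)), 0), ?_⟩
          simp [h1]
      obtain ⟨s, hs⟩ := hs
      have hp := (daff t s ht).2 hs
      have h1 : perp (dp t) (dp t') ↔ perp (dp t) (e (t' + s)) := by
        constructor
        · intro h
          exact fib_perp (hfib t' s ht') h hp
        · intro h
          exact hline t' s ht' _ hp h
      rw [h1, daff _ _ ht, map_add]
      simp only [Prod.fst_add, Prod.snd_add]
      constructor
      · intro h; linear_combination h - hs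
      · intro h; linear_combination hs + h
  let ta : (Fin 4 → GaloisField 2 k) → T := fun v =>
    κ.symm ((v 1 / v 0, v 2 / v 0), v 3 / v 0)
  let ti : (Fin 4 → GaloisField 2 k) → T := fun v => κ.symm ((v 1, v 2), v 3)
  have hti : ∀ v, v ≠ 0 → v 0 = 0 → ti v ≠ 0 := by
    intro v hv h0 h
    apply hv
    have : κ (ti v) = 0 := by rw [h, map_zero]
    simp only [ti, AddEquiv.apply_symm_apply, Prod.ext_iff] at this
    obtain ⟨⟨h1, h2⟩, h3⟩ := this
    ext i
    fin_cases i
    · exact h0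
    · exact h1
    · exact h2
    · exact h3
  refine ⟨fun v => if v 0 = 0 then dp (ti v) else e (ta v), ?_, ?_⟩
  · intro v w hv hw
    by_cases v0 : v 0 = 0 <;> by_cases w0 : w 0 = 0
    · simp only [v0, w0, if_true]
      rw [dd _ _ (hti v hv v0) (hti w hw w0)]
      simp only [ti, AddEquiv.apply_symm_apply, sform, v0, w0]
      constructor <;> intro h <;> linear_combination -h
    · simp only [v0, w0, if_true, if_false]
      rw [daff _ _ (hti v hv v0)]
      simp only [ti, ta, AddEquiv.apply_symm_apply, sform, v0]
      field_simp
      constructor <;> intro h <;> linear_combination -h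
    · simp only [v0, w0, if_true, if_false]
      have : perp (e (ta v)) (dp (ti w)) ↔ perp (dp (ti w)) (e (ta v)) :=
        ⟨G.symm _ _, G.symm _ _⟩
      rw [this, daff _ _ (hti w hw w0)]
      simp only [ti, ta, AddEquiv.apply_symm_apply, sform, w0]
      field_simp
      constructor <;> intro h <;> linear_combination h
    · simp only [v0, w0, if_false]
      rw [eP]
      simp only [ta, AddEquiv.apply_symm_apply, sform]
      field_simp
      constructor <;> intro h <;> linear_combination -h
  · intro a
    by_cases ha : perp a o
    · have hne' : a ≠ e 0 := ne_aff ha (eA 0)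
      obtain ⟨y, hy, hy1, hy2⟩ := G.third hne'
      have yA : ¬ perp y o := fun h => eA 0 (G.symm _ _ (G.line_perp hne' hy1 hy (left_mem _ _)
        (G.symm _ _ h) (G.symm _ _ ha) (right_mem _ _)))
      obtain ⟨t, rfl⟩ := esurj y yA
      have ht : t ≠ 0 := fun h => hy2 (by rw [h])
      have hti' : ti ![0, (κ t).1.1, (κ t).1.2, (κ t).2] = t := by
        simp [ti]
      refine ⟨![0, (κ t).1.1, (κ t).1.2, (κ t).2], ?_, ?_⟩
      · intro h
        apply ht
        rw [← hti', h]
        simp only [ti, Pi.zero_apply]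
        exact map_zero κ.symm
      · simp only [Matrix.cons_val_zero, if_true, hti']
        exact G.dir_unique (eA 0) (eA t) (Ne.symm hy2) (hdp t ht).1 ha (hdp t ht).2
          (G.fib_eq ha (eA 0) (eA t) hy)
    · obtain ⟨t, rfl⟩ := esurj a ha
      refine ⟨![1, (κ t).1.1, (κ t).1.2, (κ t).2], ?_, ?_⟩
      · intro h
        have := congrFun h 0
        simp at this
      · simp [ta]

end PolarGeom

set_option autoImplicit false
set_option linter.unusedSectionVars false
set_option linter.unusedVariables false

/-- `C` and `D` share exactly the point `p`. -/
def Tan {P : Type} (C D : Finset P) (p : P) : Prop :=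
  p ∈ C ∧ p ∈ D ∧ ∀ r, r ∈ C → r ∈ D → r = p

theorem Tan.symm {P : Type} {C D : Finset P} {p : P} (h : Tan C D p) : Tan D C p :=
  ⟨h.2.1, h.1, fun r h1 h2 => h.2.2 r h2 h1⟩

/-- double counting for a family which covers each point of `A` exactly once -/
theorem part_count {P : Type} [DecidableEq P] (𝓓 : Finset (Finset P)) (A : Finset P)
    (h : ∀ a ∈ A, ∃! D, D ∈ 𝓓 ∧ a ∈ D) : A.card = ∑ D ∈ 𝓓, (D ∩ A).card := by
  have := Finset.sum_card_bipartiteAbove_eq_sum_card_bipartiteBelow (s := A) (t := 𝓓)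
    (fun a D => a ∈ D)
  have h1 : ∀ a ∈ A, (Finset.bipartiteAbove (fun (a : P) (D : Finset P) => a ∈ D) 𝓓 a).card = 1 := by
    intro a ha
    obtain ⟨D, hD, hu⟩ := h a ha
    rw [Finset.card_eq_one]
    refine ⟨D, ?_⟩
    ext E
    rw [Finset.mem_bipartiteAbove, Finset.mem_singleton]
    exact ⟨fun h => hu E h, fun h => h ▸ hD⟩
  rw [Finset.sum_congr rfl h1] at this
  rw [Finset.card_eq_sum_ones, this]
  refine Finset.sum_congr rfl fun D _ => ?_
  congr 1
  ext a
  rw [Finset.mem_bipartiteBelow, Finset.mem_inter, and_comm]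

namespace InversivePlane
variable {q : ℕ} {P : Type} [Fintype P] [DecidableEq P] (I : InversivePlane q P)

theorem ex3 {x y z : P} (h1 : x ≠ y) (h2 : x ≠ z) (h3 : y ≠ z) :
    ∃ C, C ∈ I.circles ∧ x ∈ C ∧ y ∈ C ∧ z ∈ C := (I.three_points x y z h1 h2 h3).exists

theorem eq3 {x y z : P} (h1 : x ≠ y) (h2 : x ≠ z) (h3 : y ≠ z) {C D : Finset P}
    (hC : C ∈ I.circles) (hD : D ∈ I.circles) (a : x ∈ C) (b : y ∈ C) (c : z ∈ C)
    (a' : x ∈ D) (b' : y ∈ D) (c' : z ∈ D) : C = D :=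
  (I.three_points x y z h1 h2 h3).unique ⟨hC, a, b, c⟩ ⟨hD, a', b', c'⟩

theorem other {C : Finset P} (hC : C ∈ I.circles) (x y : P) : ∃ z ∈ C, z ≠ x ∧ z ≠ y := by
  have h : 0 < (C \ {x, y}).card := by
    have := Finset.le_card_sdiff {x, y} C
    have h2 := Finset.card_le_two (a := x) (b := y)
    have := I.circle_card C hC
    have := I.two_le
    omega
  obtain ⟨z, hz⟩ := Finset.card_pos.1 h
  simp at hz
  exact ⟨z, hz.1, hz.2⟩

theorem out {C : Finset P} (hC : C ∈ I.circles) : ∃ z, z ∉ C := by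
  by_contra h
  push Not at h
  have h1 : C = Finset.univ := by ext z; simp [h z]
  have h2 := I.circle_card C hC
  rw [h1, Finset.card_univ, I.card_points] at h2
  have := I.two_le
  nlinarith

theorem tan_ne {C D : Finset P} {p : P} (hC : C ∈ I.circles) (h : Tan C D p) : C ≠ D := by
  rintro rfl
  obtain ⟨z, hz, h1, _⟩ := I.other hC p p
  exact h1 (h.2.2 z hz hz)

/-- circles through two points -/
def thru (x y : P) : Finset (Finset P) := I.circles.filter fun C => x ∈ C ∧ y ∈ C

theorem mem_thru {x y : P} {C : Finset P} : C ∈ I.thru x y ↔ C ∈ I.circles ∧ x ∈ C ∧ y ∈ C :=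
  Finset.mem_filter

theorem card_thru {x y : P} (h : x ≠ y) : (I.thru x y).card = q + 1 := by
  have h1 := part_count (I.thru x y) (Finset.univ \ {x, y}) (by
    intro a ha
    simp at ha
    obtain ⟨C, hC, hu⟩ := I.three_points x y a h (Ne.symm ha.1) (Ne.symm ha.2)
    exact ⟨C, ⟨I.mem_thru.2 ⟨hC.1, hC.2.1, hC.2.2.1⟩, hC.2.2.2⟩, fun D hD =>
      hu D ⟨(I.mem_thru.1 hD.1).1, (I.mem_thru.1 hD.1).2.1, (I.mem_thru.1 hD.1).2.2, hD.2⟩⟩)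
  have h2 : ∀ D ∈ I.thru x y, (D ∩ (Finset.univ \ {x, y})).card = q - 1 := by
    intro D hD
    obtain ⟨hD, hx, hy⟩ := I.mem_thru.1 hD
    have e : D ∩ (Finset.univ \ {x, y}) = D \ {x, y} := by ext; simp
    rw [e, Finset.card_sdiff_of_subset (by intro z; simp; rintro (rfl | rfl) <;> assumption),
      Finset.card_pair h, I.circle_card D hD]
    omega
  rw [Finset.sum_congr rfl h2, Finset.sum_const, smul_eq_mul,
    Finset.card_sdiff_of_subset (Finset.subset_univ _), Finset.card_pair h, Finset.card_univ,
    I.card_points] at h1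
  obtain ⟨r, rfl⟩ : ∃ r, q = r + 2 := ⟨q - 2, by have := I.two_le; omega⟩
  have h3 : (r + 2) ^ 2 + 1 - 2 = (r + 2 + 1) * (r + 2 - 1) := by
    have : (r + 2) ^ 2 + 1 = (r + 2 + 1) * (r + 1) + 2 := by ring
    rw [this]; simp
  rw [h3] at h1
  exact (Nat.eq_of_mul_eq_mul_right (by omega) h1).symm

/-- a circle through two points avoiding a third -/
theorem ex_avoid {x y z : P} (h : x ≠ y) (h1 : z ≠ x) (h2 : z ≠ y) :
    ∃ C ∈ I.circles, x ∈ C ∧ y ∈ C ∧ z ∉ C := by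
  have : 1 < (I.thru x y).card := by rw [I.card_thru h]; have := I.two_le; omega
  obtain ⟨C, hC, D, hD, hne⟩ := Finset.one_lt_card.1 this
  rw [mem_thru] at hC hD
  by_cases hz : z ∈ C
  · refine ⟨D, hD.1, hD.2.1, hD.2.2, fun hz' => hne ?_⟩
    exact I.eq3 h h1.symm h2.symm hC.1 hD.1 hC.2.1 hC.2.2 hz hD.2.1 hD.2.2 hz'
  · exact ⟨C, hC.1, hC.2.1, hC.2.2, hz⟩

/-- another circle through two points -/
theorem ex_other {x y : P} (h : x ≠ y) {C : Finset P} (hC : C ∈ I.circles) (hx : x ∈ C)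
    (hy : y ∈ C) : ∃ D ∈ I.circles, x ∈ D ∧ y ∈ D ∧ D ≠ C := by
  obtain ⟨z, hz, h1, h2⟩ := I.other hC x y
  obtain ⟨D, hD, a, b, c⟩ := I.ex_avoid h h1 h2
  exact ⟨D, hD, a, b, fun h => c (h ▸ hz)⟩

theorem tan_exu {C : Finset P} (hC : C ∈ I.circles) {p x : P} (hp : p ∈ C) (hx : x ∉ C) :
    ∃! D, D ∈ I.circles ∧ x ∈ D ∧ Tan C D p := by
  have hpx : p ≠ x := by rintro rfl; exact hx hp
  have hch : ∀ r, ∃ D, r ∈ C.erase p → D ∈ I.circles ∧ p ∈ D ∧ x ∈ D ∧ r ∈ D := by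
    intro r
    by_cases hr : r ∈ C.erase p
    · rw [Finset.mem_erase] at hr
      obtain ⟨D, hD⟩ := I.ex3 hpx hr.1.symm (fun h => hx (h ▸ hr.2))
      exact ⟨D, fun _ => hD⟩
    · exact ⟨∅, fun h => absurd h hr⟩
  choose f hf using hch
  have hinj : Set.InjOn f (C.erase p) := by
    intro r hr s hs h
    by_contra hne
    have h1 := hf r hr
    have h2 := hf s hs
    rw [← h] at h2
    have hr' := Finset.mem_erase.1 (Finset.mem_coe.1 hr)
    have hs' := Finset.mem_erase.1 (Finset.mem_coe.1 hs)
    have := I.eq3 hr'.1.symm hs'.1.symm hne hC h1.1 hp hr'.2 hs'.2 h1.2.1 h1.2.2.2 h2.2.2.2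
    exact hx (this ▸ h1.2.2.1)
  have hsub : (C.erase p).image f ⊆ I.thru p x := by
    intro D hD
    obtain ⟨r, hr, rfl⟩ := Finset.mem_image.1 hD
    have := hf r hr
    exact I.mem_thru.2 ⟨this.1, this.2.1, this.2.2.1⟩
  have hcard : (I.thru p x \ (C.erase p).image f).card = 1 := by
    rw [Finset.card_sdiff_of_subset hsub, Finset.card_image_of_injOn hinj,
      Finset.card_erase_of_mem hp, I.circle_card C hC, I.card_thru hpx]
    omega
  obtain ⟨D, hD⟩ := Finset.card_eq_one.1 hcard
  have key : ∀ E, E ∈ I.thru p x \ (C.erase p).image f ↔ E ∈ I.circles ∧ x ∈ E ∧ Tan C E p := by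
    intro E
    rw [Finset.mem_sdiff, I.mem_thru]
    constructor
    · rintro ⟨⟨h1, h2, h3⟩, h4⟩
      refine ⟨h1, h3, hp, h2, fun r hr hr' => ?_⟩
      by_contra hne
      apply h4
      have hm := Finset.mem_erase.2 ⟨hne, hr⟩
      have := hf r hm
      refine Finset.mem_image.2 ⟨r, hm, ?_⟩
      exact I.eq3 hpx (Ne.symm hne) (fun h => hx (h ▸ hr)) this.1 h1 this.2.1 this.2.2.1 this.2.2.2
        h2 h3 hr'
    · rintro ⟨h1, h2, h3⟩
      refine ⟨⟨h1, h3.2.1, h2⟩, fun h => ?_⟩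
      obtain ⟨r, hr, rfl⟩ := Finset.mem_image.1 h
      have := h3.2.2 r (Finset.mem_erase.1 hr).2 (hf r hr).2.2.2
      exact (Finset.mem_erase.1 hr).1 this
  refine ⟨D, (key D).1 (by rw [hD]; simp), fun E hE => ?_⟩
  have := (key E).2 hE
  rw [hD] at this
  simpa using this

theorem tan_uniq {C D E : Finset P} (hC : C ∈ I.circles) (hD : D ∈ I.circles)
    (hE : E ∈ I.circles) {p x : P} (hx : x ∉ C) (h1 : Tan C D p) (h2 : Tan C E p)
    (h3 : x ∈ D) (h4 : x ∈ E) : D = E :=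
  (I.tan_exu hC h1.1 hx).unique ⟨hD, h3, h1⟩ ⟨hE, h4, h2⟩

/-- `D` in the pencil of `C` at `p`. -/
def Pen (p : P) (C D : Finset P) : Prop := p ∈ C ∧ p ∈ D ∧ (C = D ∨ Tan C D p)

theorem Pen.symm {p : P} {C D : Finset P} (h : Pen p C D) : Pen p D C :=
  ⟨h.2.1, h.1, h.2.2.imp Eq.symm Tan.symm⟩

theorem pen_trans {p : P} {C D E : Finset P} (hC : C ∈ I.circles) (hD : D ∈ I.circles)
    (hE : E ∈ I.circles) (h : Pen p C D) (h' : Pen p D E) : Pen p C E := by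
  refine ⟨h.1, h'.2.1, ?_⟩
  rcases h.2.2 with rfl | h1
  · exact h'.2.2
  rcases h'.2.2 with rfl | h2
  · exact Or.inr h1
  by_cases hCE : C = E
  · exact Or.inl hCE
  refine Or.inr ⟨h.1, h'.2.1, fun r hr hr' => ?_⟩
  by_contra hne
  exact hCE (I.tan_uniq hD hC hE (fun hrD => hne (h1.2.2 r hr hrD)) h1.symm h2 hr hr')

theorem pen_exu {p x : P} {C : Finset P} (hC : C ∈ I.circles) (hp : p ∈ C) (hx : x ≠ p) :
    ∃! D, D ∈ I.circles ∧ Pen p C D ∧ x ∈ D := by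
  by_cases h : x ∈ C
  · refine ⟨C, ⟨hC, ⟨hp, hp, Or.inl rfl⟩, h⟩, ?_⟩
    rintro D ⟨hD, ⟨_, _, h1⟩, h2⟩
    rcases h1 with h1 | h1
    · exact h1.symm
    · exact absurd (h1.2.2 x h h2) hx
  · obtain ⟨D, ⟨hD, h1, h2⟩, hu⟩ := I.tan_exu hC hp h
    refine ⟨D, ⟨hD, ⟨hp, h2.2.1, Or.inr h2⟩, h1⟩, ?_⟩
    rintro E ⟨hE, ⟨_, _, h1⟩, h2⟩
    rcases h1 with h1 | h1
    · exact absurd h2 (h1 ▸ h)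
    · exact hu E ⟨hE, h2, h1⟩

theorem pen_uniq {p x : P} {C D E : Finset P} (hC : C ∈ I.circles) (hD : D ∈ I.circles)
    (hE : E ∈ I.circles) (hx : x ≠ p) (h1 : Pen p C D) (h2 : Pen p C E) (h3 : x ∈ D) (h4 : x ∈ E) :
    D = E := (I.pen_exu hC h1.1 hx).unique ⟨hD, h1, h3⟩ ⟨hE, h2, h4⟩

theorem inter_le_two {C D : Finset P} (hC : C ∈ I.circles) (hD : D ∈ I.circles) (h : C ≠ D) :
    (D ∩ C).card ≤ 2 := by
  by_contra hlt
  push Not at hlt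
  obtain ⟨x, y, z, hx, hy, hz, h1, h2, h3⟩ := Finset.two_lt_card_iff.1 hlt
  rw [Finset.mem_inter] at hx hy hz
  exact h (I.eq3 h1 h2 h3 hC hD hx.2 hy.2 hz.2 hx.1 hy.1 hz.1)

/-- parity: a family of circles covering each point of `C` exactly once has a tangent circle -/
theorem parity (hq : Even q) {C : Finset P} (hC : C ∈ I.circles) (𝓓 : Finset (Finset P))
    (h𝓓 : ∀ D ∈ 𝓓, D ∈ I.circles) (hC𝓓 : C ∉ 𝓓) (h : ∀ r ∈ C, ∃! D, D ∈ 𝓓 ∧ r ∈ D) :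
    ∃ D ∈ 𝓓, ∃ p, Tan C D p := by
  by_contra hno
  push Not at hno
  have h1 := part_count 𝓓 C h
  have h2 : ∀ D ∈ 𝓓, Even (D ∩ C).card := by
    intro D hD
    have h3 := I.inter_le_two hC (h𝓓 D hD) (fun h => hC𝓓 (h ▸ hD))
    have h4 : (D ∩ C).card ≠ 1 := by
      intro h5
      obtain ⟨p, hp⟩ := Finset.card_eq_one.1 h5
      have h6 : ∀ r, r ∈ D ∧ r ∈ C ↔ r = p := by
        intro r
        rw [← Finset.mem_inter, hp, Finset.mem_singleton]
      have h7 := (h6 p).2 rfl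
      exact hno D hD p ⟨h7.2, h7.1, fun r a b => (h6 r).1 ⟨b, a⟩⟩
    interval_cases (D ∩ C).card <;> simp_all
  have h3 : Even (∑ D ∈ 𝓓, (D ∩ C).card) := Finset.even_sum _ h2
  rw [← h1, I.circle_card C hC] at h3
  exact Nat.not_even_iff_odd.2 hq.add_one h3

/-- pencil of `C` at `p` as a finset -/
noncomputable def pencil (p : P) (C : Finset P) : Finset (Finset P) := by
  classical exact I.circles.filter fun D => Pen p C D

theorem mem_pencil {p : P} {C D : Finset P} : D ∈ I.pencil p C ↔ D ∈ I.circles ∧ Pen p C D := by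
  classical
  unfold pencil
  exact Finset.mem_filter

theorem card_pencil {p : P} {C : Finset P} (hC : C ∈ I.circles) (hp : p ∈ C) :
    (I.pencil p C).card = q := by
  have h1 := part_count (I.pencil p C) (Finset.univ \ {p}) (by
    intro a ha
    simp at ha
    obtain ⟨D, hD, hu⟩ := I.pen_exu hC hp ha
    exact ⟨D, ⟨I.mem_pencil.2 ⟨hD.1, hD.2.1⟩, hD.2.2⟩, fun E hE =>
      hu E ⟨(I.mem_pencil.1 hE.1).1, (I.mem_pencil.1 hE.1).2, hE.2⟩⟩)
  have h2 : ∀ D ∈ I.pencil p C, (D ∩ (Finset.univ \ {p})).card = q := by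
    intro D hD
    obtain ⟨hD, h⟩ := I.mem_pencil.1 hD
    have e : D ∩ (Finset.univ \ {p}) = D \ {p} := by ext; simp
    rw [e, Finset.card_sdiff_of_subset (by simpa using h.2.1),
      Finset.card_singleton, I.circle_card D hD]
    omega
  rw [Finset.sum_congr rfl h2, Finset.sum_const, smul_eq_mul,
    Finset.card_sdiff_of_subset (Finset.subset_univ _), Finset.card_singleton, Finset.card_univ,
    I.card_points] at h1
  have := I.two_le
  refine (Nat.eq_of_mul_eq_mul_right (m := q) (by omega) ?_).symm
  rw [← h1]; simp; ring

end InversivePlane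

set_option autoImplicit false
set_option linter.unusedSectionVars false
set_option linter.unusedVariables false

namespace InversivePlane
variable {q : ℕ} {P : Type} [Fintype P] [DecidableEq P] (I : InversivePlane q P)

theorem tang_pt (hq : Even q) {C : Finset P} (hC : C ∈ I.circles) {x y : P} (hx : x ∉ C)
    (hy : y ≠ x) : ∃ D ∈ I.circles, x ∈ D ∧ y ∈ D ∧ ∃ p, Tan C D p := by
  by_cases h : y ∈ C
  · obtain ⟨D, h1, h2, h3⟩ := (I.tan_exu hC h hx).exists
    exact ⟨D, h1, h2, h3.2.1, y, h3⟩
  · obtain ⟨D, hD, hp⟩ := I.parity hq hC (I.thru x y) (fun D hD => (I.mem_thru.1 hD).1)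
      (fun hC' => hx (I.mem_thru.1 hC').2.1) (by
        intro r hr
        have h1 : x ≠ r := by rintro rfl; exact hx hr
        have h2 : y ≠ r := by rintro rfl; exact h hr
        obtain ⟨C, hC, hu⟩ := I.three_points x y r hy.symm h1 h2
        exact ⟨C, ⟨I.mem_thru.2 ⟨hC.1, hC.2.1, hC.2.2.1⟩, hC.2.2.2⟩, fun D hD =>
          hu D ⟨(I.mem_thru.1 hD.1).1, (I.mem_thru.1 hD.1).2.1, (I.mem_thru.1 hD.1).2.2, hD.2⟩⟩)
    obtain ⟨a, b, c⟩ := I.mem_thru.1 hD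
    exact ⟨D, a, b, c, hp⟩

theorem tang_pen (hq : Even q) {C E : Finset P} (hC : C ∈ I.circles) (hE : E ∈ I.circles) {x : P}
    (hx : x ∉ C) (hxE : x ∈ E) : ∃ D ∈ I.circles, Pen x E D ∧ ∃ p, Tan C D p := by
  obtain ⟨D, hD, hp⟩ := I.parity hq hC (I.pencil x E) (fun D hD => (I.mem_pencil.1 hD).1)
      (fun hC' => hx (I.mem_pencil.1 hC').2.2.1) (by
        intro a ha
        obtain ⟨D, hD, hu⟩ := I.pen_exu hE hxE (x := a) (by rintro rfl; exact hx ha)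
        exact ⟨D, ⟨I.mem_pencil.2 ⟨hD.1, hD.2.1⟩, hD.2.2⟩, fun E hE =>
          hu E ⟨(I.mem_pencil.1 hE.1).1, (I.mem_pencil.1 hE.1).2, hE.2⟩⟩)
  obtain ⟨a, b⟩ := I.mem_pencil.1 hD
  exact ⟨D, a, b, hp⟩

/-- circles through `x` tangent to `C` -/
noncomputable def ttg (C : Finset P) (x : P) : Finset (Finset P) := by
  classical exact I.circles.filter fun D => x ∈ D ∧ ∃ p, Tan C D p

theorem mem_ttg {C D : Finset P} {x : P} :
    D ∈ I.ttg C x ↔ D ∈ I.circles ∧ x ∈ D ∧ ∃ p, Tan C D p := by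
  classical
  unfold ttg
  exact Finset.mem_filter

theorem card_ttg {C : Finset P} (hC : C ∈ I.circles) {x : P} (hx : x ∉ C) :
    (I.ttg C x).card = q + 1 := by
  rw [← I.circle_card C hC]
  symm
  have hch : ∀ p, ∃ D, p ∈ C → D ∈ I.circles ∧ x ∈ D ∧ Tan C D p := by
    intro p
    by_cases hp : p ∈ C
    · obtain ⟨D, hD⟩ := (I.tan_exu hC hp hx).exists
      exact ⟨D, fun _ => hD⟩
    · exact ⟨∅, fun h => absurd h hp⟩
  choose f hf using hch
  refine Finset.card_bij (fun p _ => f p) ?_ ?_ ?_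
  · intro p hp
    exact I.mem_ttg.2 ⟨(hf p hp).1, (hf p hp).2.1, p, (hf p hp).2.2⟩
  · intro p hp r hr h
    have h1 := (hf p hp).2.2
    have h2 := (hf r hr).2.2
    rw [← h] at h2
    exact h2.2.2 p h1.1 h1.2.1
  · intro D hD
    obtain ⟨h1, h2, p, h3⟩ := I.mem_ttg.1 hD
    exact ⟨p, h3.1, I.tan_uniq hC (hf p h3.1).1 h1 hx (hf p h3.1).2.2 h3 (hf p h3.1).2.1 h2⟩

/-- a pencil at `x` contains at most one tangent circle of `C` -/
theorem gq_uniq (hq : Even q) {C D D' : Finset P} (hC : C ∈ I.circles) {x p p' : P} (hx : x ∉ C)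
    (hD : D ∈ I.circles) (hD' : D' ∈ I.circles) (h : Pen x D D') (hp : Tan C D p)
    (hp' : Tan C D' p') : D = D' := by
  have hxp : p ≠ x := by rintro rfl; exact hx hp.1
  have hch : ∀ E, ∃ F, E ∈ I.ttg C x → F ∈ I.circles ∧ Pen x E F ∧ p ∈ F := by
    intro E
    by_cases hE : E ∈ I.ttg C x
    · obtain ⟨F, hF⟩ := (I.pen_exu (I.mem_ttg.1 hE).1 (I.mem_ttg.1 hE).2.1 hxp).exists
      exact ⟨F, fun _ => hF⟩
    · exact ⟨∅, fun h => absurd h hE⟩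
  choose f hf using hch
  have hinj := Finset.injOn_of_surjOn_of_card_le (s := I.ttg C x) (t := I.thru x p) f
    (by
      intro E hE
      have := hf E hE
      exact Finset.mem_coe.2 (I.mem_thru.2 ⟨this.1, this.2.1.2.1, this.2.2⟩))
    (by
      intro F hF
      obtain ⟨h1, h2, h3⟩ := I.mem_thru.1 (Finset.mem_coe.1 hF)
      obtain ⟨E, hE, hFE, r, hr⟩ := I.tang_pen hq hC h1 hx h2
      have hE' : E ∈ I.ttg C x := I.mem_ttg.2 ⟨hE, hFE.2.1, r, hr⟩
      have := hf E hE'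
      exact ⟨E, hE', I.pen_uniq hE this.1 h1 hxp this.2.1 hFE.symm this.2.2 h3⟩)
    (by rw [I.card_ttg hC hx, I.card_thru hxp.symm])
  have m1 : D ∈ I.ttg C x := I.mem_ttg.2 ⟨hD, h.1, p, hp⟩
  have m2 : D' ∈ I.ttg C x := I.mem_ttg.2 ⟨hD', h.2.1, p', hp'⟩
  apply hinj m1 m2
  have h1 := hf D m1
  have h2 := hf D' m2
  exact I.pen_uniq hD h1.1 h2.1 hxp h1.2.1 (I.pen_trans hD hD' h2.1 h h2.2.1) h1.2.2 h2.2.2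

/-- two tangent circles of `C` meeting in `x, y` force every circle on `x, y` to be tangent. -/
theorem tang_all (hq : Even q) {C D D' S : Finset P} (hC : C ∈ I.circles) {x y p p' : P}
    (hx : x ∉ C) (hxy : y ≠ x)
    (hD : D ∈ I.circles) (hD' : D' ∈ I.circles) (hS : S ∈ I.circles) (hne : D ≠ D')
    (hp : Tan C D p) (hp' : Tan C D' p') (xD : x ∈ D) (xD' : x ∈ D') (yD : y ∈ D) (yD' : y ∈ D')
    (xS : x ∈ S) (yS : y ∈ S) : ∃ r, Tan C S r := by
  by_contra hno
  have hnS : ∀ E ∈ I.ttg C x, E ≠ S := by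
    rintro E hE rfl
    exact hno (I.mem_ttg.1 hE).2.2
  have hch : ∀ a, ∃ F, a ∈ S → F ∈ I.ttg C x ∧ a ∈ F ∧ (a = x → Tan S F x) := by
    intro a
    by_cases ha : a = x
    · obtain ⟨F, h1, h2, h3⟩ := I.tang_pen hq hC hS hx xS
      have hF : F ∈ I.ttg C x := I.mem_ttg.2 ⟨h1, h2.2.1, h3⟩
      refine ⟨F, fun _ => ⟨hF, ha ▸ h2.2.1, fun _ => ?_⟩⟩
      exact h2.2.2.resolve_left (fun h => hnS F hF h.symm)
    · obtain ⟨F, h1, h2, h3, h4⟩ := I.tang_pt hq hC hx ha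
      exact ⟨F, fun _ => ⟨I.mem_ttg.2 ⟨h1, h2, h4⟩, h3, fun h => absurd h ha⟩⟩
  choose f hf using hch
  have key : ∀ a ∈ S, ∀ b ∈ S, b ∈ f a → b ≠ x → a = b := by
    intro a ha b hb hab hbx
    have h1 := hf a ha
    have h2 := I.mem_ttg.1 h1.1
    by_contra hne
    by_cases hax : a = x
    · exact hbx ((h1.2.2 hax).2.2 b hb hab)
    · exact hnS _ h1.1 (I.eq3 (Ne.symm hax) hbx.symm hne h2.1 hS h2.2.1 h1.2.1 hab xS ha hb)
  have hsurj := Finset.surjOn_of_injOn_of_card_le (s := S) (t := I.ttg C x) f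
    (fun a ha => (hf a ha).1)
    (by
      intro a ha b hb h
      by_cases hb' : b = x
      · by_cases ha' : a = x
        · rw [ha', hb']
        · exact (key b hb a ha (h ▸ (hf a ha).2.1) ha').symm
      · exact key a ha b hb (h ▸ (hf b hb).2.1) hb')
    (by rw [I.card_ttg hC hx, I.circle_card S hS])
  obtain ⟨a, ha, ha'⟩ := hsurj (Finset.mem_coe.2 (I.mem_ttg.2 ⟨hD, xD, p, hp⟩))
  obtain ⟨b, hb, hb'⟩ := hsurj (Finset.mem_coe.2 (I.mem_ttg.2 ⟨hD', xD', p', hp'⟩))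
  apply hne
  rw [← ha', ← hb', key a ha y yS (ha' ▸ yD) hxy, key b hb y yS (hb' ▸ yD') hxy]

def Inv (C : Finset P) (x x' : P) : Prop :=
  x ≠ x' ∧ x ∉ C ∧ x' ∉ C ∧ (∀ D ∈ I.circles, x ∈ D → ((∃ p, Tan C D p) ↔ x' ∈ D))

theorem inv_exists (hq : Even q) {C : Finset P} (hC : C ∈ I.circles) {x : P} (hx : x ∉ C) :
    ∃ x', I.Inv C x x' := by
  have : 1 < (I.ttg C x).card := by rw [I.card_ttg hC hx]; have := I.two_le; omega
  obtain ⟨D, hD, D', hD', hne⟩ := Finset.one_lt_card.1 this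
  obtain ⟨hD, xD, p, hp⟩ := I.mem_ttg.1 hD
  obtain ⟨hD', xD', p', hp'⟩ := I.mem_ttg.1 hD'
  have : ∃ y, y ∈ D ∧ y ∈ D' ∧ y ≠ x := by
    by_contra hno
    push Not at hno
    exact hne (I.gq_uniq hq hC hx hD hD' ⟨xD, xD', Or.inr ⟨xD, xD', hno⟩⟩ hp hp')
  obtain ⟨y, yD, yD', hy⟩ := this
  have hsub : I.thru x y ⊆ I.ttg C x := by
    intro S hS
    obtain ⟨h1, h2, h3⟩ := I.mem_thru.1 hS
    exact I.mem_ttg.2 ⟨h1, h2,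
      I.tang_all hq hC hx hy hD hD' h1 hne hp hp' xD xD' yD yD' h2 h3⟩
  have heq := Finset.eq_of_subset_of_card_le hsub
    (by rw [I.card_ttg hC hx, I.card_thru hy.symm])
  refine ⟨y, hy.symm, hx, fun hyC => hne ?_, fun E hE hxE => ⟨fun h => ?_, fun h => ?_⟩⟩
  · have h1 := hp.2.2 y hyC yD
    have h2 := hp'.2.2 y hyC yD'
    subst h1
    subst h2
    exact I.tan_uniq hC hD hD' hx hp hp' xD xD'
  · have : E ∈ I.thru x y := by rw [heq]; exact I.mem_ttg.2 ⟨hE, hxE, h⟩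
    exact (I.mem_thru.1 this).2.2
  · exact (I.mem_ttg.1 (hsub (I.mem_thru.2 ⟨hE, hxE, h⟩))).2.2

/-- two circles tangent to `C` meeting in `x, x'` -/
theorem inv_of_two (hq : Even q) {C D D' : Finset P} (hC : C ∈ I.circles) {x x' p p' : P}
    (hD : D ∈ I.circles) (hD' : D' ∈ I.circles) (hne : D ≠ D') (hx : x ∉ C) (hxx : x ≠ x')
    (h1 : Tan C D p) (h2 : Tan C D' p') (a : x ∈ D) (b : x' ∈ D) (c : x ∈ D') (d : x' ∈ D') :
    I.Inv C x x' := by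
  obtain ⟨y, h⟩ := I.inv_exists hq hC hx
  have e1 := (h.2.2.2 D hD a).1 ⟨p, h1⟩
  have e2 := (h.2.2.2 D' hD' c).1 ⟨p', h2⟩
  have : y = x' := by
    by_contra hyx
    exact hne (I.eq3 hxx h.1 (Ne.symm hyx) hD hD' a b e1 c d e2)
  exact this ▸ h

theorem inv_symm (hq : Even q) {C : Finset P} (hC : C ∈ I.circles) {x x' : P}
    (h : I.Inv C x x') : I.Inv C x' x := by
  have : 1 < (I.thru x x').card := by rw [I.card_thru h.1]; have := I.two_le; omega
  obtain ⟨D, hD, D', hD', hne⟩ := Finset.one_lt_card.1 this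
  obtain ⟨hD, a, b⟩ := I.mem_thru.1 hD
  obtain ⟨hD', c, d⟩ := I.mem_thru.1 hD'
  obtain ⟨p, hp⟩ := (h.2.2.2 D hD a).2 b
  obtain ⟨p', hp'⟩ := (h.2.2.2 D' hD' c).2 d
  exact I.inv_of_two hq hC hD hD' hne h.2.2.1 h.1.symm hp hp' b a d c

theorem inv_cover (hq : Even q) {p p' x : P} (h : p ≠ p') (hx : x ≠ p) (hx' : x ≠ p') :
    ∃ E ∈ I.circles, x ∈ E ∧ I.Inv E p p' := by
  obtain ⟨D, hD, a, b, c⟩ := I.ex3 h hx.symm hx'.symm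
  obtain ⟨S, hS, d, e, f⟩ := I.ex_avoid h hx hx'
  obtain ⟨E, hE, hDE, r, hr⟩ := I.tang_pen hq hS hD f c
  have hne : D ≠ S := by rintro rfl; exact f c
  have hDE' : Tan D E x := by
    refine hDE.2.2.resolve_left ?_
    rintro rfl
    exact h ((hr.2.2 p d a).trans (hr.2.2 p' e b).symm)
  have hpE : p ∉ E := fun hp => hx (hDE'.2.2 p a hp).symm
  exact ⟨E, hE, hDE.2.1, I.inv_of_two hq hE hD hS hne hpE h hDE'.symm hr.symm a b d e⟩

theorem inv_inj (hq : Even q) {p p' x : P} {E E' : Finset P} (hE : E ∈ I.circles)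
    (hE' : E' ∈ I.circles) (h : I.Inv E p p') (h' : I.Inv E' p p') (hx : x ∈ E) (hx' : x ∈ E') :
    E = E' := by
  have h1 : x ≠ p := by rintro rfl; exact h.2.1 hx
  have h2 : x ≠ p' := by rintro rfl; exact h.2.2.1 hx
  obtain ⟨D, hD, a, b, c⟩ := I.ex3 h.1 h1.symm h2.symm
  obtain ⟨S, hS, d, e, f⟩ := I.ex_avoid h.1 h1 h2
  obtain ⟨r, hr⟩ := (h.2.2.2 S hS d).2 e
  obtain ⟨r', hr'⟩ := (h'.2.2.2 S hS d).2 e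
  obtain ⟨t, ht⟩ := (h.2.2.2 D hD a).2 b
  obtain ⟨t', ht'⟩ := (h'.2.2.2 D hD a).2 b
  have e1 := ht.2.2 x hx c
  have e2 := ht'.2.2 x hx' c
  subst e1
  subst e2
  have hp := I.pen_trans hE hD hE' ⟨hx, c, Or.inr ht⟩ ⟨c, hx', Or.inr ht'.symm⟩
  exact I.gq_uniq hq hS f hE hE' hp hr.symm hr'.symm

noncomputable def invs (p p' : P) : Finset (Finset P) := by
  classical exact I.circles.filter fun D => I.Inv D p p'

theorem mem_invs {D : Finset P} {p p' : P} :
    D ∈ I.invs p p' ↔ D ∈ I.circles ∧ I.Inv D p p' := by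
  classical
  unfold invs
  exact Finset.mem_filter

theorem card_invs (hq : Even q) {x y : P} (h : x ≠ y) : (I.invs x y).card + 2 = q + 1 := by
  have h1 := part_count (I.invs x y) (Finset.univ \ {x, y}) (by
    intro a ha
    simp at ha
    obtain ⟨E, hE, haE, hi⟩ := I.inv_cover hq h ha.1 ha.2
    exact ⟨E, ⟨I.mem_invs.2 ⟨hE, hi⟩, haE⟩, fun D hD => I.inv_inj hq (I.mem_invs.1 hD.1).1 hE
      (I.mem_invs.1 hD.1).2 hi hD.2 haE⟩)
  have h2 : ∀ D ∈ I.invs x y, (D ∩ (Finset.univ \ {x, y})).card = q + 1 := by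
    intro D hD
    obtain ⟨hD, hi⟩ := I.mem_invs.1 hD
    have e : D ∩ (Finset.univ \ {x, y}) = D := by
      ext a
      simp
      rintro ha
      constructor
      · rintro rfl; exact hi.2.1 ha
      · rintro rfl; exact hi.2.2.1 ha
    rw [e, I.circle_card D hD]
  rw [Finset.sum_congr rfl h2, Finset.sum_const, smul_eq_mul,
    Finset.card_sdiff_of_subset (Finset.subset_univ _), Finset.card_pair h, Finset.card_univ,
    I.card_points] at h1
  obtain ⟨r, rfl⟩ : ∃ r, q = r + 2 := ⟨q - 2, by have := I.two_le; omega⟩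
  have h3 : (r + 2) ^ 2 + 1 - 2 = (r + 1) * (r + 2 + 1) := by
    have : (r + 2) ^ 2 + 1 = (r + 1) * (r + 2 + 1) + 2 := by ring
    rw [this]; simp
  rw [h3] at h1
  have := (Nat.eq_of_mul_eq_mul_right (by omega) h1).symm
  omega

/-- no triangles -/
theorem no_tri (hq : Even q) {C D E : Finset P} (hC : C ∈ I.circles) (hD : D ∈ I.circles)
    (hE : E ∈ I.circles) {p r s : P} (h1 : Tan C D p) (h2 : Tan E C r) (h3 : Tan E D s) :
    Tan E C p := by
  have hp : p ∈ E := by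
    by_contra hp
    exact I.tan_ne hC h1 (I.gq_uniq hq hE hp hC hD ⟨h1.1, h1.2.1, Or.inr h1⟩ h2 h3)
  have := h2.2.2 p hp h1.1
  exact this ▸ h2

/-- disjoint circles are both inverting some pair -/
theorem inv_of_disj (hq : Even q) {C D : Finset P} (hC : C ∈ I.circles) (hD : D ∈ I.circles)
    (h : ∀ x, x ∈ C → x ∉ D) : ∃ p p', p ≠ p' ∧ I.Inv C p p' ∧ I.Inv D p p' := by
  have hch : ∀ z, ∃ E, z ∈ C → E ∈ I.circles ∧ Tan C E z ∧ ∃ r, Tan D E r := by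
    intro z
    by_cases hz : z ∈ C
    · obtain ⟨E, hE, hCE, r, hr⟩ := I.tang_pen hq hD hC (h z hz) hz
      refine ⟨E, fun _ => ⟨hE, hCE.2.2.resolve_left ?_, r, hr⟩⟩
      rintro rfl
      exact h r hr.2.1 hr.1
    · exact ⟨∅, fun h => absurd h hz⟩
  choose f hf using hch
  have : ∃ z ∈ C, ∃ z' ∈ C, z ≠ z' ∧ ¬ Disjoint (f z) (f z') := by
    by_contra hno
    push Not at hno
    have h1 := Finset.card_biUnion (s := C) (t := f) (fun a ha b hb hab => hno a ha b hb hab)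
    rw [Finset.sum_congr rfl (fun z hz => I.circle_card _ (hf z hz).1), Finset.sum_const,
      I.circle_card C hC, smul_eq_mul] at h1
    have h2 := Finset.card_le_univ (C.biUnion f)
    rw [h1, I.card_points] at h2
    have := I.two_le
    nlinarith
  obtain ⟨z, hz, z', hz', hzz, hnd⟩ := this
  obtain ⟨hE, hCE, r, hDE⟩ := hf z hz
  obtain ⟨hE', hCE', r', hDE'⟩ := hf z' hz'
  have hne : f z ≠ f z' := by
    intro h
    rw [h] at hCE
    exact hzz (hCE'.2.2 z hz hCE.2.1)
  obtain ⟨p, hp, hp'⟩ := Finset.not_disjoint_iff.1 hnd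
  have : ∃ y, y ∈ f z ∧ y ∈ f z' ∧ y ≠ p := by
    by_contra hno
    push Not at hno
    have ht : Tan (f z) (f z') p := ⟨hp, hp', hno⟩
    have h1 := I.no_tri hq hE hE' hC ht hCE hCE'
    have h2 := I.no_tri hq hE hE' hD ht hDE hDE'
    exact h p h1.1 h2.1
  obtain ⟨y, hy, hy', hyp⟩ := this
  have hpC : p ∉ C := by
    intro hpC
    have h1 := hCE.2.2 p hpC hp
    have h2 := hCE'.2.2 p hpC hp'
    exact hzz (h1.symm.trans h2)
  have hpD : p ∉ D := by
    intro hpD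
    have h1 := hDE.2.2 p hpD hp
    have h2 := hDE'.2.2 p hpD hp'
    subst h1
    subst h2
    have := I.pen_trans hE hD hE' ⟨hp, hpD, Or.inr hDE.symm⟩ ⟨hpD, hp', Or.inr hDE'⟩
    exact hne (this.2.2.resolve_right (fun ht => hyp (ht.2.2 y hy hy')))
  exact ⟨p, y, hyp.symm, I.inv_of_two hq hC hE hE' hne hpC hyp.symm hCE hCE' hp hy hp' hy',
    I.inv_of_two hq hD hE hE' hne hpD hyp.symm hDE hDE' hp hy hp' hy'⟩

end InversivePlane

set_option autoImplicit false
set_option linter.unusedSectionVars false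
set_option linter.unusedVariables false

namespace InversivePlane
variable {q : ℕ} {P : Type} [Fintype P] [DecidableEq P] (I : InversivePlane q P)

/-- points and circles together -/
abbrev PC := P ⊕ {C // C ∈ I.circles}

/-- the perpendicularity relation on points and circles -/
def iperp : I.PC → I.PC → Prop
  | Sum.inl p, Sum.inl r => p = r
  | Sum.inl p, Sum.inr C => p ∈ C.1
  | Sum.inr C, Sum.inl p => p ∈ C.1
  | Sum.inr C, Sum.inr D => C.1 = D.1 ∨ ∃ p, Tan C.1 D.1 p

theorem iperp_symm (x y : I.PC) (h : I.iperp x y) : I.iperp y x := by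
  rcases x with p | C <;> rcases y with r | D
  · exact Eq.symm h
  · exact h
  · exact h
  · rcases h with h | ⟨p, h⟩
    · exact Or.inl h.symm
    · exact Or.inr ⟨p, h.symm⟩

theorem iperp_refl (x : I.PC) : I.iperp x x := by
  rcases x with p | C
  · exact rfl
  · exact Or.inl rfl

theorem card_sum (A : Finset P) (𝓓 : Finset (Finset P)) (h : ∀ D ∈ 𝓓, D ∈ I.circles)
    (Q : I.PC → Prop) (h1 : ∀ r, Q (Sum.inl r) ↔ r ∈ A) (h2 : ∀ D, Q (Sum.inr D) ↔ D.1 ∈ 𝓓) :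
    Nat.card {w // Q w} = A.card + 𝓓.card := by
  have : ∀ w, Q w ↔ w ∈ A.disjSum (𝓓.subtype (fun C => C ∈ I.circles)) := by
    rintro (r | D)
    · rw [h1, Finset.inl_mem_disjSum]
    · rw [h2, Finset.inr_mem_disjSum, Finset.mem_subtype]
  rw [Nat.card_congr (Equiv.subtypeEquivRight this), Nat.card_eq_fintype_card, Fintype.card_coe,
    Finset.card_disjSum, Finset.card_subtype, Finset.filter_true_of_mem h]

/-- `S'` is the polar of any two points of `S` -/
def Half (S S' : I.PC → Prop) : Prop :=
  (∀ a b, S a → S b → a ≠ b → ∀ w, (I.iperp w a ∧ I.iperp w b) ↔ S' w) ∧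
  Nat.card {w // S' w} = q + 1 ∧ ∀ z, ∃ w, S' w ∧ I.iperp w z

def Ln (p : P) (C : Finset P) : I.PC → Prop :=
  Sum.elim (fun r => r = p) (fun D => Pen p C D.1)
def Hy (p p' : P) : I.PC → Prop :=
  Sum.elim (fun r => False) (fun D => p ∈ D.1 ∧ p' ∈ D.1)
def Hs (p p' : P) : I.PC → Prop :=
  Sum.elim (fun r => r = p ∨ r = p') (fun D => I.Inv D.1 p p')

theorem half_Ln (hq : Even q) {p : P} {C : Finset P} (hC : C ∈ I.circles) (hp : p ∈ C) :
    I.Half (I.Ln p C) (I.Ln p C) := by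
  refine ⟨?_, ?_, ?_⟩
  · have key : ∀ D : {C // C ∈ I.circles}, Pen p C D.1 → ∀ w, (I.iperp w (Sum.inl p) ∧
        I.iperp w (Sum.inr D)) ↔ I.Ln p C w := by
      rintro D hD (r | E)
      · constructor
        · intro h; exact h.1
        · intro h
          have h : r = p := h
          subst h
          exact ⟨rfl, hD.2.1⟩
      · constructor
        · rintro ⟨h1, h2⟩
          have h1 : p ∈ E.1 := h1
          refine I.pen_trans hC D.2 E.2 hD ⟨hD.2.1, h1, ?_⟩
          rcases h2 with h2 | ⟨t, h2⟩
          · exact Or.inl h2.symm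
          · have := h2.2.2 p h1 hD.2.1
            subst this
            exact Or.inr h2.symm
        · intro h
          have h : Pen p C E.1 := h
          have h2 := I.pen_trans E.2 hC D.2 h.symm hD
          exact ⟨h.2.1, h2.2.2.imp id (fun h => ⟨p, h⟩)⟩
    rintro (a | D) (b | D') ha hb hab w
    · have ha : a = p := ha
      have hb : b = p := hb
      exact absurd (by rw [ha, hb]) hab
    · have ha : a = p := ha
      subst ha
      exact key D' hb w
    · have hb : b = p := hb
      subst hb
      rw [and_comm]
      exact key D ha w
    · have ha : Pen p C D.1 := ha
      have hb : Pen p C D'.1 := hb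
      have hne : D.1 ≠ D'.1 := fun h => hab (by rw [Subtype.ext h])
      have ht : Tan D.1 D'.1 p := (I.pen_trans D.2 hC D'.2 ha.symm hb).2.2.resolve_left hne
      rcases w with r | E
      · constructor
        · rintro ⟨h1, h2⟩; exact ht.2.2 r h1 h2
        · intro h
          have h : r = p := h
          subst h
          exact ⟨ht.1, ht.2.1⟩
      · constructor
        · rintro ⟨h1, h2⟩
          show Pen p C E.1
          rcases h1 with h1 | ⟨s, h1⟩
          · rw [h1]; exact ha
          rcases h2 with h2 | ⟨t, h2⟩
          · rw [h2]; exact hb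
          have := I.no_tri hq D.2 D'.2 E.2 ht h1 h2
          exact I.pen_trans hC D.2 E.2 ha ⟨this.2.1, this.1, Or.inr this.symm⟩
        · intro h
          have h : Pen p C E.1 := h
          exact ⟨(I.pen_trans E.2 hC D.2 h.symm ha).2.2.imp id (fun h => ⟨p, h⟩),
            (I.pen_trans E.2 hC D'.2 h.symm hb).2.2.imp id (fun h => ⟨p, h⟩)⟩
  · rw [I.card_sum {p} (I.pencil p C) (fun D hD => (I.mem_pencil.1 hD).1), I.card_pencil hC hp,
      Finset.card_singleton, add_comm]
    · intro r
      rw [Finset.mem_singleton]; rfl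
    · intro D
      rw [I.mem_pencil]
      exact ⟨fun h => ⟨D.2, h⟩, fun h => h.2⟩
  · rintro (r | D)
    · by_cases h : r = p
      · exact ⟨Sum.inl p, rfl, h.symm⟩
      · obtain ⟨D, hD, h1, h2⟩ := (I.pen_exu hC hp h).exists
        exact ⟨Sum.inr ⟨D, hD⟩, h1, h2⟩
    · by_cases h : p ∈ D.1
      · exact ⟨Sum.inl p, rfl, h⟩
      · obtain ⟨E, hE, h1, r, h2⟩ := I.tang_pen hq D.2 hC h hp
        exact ⟨Sum.inr ⟨E, hE⟩, h1, Or.inr ⟨r, h2.symm⟩⟩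

theorem half_Hy (hq : Even q) {p p' : P} (hpp : p ≠ p') :
    I.Half (I.Hy p p') (I.Hs p p') := by
  refine ⟨?_, ?_, ?_⟩
  · rintro (a | C) (b | D) ha hb hab w
    · exact ha.elim
    · exact ha.elim
    · exact hb.elim
    obtain ⟨pC, pC'⟩ : p ∈ C.1 ∧ p' ∈ C.1 := ha
    obtain ⟨pD, pD'⟩ : p ∈ D.1 ∧ p' ∈ D.1 := hb
    have hne : C.1 ≠ D.1 := fun h => hab (by rw [Subtype.ext h])
    have hnt : ∀ t, ¬ Tan C.1 D.1 t := fun t ht =>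
      hpp ((ht.2.2 p pC pD).trans (ht.2.2 p' pC' pD').symm)
    rcases w with r | E
    · constructor
      · rintro ⟨h1, h2⟩
        show r = p ∨ r = p'
        by_contra hno
        push Not at hno
        exact hne (I.eq3 hpp hno.1.symm hno.2.symm C.2 D.2 pC pC' h1 pD pD' h2)
      · intro h
        rcases h with rfl | rfl
        · exact ⟨pC, pD⟩
        · exact ⟨pC', pD'⟩
    · constructor
      · rintro ⟨h1, h2⟩
        show I.Inv E.1 p p'
        rcases h1 with h1 | ⟨s, h1⟩
        · rcases h2 with h2 | ⟨t, h2⟩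
          · exact absurd (h1.symm.trans h2) hne
          · exact absurd (h1 ▸ h2) (hnt t)
        rcases h2 with h2 | ⟨t, h2⟩
        · exact absurd (h2 ▸ h1.symm) (hnt s)
        have hpE : p ∉ E.1 := by
          intro hpE
          have e1 := h1.2.2 p hpE pC
          have e2 := h2.2.2 p hpE pD
          subst e1
          subst e2
          have := I.pen_trans C.2 E.2 D.2 ⟨pC, hpE, Or.inr h1.symm⟩ ⟨hpE, pD, Or.inr h2⟩
          rcases this.2.2 with h | h
          · exact hne h
          · exact hnt _ h
        exact I.inv_of_two hq E.2 C.2 D.2 hne hpE hpp h1 h2 pC pC' pD pD'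
      · intro h
        have h : I.Inv E.1 p p' := h
        exact ⟨Or.inr ((h.2.2.2 C.1 C.2 pC).2 pC'), Or.inr ((h.2.2.2 D.1 D.2 pD).2 pD')⟩
  · rw [I.card_sum {p, p'} (I.invs p p') (fun D hD => (I.mem_invs.1 hD).1), Finset.card_pair hpp,
      add_comm, I.card_invs hq hpp]
    · intro r
      rw [Finset.mem_insert, Finset.mem_singleton]; rfl
    · intro D
      rw [I.mem_invs]
      exact ⟨fun h => ⟨D.2, h⟩, fun h => h.2⟩
  · rintro (r | D)
    · by_cases h : r = p
      · exact ⟨Sum.inl p, Or.inl rfl, h.symm⟩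
      by_cases h' : r = p'
      · exact ⟨Sum.inl p', Or.inr rfl, h'.symm⟩
      obtain ⟨E, hE, h1, h2⟩ := I.inv_cover hq hpp h h'
      exact ⟨Sum.inr ⟨E, hE⟩, h2, h1⟩
    · by_cases h : p ∈ D.1
      · exact ⟨Sum.inl p, Or.inl rfl, h⟩
      by_cases h' : p' ∈ D.1
      · exact ⟨Sum.inl p', Or.inr rfl, h'⟩
      by_cases hi : I.Inv D.1 p p'
      · exact ⟨Sum.inr D, hi, Or.inl rfl⟩
      obtain ⟨E, hE, r, hr⟩ := I.parity hq D.2 (I.invs p p') (fun D hD => (I.mem_invs.1 hD).1)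
        (fun h => hi (I.mem_invs.1 h).2) (by
          intro a ha
          obtain ⟨E, hE, haE, hi⟩ := I.inv_cover hq hpp (x := a) (by rintro rfl; exact h ha)
            (by rintro rfl; exact h' ha)
          exact ⟨E, ⟨I.mem_invs.2 ⟨hE, hi⟩, haE⟩, fun D hD => I.inv_inj hq
            (I.mem_invs.1 hD.1).1 hE (I.mem_invs.1 hD.1).2 hi hD.2 haE⟩)
      exact ⟨Sum.inr ⟨E, (I.mem_invs.1 hE).1⟩, (I.mem_invs.1 hE).2, Or.inr ⟨r, hr.symm⟩⟩

theorem half_Hs (hq : Even q) {p p' : P} (hpp : p ≠ p') :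
    I.Half (I.Hs p p') (I.Hy p p') := by
  refine ⟨?_, ?_, ?_⟩
  · have key0 : ∀ w, (I.iperp w (Sum.inl p) ∧ I.iperp w (Sum.inl p')) ↔ I.Hy p p' w := by
      rintro (r | D)
      · constructor
        · rintro ⟨h1, h2⟩
          exact hpp (Eq.trans (Eq.symm h1) h2)
        · exact False.elim
      · exact Iff.rfl
    have key1 : ∀ E : {C // C ∈ I.circles}, I.Inv E.1 p p' → ∀ w, (I.iperp w (Sum.inl p) ∧
        I.iperp w (Sum.inr E)) ↔ I.Hy p p' w := by
      rintro E hE (r | D)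
      · constructor
        · rintro ⟨h1, h2⟩
          have h1 : r = p := h1
          subst h1
          exact hE.2.1 h2
        · exact False.elim
      · constructor
        · rintro ⟨h1, h2⟩
          have h1 : p ∈ D.1 := h1
          refine ⟨h1, ?_⟩
          rcases h2 with h2 | ⟨t, h2⟩
          · exact absurd (h2 ▸ h1) hE.2.1
          · exact (hE.2.2.2 D.1 D.2 h1).1 ⟨t, h2.symm⟩
        · rintro ⟨h1, h2⟩
          obtain ⟨t, ht⟩ := (hE.2.2.2 D.1 D.2 h1).2 h2
          exact ⟨h1, Or.inr ⟨t, ht.symm⟩⟩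
    have key2 : ∀ E : {C // C ∈ I.circles}, I.Inv E.1 p p' → ∀ w, (I.iperp w (Sum.inl p') ∧
        I.iperp w (Sum.inr E)) ↔ I.Hy p p' w := by
      rintro E hE (r | D)
      · constructor
        · rintro ⟨h1, h2⟩
          have h1 : r = p' := h1
          subst h1
          exact hE.2.2.1 h2
        · exact False.elim
      · have hE' := I.inv_symm hq E.2 hE
        constructor
        · rintro ⟨h1, h2⟩
          have h1 : p' ∈ D.1 := h1
          refine ⟨?_, h1⟩
          rcases h2 with h2 | ⟨t, h2⟩
          · exact absurd (h2 ▸ h1) hE.2.2.1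
          · exact (hE'.2.2.2 D.1 D.2 h1).1 ⟨t, h2.symm⟩
        · rintro ⟨h1, h2⟩
          obtain ⟨t, ht⟩ := (hE.2.2.2 D.1 D.2 h1).2 h2
          exact ⟨h2, Or.inr ⟨t, ht.symm⟩⟩
    rintro (a | E) (b | E') ha hb hab w
    · rcases ha with rfl | rfl <;> rcases hb with rfl | rfl
      · exact absurd rfl hab
      · exact key0 w
      · rw [and_comm]; exact key0 w
      · exact absurd rfl hab
    · rcases ha with rfl | rfl
      · exact key1 E' hb w
      · exact key2 E' hb w
    · rw [and_comm]
      rcases hb with rfl | rfl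
      · exact key1 E ha w
      · exact key2 E ha w
    have ha : I.Inv E.1 p p' := ha
    have hb : I.Inv E'.1 p p' := hb
    have hne : E.1 ≠ E'.1 := fun h => hab (by rw [Subtype.ext h])
    have hdis : ∀ r, r ∈ E.1 → r ∈ E'.1 → False := fun r h1 h2 =>
      hne (I.inv_inj hq E.2 E'.2 ha hb h1 h2)
    rcases w with r | D
    · constructor
      · rintro ⟨h1, h2⟩
        exact hdis r h1 h2
      · exact False.elim
    · constructor
      · rintro ⟨h1, h2⟩
        show p ∈ D.1 ∧ p' ∈ D.1
        rcases h1 with h1 | ⟨z, h1⟩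
        · rcases h2 with h2 | ⟨t, h2⟩
          · exact absurd (h1.symm.trans h2) hne
          · exact (hdis t (h1 ▸ h2.1) h2.2.1).elim
        rcases h2 with h2 | ⟨t, h2⟩
        · exact (hdis z h1.2.1 (h2 ▸ h1.1)).elim
        have zp : z ≠ p := by rintro rfl; exact ha.2.1 h1.2.1
        have zp' : z ≠ p' := by rintro rfl; exact ha.2.2.1 h1.2.1
        obtain ⟨B, hB, a, b, c⟩ := I.ex3 hpp zp.symm zp'.symm
        obtain ⟨s, hs⟩ := (ha.2.2.2 B hB a).2 b
        obtain ⟨s', hs'⟩ := (hb.2.2.2 B hB a).2 b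
        have := hs.2.2 z h1.2.1 c
        subst this
        have hpen := I.pen_trans D.2 E.2 hB ⟨h1.1, h1.2.1, Or.inr h1⟩ ⟨h1.2.1, c, Or.inr hs⟩
        have := I.gq_uniq hq E'.2 (fun h => hdis _ h1.2.1 h) D.2 hB hpen h2.symm hs'
        rw [this]
        exact ⟨a, b⟩
      · rintro ⟨h1, h2⟩
        obtain ⟨s, hs⟩ := (ha.2.2.2 D.1 D.2 h1).2 h2
        obtain ⟨s', hs'⟩ := (hb.2.2.2 D.1 D.2 h1).2 h2
        exact ⟨Or.inr ⟨s, hs.symm⟩, Or.inr ⟨s', hs'.symm⟩⟩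
  · rw [I.card_sum ∅ (I.thru p p') (fun D hD => (I.mem_thru.1 hD).1), Finset.card_empty,
      zero_add, I.card_thru hpp]
    · intro r
      simp [Hy]
    · intro D
      rw [I.mem_thru]
      exact ⟨fun h => ⟨D.2, h⟩, fun h => h.2⟩
  · have any : ∀ r, ∃ D ∈ I.circles, p ∈ D ∧ p' ∈ D ∧ (r ≠ p → r ∈ D) := by
      intro r
      by_cases h : r = p
      · have : 0 < (I.thru p p').card := by rw [I.card_thru hpp]; omega
        obtain ⟨D, hD⟩ := Finset.card_pos.1 this
        obtain ⟨a, b, c⟩ := I.mem_thru.1 hD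
        exact ⟨D, a, b, c, fun h' => absurd h h'⟩
      by_cases h' : r = p'
      · have : 0 < (I.thru p p').card := by rw [I.card_thru hpp]; omega
        obtain ⟨D, hD⟩ := Finset.card_pos.1 this
        obtain ⟨a, b, c⟩ := I.mem_thru.1 hD
        exact ⟨D, a, b, c, fun _ => h' ▸ c⟩
      obtain ⟨D, a, b, c, d⟩ := I.ex3 hpp (Ne.symm h) (Ne.symm h')
      exact ⟨D, a, b, c, fun _ => d⟩
    rintro (r | C)
    · obtain ⟨D, a, b, c, d⟩ := any r
      refine ⟨Sum.inr ⟨D, a⟩, ⟨b, c⟩, ?_⟩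
      show r ∈ D
      by_cases h : r = p
      · rw [h]; exact b
      · exact d h
    · by_cases h : p ∈ C.1
      · obtain ⟨D, hD, h1, h2⟩ := (I.pen_exu C.2 h hpp.symm).exists
        exact ⟨Sum.inr ⟨D, hD⟩, ⟨h1.2.1, h2⟩, h1.symm.2.2.imp id (fun h => ⟨p, h⟩)⟩
      · obtain ⟨y, hy⟩ := I.inv_exists hq C.2 h
        obtain ⟨D, a, b, c, d⟩ := any y
        obtain ⟨t, ht⟩ := (hy.2.2.2 D a b).2 (d hy.1.symm)
        exact ⟨Sum.inr ⟨D, a⟩, ⟨b, c⟩, Or.inr ⟨t, ht.symm⟩⟩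

theorem half_cover (hq : Even q) (x y : I.PC) (hxy : x ≠ y) :
    ∃ S S', S x ∧ S y ∧ I.Half S S' ∧ I.Half S' S := by
  have key : ∀ (p : P) (C : {C // C ∈ I.circles}), ∃ S S', S (Sum.inl p) ∧ S (Sum.inr C) ∧
      I.Half S S' ∧ I.Half S' S := by
    intro p C
    by_cases h : p ∈ C.1
    · exact ⟨I.Ln p C.1, _, rfl, ⟨h, h, Or.inl rfl⟩, I.half_Ln hq C.2 h, I.half_Ln hq C.2 h⟩
    · obtain ⟨y, hy⟩ := I.inv_exists hq C.2 h
      exact ⟨_, _, Or.inl rfl, hy, I.half_Hs hq hy.1, I.half_Hy hq hy.1⟩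
  rcases x with p | C <;> rcases y with p' | D
  · have h : p ≠ p' := fun h => hxy (by rw [h])
    exact ⟨_, _, Or.inl rfl, Or.inr rfl, I.half_Hs hq h, I.half_Hy hq h⟩
  · exact key p D
  · obtain ⟨S, S', a, b, c⟩ := key p' C
    exact ⟨S, S', b, a, c⟩
  · have hne : C.1 ≠ D.1 := fun h => hxy (by rw [Subtype.ext h])
    by_cases hdis : ∀ x, x ∈ C.1 → x ∉ D.1
    · obtain ⟨p, p', h, h1, h2⟩ := I.inv_of_disj hq C.2 D.2 hdis
      exact ⟨_, _, h1, h2, I.half_Hs hq h, I.half_Hy hq h⟩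
    push Not at hdis
    obtain ⟨p, hpC, hpD⟩ := hdis
    by_cases ht : ∀ r, r ∈ C.1 → r ∈ D.1 → r = p
    · exact ⟨I.Ln p C.1, _, ⟨hpC, hpC, Or.inl rfl⟩, ⟨hpC, hpD, Or.inr ⟨hpC, hpD, ht⟩⟩,
        I.half_Ln hq C.2 hpC, I.half_Ln hq C.2 hpC⟩
    · push Not at ht
      obtain ⟨r, h1, h2, h3⟩ := ht
      exact ⟨_, _, ⟨hpC, h1⟩, ⟨hpD, h2⟩, I.half_Hy hq h3.symm, I.half_Hs hq h3.symm⟩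

theorem ex_pts (I : InversivePlane q P) : ∃ p p' : P, p ≠ p' := by
  have : 1 < Fintype.card P := by rw [I.card_points]; have := I.two_le; nlinarith
  exact Fintype.exists_pair_of_one_lt_card this

theorem polar (hq : Even q) : PolarGeom I.PC I.iperp q where
  two_le := I.two_le
  refl := I.iperp_refl
  symm := I.iperp_symm
  three := by
    have key : ∀ x y z, x ≠ y → ∃ w, I.iperp w x ∧ I.iperp w y ∧ I.iperp w z := by
      intro x y z hxy
      obtain ⟨S, S', hx, hy, h, _⟩ := I.half_cover hq x y hxy
      obtain ⟨w, hw, hz⟩ := h.2.2 z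
      have := (h.1 x y hx hy hxy w).2 hw
      exact ⟨w, this.1, this.2, hz⟩
    intro x y z
    by_cases hxy : x = y
    · have : ∃ y', x ≠ y' := by
        obtain ⟨p, p', h⟩ := I.ex_pts
        by_contra hno
        push Not at hno
        have := (hno (Sum.inl p)).symm.trans (hno (Sum.inl p'))
        exact h (Sum.inl_injective this)
      obtain ⟨y', hy'⟩ := this
      obtain ⟨w, h1, _, h2⟩ := key x y' z hy'
      exact ⟨w, h1, hxy ▸ h1, h2⟩
    · exact key x y z hxy
  reg := by
    intro x y w w' u z hxy hw h1 h2 h3 h4 h5 h6 h7 h8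
    obtain ⟨S, S', hx, hy, h, h'⟩ := I.half_cover hq x y hxy
    have a1 := (h.1 x y hx hy hxy w).1 ⟨h1, h2⟩
    have a2 := (h.1 x y hx hy hxy w').1 ⟨h3, h4⟩
    have a3 := (h.1 x y hx hy hxy u).1 ⟨h5, h6⟩
    have a4 := (h'.1 w w' a1 a2 hw z).1 ⟨h7, h8⟩
    by_cases hzx : z = x
    · rw [hzx]; exact h5
    · exact ((h.1 z x a4 hx hzx u).2 a3).1
  card := by
    intro x y hxy
    obtain ⟨S, S', hx, hy, h, h'⟩ := I.half_cover hq x y hxy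
    rw [← h.2.1]
    exact Nat.card_congr (Equiv.subtypeEquivRight (h.1 x y hx hy hxy))
  nondeg := by
    rintro (p | C) (p' | D) hxy
    · exact ⟨Sum.inl p, rfl, fun h => hxy (by rw [show p = p' from h])⟩
    · by_cases h : p ∈ D.1
      · obtain ⟨r, hr, hrp, _⟩ := I.other D.2 p p
        obtain ⟨E, hE, h1, h2, h3⟩ := I.ex_other hrp.symm D.2 h hr
        refine ⟨Sum.inr ⟨E, hE⟩, h1, ?_⟩
        rintro (h4 | ⟨t, h4⟩)
        · exact h3 h4
        · exact hrp ((h4.2.2 r h2 hr).trans (h4.2.2 p h1 h).symm)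
      · exact ⟨Sum.inl p, rfl, h⟩
    · obtain ⟨r, hr, hrp, _⟩ := I.other C.2 p' p'
      exact ⟨Sum.inl r, hr, hrp⟩
    · by_contra hno
      push Not at hno
      have hsub : C.1 ⊆ D.1 := fun r hr => hno (Sum.inl r) hr
      have := Finset.eq_of_subset_of_card_le hsub (by
        rw [I.circle_card _ C.2, I.circle_card _ D.2])
      exact hxy (by rw [Subtype.ext this])

/-- two distinct perpendicular elements have a unique common point -/
theorem ovoid_pt (x y : I.PC) (hxy : x ≠ y) (h : I.iperp x y) :
    ∃! p : P, I.iperp (Sum.inl p) x ∧ I.iperp (Sum.inl p) y := by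
  rcases x with p | C <;> rcases y with p' | D
  · exact absurd (by rw [show p = p' from h]) hxy
  · exact ⟨p, ⟨rfl, h⟩, fun r hr => hr.1⟩
  · exact ⟨p', ⟨h, rfl⟩, fun r hr => hr.2⟩
  · have hne : C.1 ≠ D.1 := fun h => hxy (by rw [Subtype.ext h])
    obtain ⟨t, ht⟩ := h.resolve_left hne
    exact ⟨t, ⟨ht.1, ht.2.1⟩, fun r hr => ht.2.2 r hr.1 hr.2⟩

end InversivePlane

set_option autoImplicit false
set_option linter.unusedSectionVars false
set_option linter.unusedVariables false

/-- the symplectic form as a bilinear map -/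
noncomputable def sbil (K : Type) [Field K] : (Fin 4 → K) →ₗ[K] (Fin 4 → K) →ₗ[K] K :=
  LinearMap.mk₂ K sform
    (by intro a b c; simp [sform]; ring) (by intro r a b; simp [sform]; ring)
    (by intro a b c; simp [sform]; ring) (by intro r a b; simp [sform]; ring)

theorem sbil_apply {K : Type} [Field K] (v w : Fin 4 → K) : sbil K v w = sform v w := rfl

theorem sbil_nondeg {K : Type} [Field K] (v : Fin 4 → K) (h : ∀ w, sbil K v w = 0) : v = 0 := by
  have h0 := h ![0, 0, 0, 1]
  have h1 := h ![0, 0, 1, 0]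
  have h2 := h ![0, 1, 0, 0]
  have h3 := h ![1, 0, 0, 0]
  simp [sbil_apply, sform] at h0 h1 h2 h3
  ext i
  fin_cases i
  · exact h0
  · exact h1
  · exact h2
  · exact h3

theorem sbil_inj {K : Type} [Field K] : Function.Injective (sbil K) := by
  rw [injective_iff_map_eq_zero]
  intro v hv
  exact sbil_nondeg v (fun w => by rw [hv]; rfl)

theorem sform_symm {K : Type} [Field K] (v w : Fin 4 → K) : sform v w = 0 ↔ sform w v = 0 := by
  unfold sform
  constructor <;> intro h <;> linear_combination -h

section model
variable {X : Type} {perp : X → X → Prop} {q : ℕ} {K : Type} [Field K]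

theorem psi_of_smul (G : PolarGeom X perp q) {Ψ : (Fin 4 → K) → X}
    (hΨ : ∀ v w, v ≠ 0 → w ≠ 0 → (perp (Ψ v) (Ψ w) ↔ sform v w = 0))
    (hs : ∀ a, ∃ v, v ≠ 0 ∧ Ψ v = a) {v w : Fin 4 → K} (hv : v ≠ 0) (hw : w ≠ 0)
    {c : K} (h : c • w = v) : Ψ v = Ψ w := by
  by_contra hne
  obtain ⟨a, h1, h2⟩ := G.nondeg _ _ (Ne.symm hne)
  obtain ⟨u, hu, rfl⟩ := hs a
  apply h2
  rw [hΨ _ _ hu hw] at h1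
  rw [hΨ _ _ hu hv, ← h, ← sbil_apply, map_smul, sbil_apply, h1, smul_zero]

theorem psi_eq (G : PolarGeom X perp q) {Ψ : (Fin 4 → K) → X}
    (hΨ : ∀ v w, v ≠ 0 → w ≠ 0 → (perp (Ψ v) (Ψ w) ↔ sform v w = 0))
    {v w : Fin 4 → K} (hv : v ≠ 0) (hw : w ≠ 0) (h : Ψ v = Ψ w) : ∃ c : K, c • w = v := by
  have h1 : sbil K v ∈ Submodule.span K (Set.range fun _ : Unit => sbil K w) := by
    apply mem_span_of_iInf_ker_le_ker
    intro u hu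
    simp at hu
    rw [LinearMap.mem_ker]
    by_cases hu0 : u = 0
    · rw [hu0, map_zero]
    rw [sbil_apply] at hu ⊢
    rw [← hΨ _ _ hv hu0, h, hΨ _ _ hw hu0]
    exact hu
  rw [Set.range_const, Submodule.mem_span_singleton] at h1
  obtain ⟨c, hc⟩ := h1
  refine ⟨c, sbil_inj ?_⟩
  rw [map_smul, hc]

theorem psi_span (G : PolarGeom X perp q) {Ψ : (Fin 4 → K) → X}
    (hΨ : ∀ v w, v ≠ 0 → w ≠ 0 → (perp (Ψ v) (Ψ w) ↔ sform v w = 0))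
    {u w y : Fin 4 → K} (hu : u ≠ 0) (hw : w ≠ 0) (hy : y ≠ 0) (h : Ψ u ≠ Ψ w)
    (huw : sform u w = 0) (h1 : sform y u = 0) (h2 : sform y w = 0) :
    y ∈ Submodule.span K (Set.range ![u, w]) := by
  have hm : sbil K y ∈ Submodule.span K (Set.range fun i : Fin 2 => sbil K (![u, w] i)) := by
    apply mem_span_of_iInf_ker_le_ker
    intro z hz
    rw [Submodule.mem_iInf] at hz
    have hz0 : sform u z = 0 := hz 0
    have hz1 : sform w z = 0 := hz 1
    rw [LinearMap.mem_ker]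
    by_cases hz' : z = 0
    · rw [hz', map_zero]
    rw [sbil_apply]
    rw [← hΨ _ _ hu hz'] at hz0
    rw [← hΨ _ _ hw hz'] at hz1
    rw [← hΨ _ _ hy hu] at h1
    rw [← hΨ _ _ hy hw] at h2
    rw [← hΨ _ _ hu hw] at huw
    rw [← hΨ _ _ hy hz']
    exact G.reg (Ψ u) (Ψ w) (Ψ u) (Ψ w) (Ψ y) (Ψ z) h h (G.refl _) huw (G.symm _ _ huw)
      (G.refl _) h1 h2 (G.symm _ _ hz0) (G.symm _ _ hz1)
  rw [Submodule.mem_span_range_iff_exists_fun] at hm ⊢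
  obtain ⟨c, hc⟩ := hm
  refine ⟨c, sbil_inj ?_⟩
  rw [map_sum, ← hc]
  simp
end model

/-- Dembowski theorem for inversive planes of even order. -/
theorem dembowski_inversive_plane_even_order
    {q : ℕ} (hq : Even q) (P : Type) [Fintype P]
    (I : InversivePlane q P) :
    ∃ k : ℕ, 1 ≤ k ∧ q = 2 ^ k ∧
      ∃ B : (Fin 4 → GaloisField 2 k) →ₗ[GaloisField 2 k]
            (Fin 4 → GaloisField 2 k) →ₗ[GaloisField 2 k] GaloisField 2 k,
        -- `B` is nondegenerate
        (∀ v, (∀ w, B v w = 0) → v = 0) ∧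
        -- `B` is alternating
        (∀ v, B v v = 0) ∧
        ∃ (f : P → Projectivization (GaloisField 2 k) (Fin 4 → GaloisField 2 k))
          (g : {C // C ∈ I.circles} →
               Projectivization (GaloisField 2 k) (Fin 4 → GaloisField 2 k)),
          Function.Injective f ∧
          -- the image of `f` is an ovoid of `W(q)`: it contains exactly one
          -- point of every totally isotropic two-dimensional subspace of `V`
          (∀ M : Submodule (GaloisField 2 k) (Fin 4 → GaloisField 2 k),
              Module.finrank (GaloisField 2 k) M = 2 →
              (∀ v ∈ M, ∀ w ∈ M, B v w = 0) →
              ∃! y, y ∈ Set.range f ∧ y.submodule ≤ M) ∧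
          -- `g` is a bijection from the circles onto the points not in the ovoid
          Function.Injective g ∧
          Set.range g = (Set.range f)ᶜ ∧
          -- incidence: `x ∈ C` iff `f x` and `g C` are collinear in `W(q)`
          (∀ (x : P) (C : {C // C ∈ I.circles}),
              x ∈ C.1 ↔ B (f x).rep (g C).rep = 0) := by
  classical
  have G := I.polar hq
  obtain ⟨p0, p1, hp⟩ := I.ex_pts
  obtain ⟨k, hk, hqk, Ψ, hΨ, hs⟩ := G.coordsX hq (Sum.inl p0) (Sum.inl p1) (fun h => hp (Eq.symm h))
  choose v hv hv' using hs
  have hs : ∀ a, ∃ v, v ≠ 0 ∧ Ψ v = a := fun a => ⟨v a, hv a, hv' a⟩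
  let F : I.PC → Projectivization (GaloisField 2 k) (Fin 4 → GaloisField 2 k) :=
    fun x => Projectivization.mk _ (v x) (hv x)
  have hrep : ∀ x, Ψ (F x).rep = x := by
    intro x
    have h1 := Projectivization.mk_rep (F x)
    rw [Projectivization.mk_eq_mk_iff'] at h1
    obtain ⟨c, hc⟩ := h1
    rw [psi_of_smul G hΨ hs (Projectivization.rep_nonzero _) (hv x) hc, hv']
  have Finj : Function.Injective F := by
    intro x y h
    rw [← hrep x, ← hrep y, h]
  have Fsurj : Function.Surjective F := by
    intro y
    refine ⟨Ψ y.rep, ?_⟩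
    rw [← Projectivization.mk_rep y, Projectivization.mk_eq_mk_iff']
    rw [Projectivization.mk_rep y]
    exact psi_eq G hΨ (hv _) y.rep_nonzero (hv' _)
  refine ⟨k, hk, hqk, sbil _, sbil_nondeg, ?_, fun p => F (Sum.inl p), fun C => F (Sum.inr C),
    fun a b h => Sum.inl_injective (Finj h), ?_, fun a b h => Sum.inr_injective (Finj h), ?_, ?_⟩
  · intro v
    rw [sbil_apply]
    unfold sform
    ring
  · intro M hM hiso
    let b := Module.finBasisOfFinrankEq (GaloisField 2 k) M hM
    have hb0 : (b 0 : Fin 4 → GaloisField 2 k) ≠ 0 := fun h => b.ne_zero 0 (Subtype.ext h)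
    have hb1 : (b 1 : Fin 4 → GaloisField 2 k) ≠ 0 := fun h => b.ne_zero 1 (Subtype.ext h)
    have hiso' : ∀ v ∈ M, ∀ w ∈ M, sform v w = 0 := hiso
    have hne : Ψ (b 0) ≠ Ψ (b 1) := by
      intro h
      obtain ⟨c, hc⟩ := psi_eq G hΨ hb0 hb1 h
      have hc' : c • b 1 = b 0 := Subtype.ext hc
      have := congrArg (fun z => b.repr z 0) hc'
      simp at this
    have hperp : I.iperp (Ψ (b 0)) (Ψ (b 1)) :=
      (hΨ _ _ hb0 hb1).2 (hiso' _ (b 0).2 _ (b 1).2)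
    obtain ⟨p, ⟨h1, h2⟩, hu⟩ := I.ovoid_pt _ _ hne hperp
    have hrw : ∀ (p : P) (z : Fin 4 → GaloisField 2 k), z ≠ 0 →
        (I.iperp (Sum.inl p) (Ψ z) ↔ sform (v (Sum.inl p)) z = 0) := by
      intro p z hz
      rw [← hΨ _ _ (hv _) hz, hv']
    rw [hrw _ _ hb0] at h1
    rw [hrw _ _ hb1] at h2
    refine ⟨F (Sum.inl p), ⟨⟨p, rfl⟩, ?_⟩, ?_⟩
    · rw [Projectivization.submodule_mk, Submodule.span_singleton_le_iff_mem]
      have := psi_span G hΨ hb0 hb1 (hv _) hne (hiso' _ (b 0).2 _ (b 1).2) h1 h2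
      refine (Submodule.span_le.2 ?_) this
      rintro _ ⟨i, rfl⟩
      fin_cases i
      · exact (b 0).2
      · exact (b 1).2
    · rintro y ⟨⟨p', rfl⟩, hy⟩
      have hy : (F (Sum.inl p')).submodule ≤ M := hy
      rw [Projectivization.submodule_mk, Submodule.span_singleton_le_iff_mem] at hy
      have : p' = p := by
        apply hu
        rw [hrw _ _ hb0, hrw _ _ hb1]
        exact ⟨hiso' _ hy _ (b 0).2, hiso' _ hy _ (b 1).2⟩
      rw [this]
  · ext y
    obtain ⟨x, rfl⟩ := Fsurj y
    rcases x with p | C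
    · simp only [Set.mem_range, Set.mem_compl_iff]
      constructor
      · rintro ⟨C, hC⟩
        exact absurd (Finj hC) (by simp)
      · intro h
        exact absurd ⟨p, rfl⟩ h
    · simp only [Set.mem_range, Set.mem_compl_iff]
      constructor
      · rintro _ ⟨p, hp⟩
        exact absurd (Finj hp) (by simp)
      · intro h
        exact ⟨C, rfl⟩
  · intro x C
    rw [sbil_apply, ← hΨ _ _ (Projectivization.rep_nonzero _) (Projectivization.rep_nonzero _),
      hrep, hrep]
    exact Iff.rfl
end

section
/- If there exists an inversive plane of even order q, then q is a power of two, i.e., there exists k ≥ 1 with q = 2^k. -/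
structure AffSp {A H W : Type} (L : H → A → A → Prop) (ia : A → W → Prop) (ih : H → W → Prop) :
    Prop where
  refl : ∀ n a, L n a a
  symm : ∀ {n a b}, L n a b → L n b a
  trans : ∀ {n a b c}, L n a b → L n b c → L n a c
  uniq : ∀ {n m a b}, L n a b → L m a b → n ≠ m → a = b
  ex : ∀ a b, ∃ n, L n a b
  par : ∀ {n m a b c}, L n a b → L m a c → ∃ d, L m b d ∧ L n c d
  pl1 : ∀ {a b n w}, ia a w → L n a b → ih n w → ia b w
  pl2 : ∀ {a b n w}, ia a w → ia b w → a ≠ b → L n a b → ih n w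
  pl3 : ∀ a b c, ∃ w, ia a w ∧ ia b w ∧ ia c w
  pl3h : ∀ a b n, ∃ w, ia a w ∧ ia b w ∧ ih n w
  pl4 : ∀ {a n m w w'}, w ≠ w' → ia a w → ia a w' → ih n w → ih n w' → ih m w → ih m w' → n = m
  col : ∀ {m k l w w'}, m ≠ k → ih m w → ih k w → ih l w → ih m w' → ih k w' → ih l w'
  out : ∀ w, ∃ a, ¬ ia a w

namespace AffSp

variable {A H W : Type} {L : H → A → A → Prop} {ia : A → W → Prop} {ih : H → W → Prop}

/-- Non-planar Desargues. -/
theorem desargues (S : AffSp L ia ih) {n m k : H} {a a' b b' c c' : A} {w : W}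
    (haa : L n a a') (hbb : L n b b') (hcc : L n c c')
    (hab : L m a b) (hab' : L m a' b') (hbc : L k b c) (hbc' : L k b' c')
    (wa : ia a w) (wc : ia c w) (wn : ih n w) (wb : ¬ ia b w) :
    ∃ l, L l a c ∧ L l a' c' := by
  by_cases hmk : m = k
  · subst hmk
    exact ⟨m, S.trans hab hbc, S.trans hab' hbc'⟩
  have hane : a ≠ b := by rintro rfl; exact wb wa
  have hac : a ≠ c := by
    rintro rfl
    exact hane (S.uniq hab (S.symm hbc) hmk)
  have hcb : b ≠ c := by rintro rfl; exact wb wc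
  have wb' : ¬ ia b' w := fun h => wb (S.pl1 h (S.symm hbb) wn)
  have wa' := S.pl1 wa haa wn
  have wc' := S.pl1 wc hcc wn
  obtain ⟨l, hl⟩ := S.ex a c
  obtain ⟨l', hl'⟩ := S.ex a' c'
  by_cases hac' : a' = c'
  · subst hac'
    exact ⟨l, hl, S.refl _ _⟩
  obtain ⟨w1, h1a, h1b, h1c⟩ := S.pl3 a b c
  obtain ⟨w2, h2a, h2b, h2c⟩ := S.pl3 a' b' c'
  have hane' : a' ≠ b' := by rintro rfl; exact wb' wa'
  have hcb' : b' ≠ c' := by rintro rfl; exact wb' wc'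
  have e1 : ih l w2 := S.col hmk (S.pl2 h1a h1b hane hab) (S.pl2 h1b h1c hcb hbc)
    (S.pl2 h1a h1c hac hl) (S.pl2 h2a h2b hane' hab') (S.pl2 h2b h2c hcb' hbc')
  have e2 : ih l' w2 := S.pl2 h2a h2c hac' hl'
  have e3 : ih l w := S.pl2 wa wc hac hl
  have e4 : ih l' w := S.pl2 wa' wc' hac' hl'
  have hw : w2 ≠ w := by rintro rfl; exact wb' h2b
  have : l = l' := S.pl4 hw h2a wa' e1 e3 e2 e4
  exact ⟨l, hl, this ▸ hl'⟩

/-- Proper parallelograms in direction `n`. -/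
def R (L : H → A → A → Prop) (n : H) (u u' v v' : A) : Prop :=
  ¬ L n u v ∧ ∃ m, L m u v ∧ L m u' v'

theorem R_symm (S : AffSp L ia ih) {n : H} {u u' v v' : A} (h : R L n u u' v v') :
    R L n v v' u u' :=
  ⟨fun h' => h.1 (S.symm h'), h.2.imp fun _ hm => ⟨S.symm hm.1, S.symm hm.2⟩⟩

theorem R_ex (S : AffSp L ia ih) {n : H} {u u' v : A} (hu : L n u u') (h : ¬ L n u v) :
    ∃ v', L n v v' ∧ R L n u u' v v' := by
  obtain ⟨m, hm⟩ := S.ex u v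
  obtain ⟨d, h1, h2⟩ := S.par hu hm
  exact ⟨d, h2, h, m, hm, h1⟩

theorem R_trans (S : AffSp L ia ih) {n : H} {u u' v v' w w' : A}
    (hu : L n u u') (hv : L n v v') (hw : L n w w')
    (huv : R L n u u' v v') (hvw : R L n v v' w w') (huw : ¬ L n u w) : R L n u u' w w' := by
  -- the nonplanar case
  have key : ∀ {u u' v v' w w' : A} {π : W}, L n u u' → L n v v' → L n w w' →
      R L n u u' v v' → R L n v v' w w' → ¬ L n u w → ia u π → ia w π → ih n π → ¬ ia v π →
      R L n u u' w w' := by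
    intro u u' v v' w w' π hu hv hw ⟨_, m, h1, h2⟩ ⟨_, k, h3, h4⟩ huw p1 p2 p3 p4
    exact ⟨huw, S.desargues hu hv hw h1 h2 h3 h4 p1 p2 p3 p4⟩
  obtain ⟨π, pu, pw, pn⟩ := S.pl3h u w n
  by_cases pv : ia v π
  · obtain ⟨x, px⟩ := S.out π
    have hvx : ¬ L n v x := fun h => px (S.pl1 pv h pn)
    have hux : ¬ L n u x := fun h => px (S.pl1 pu h pn)
    have hwx : ¬ L n w x := fun h => px (S.pl1 pw h pn)
    obtain ⟨x', hx, rvx⟩ := S.R_ex hv hvx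
    have aux : ∀ {u u' : A}, L n u u' → ia u π → R L n u u' v v' → ¬ L n u x →
        R L n u u' x x' := by
      intro u u' hu pu ruv hux
      obtain ⟨σ, su, sx, sn⟩ := S.pl3h u x n
      refine key hu hv hx ruv rvx hux su sx sn fun sv => ?_
      have hne : π ≠ σ := by rintro rfl; exact px sx
      obtain ⟨huv, m, hm, -⟩ := ruv
      have hne' : u ≠ v := by rintro rfl; exact huv (S.refl _ _)
      have : m = n := S.pl4 hne pu su (S.pl2 pu pv hne' hm) (S.pl2 su sv hne' hm) pn sn
      exact huv (this ▸ hm)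
    have r1 := aux hu pu huv hux
    have r2 := aux hw pw (S.R_symm hvw) hwx
    exact key hu hx hw r1 (S.R_symm r2) huw pu pw pn px
  · exact key hu hv hw huv hvw huw pu pw pn pv

theorem R_uniq (S : AffSp L ia ih) {n : H} {u u' v v' v'' : A}
    (hv : L n v v') (hv' : L n v v'')
    (h1 : R L n u u' v v') (h2 : R L n u u' v v'') : v' = v'' := by
  obtain ⟨h, m, hm, hm'⟩ := h1
  obtain ⟨_, k, hk, hk'⟩ := h2
  have hne : u ≠ v := by rintro rfl; exact h (S.refl _ _)
  have : m = k := by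
    by_contra hmk; exact hne (S.uniq hm hk hmk)
  subst this
  refine S.uniq (n := n) (m := m) (S.trans (S.symm hv) hv') (S.trans (S.symm hm') hk') ?_
  rintro rfl; exact h hm

theorem off (S : AffSp L ia ih) (n : H) (a b : A) : ∃ c, ¬ L n a c ∧ ¬ L n b c := by
  obtain ⟨w, ha, hb, hn⟩ := S.pl3h a b n
  obtain ⟨c, hc⟩ := S.out w
  exact ⟨c, fun h => hc (S.pl1 ha h hn), fun h => hc (S.pl1 hb h hn)⟩

/-- The group of translations in direction `n`. -/
def T (S : AffSp L ia ih) (n : H) : Subgroup (Equiv.Perm A) where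
  carrier := {f | (∀ a, L n a (f a)) ∧ ∀ m a b, L m a b ↔ L m (f a) (f b)}
  one_mem' := ⟨fun a => S.refl n a, fun m a b => Iff.rfl⟩
  mul_mem' := by
    rintro f g ⟨hf, hf'⟩ ⟨hg, hg'⟩
    exact ⟨fun a => S.trans (hg a) (hf (g a)), fun m a b => (hg' m a b).trans (hf' m _ _)⟩
  inv_mem' := by
    rintro f ⟨hf, hf'⟩
    refine ⟨fun a => ?_, fun m a b => ?_⟩
    · have := hf (f⁻¹ a)
      simp at this
      exact S.symm this
    · have := hf' m (f⁻¹ a) (f⁻¹ b)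
      simp at this
      exact this.symm

theorem T_fix (S : AffSp L ia ih) {n : H} {f : Equiv.Perm A} (hf : f ∈ S.T n) {a : A}
    (ha : f a = a) : f = 1 := by
  have key : ∀ a b, f a = a → ¬ L n a b → f b = b := by
    intro a b ha hab
    obtain ⟨m, hm⟩ := S.ex a b
    have h1 := (hf.2 m a b).1 hm
    rw [ha] at h1
    exact (S.uniq (S.trans (S.symm hm) h1) (hf.1 b) (by rintro rfl; exact hab hm)).symm
  ext b
  obtain ⟨c, h1, h2⟩ := S.off n a b
  exact key c b (key a c ha h1) (fun h => h2 (S.symm h))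

theorem T_ext (S : AffSp L ia ih) {n : H} {f g : Equiv.Perm A} (hf : f ∈ S.T n) (hg : g ∈ S.T n)
    {a : A} (h : f a = g a) : f = g := by
  have : g⁻¹ * f = 1 := S.T_fix ((S.T n).mul_mem ((S.T n).inv_mem hg) hf) (a := a) (by simp [h])
  exact (inv_mul_eq_one.1 this).symm

theorem T_comm (S : AffSp L ia ih) {n m : H} (hnm : n ≠ m) {f g : Equiv.Perm A}
    (hf : f ∈ S.T n) (hg : g ∈ S.T m) (a : A) : f (g a) = g (f a) := by
  refine S.uniq (n := n) (m := m) ?_ ?_ hnm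
  · exact S.trans (S.symm (hf.1 (g a))) ((hg.2 n _ _).1 (hf.1 a))
  · exact S.trans (S.symm ((hf.2 m _ _).1 (hg.1 a))) (hg.1 (f a))

theorem T_ex [Finite A] (S : AffSp L ia ih) {n : H} {a b : A} (hab : L n a b) :
    ∃ f ∈ S.T n, f a = b := by
  obtain ⟨c, hac, -⟩ := S.off n a a
  obtain ⟨c', hc, rac⟩ := S.R_ex hab hac
  have hca : ¬ L n c a := fun h => hac (S.symm h)
  have ex : ∀ u, ∃ u', L n u u' ∧ (¬ L n a u → R L n a b u u') ∧ (¬ L n c u → R L n c c' u u') := by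
    intro u
    by_cases h1 : L n a u
    · have h2 : ¬ L n c u := fun h => hac (S.trans h1 (S.symm h))
      obtain ⟨u', hu, r⟩ := S.R_ex hc h2
      exact ⟨u', hu, fun h => absurd h1 h, fun _ => r⟩
    · obtain ⟨u', hu, r⟩ := S.R_ex hab h1
      exact ⟨u', hu, fun _ => r, fun h => S.R_trans hc hab hu (S.R_symm rac) r h⟩
  choose f f1 f2 f3 using ex
  have fR1 : ∀ u v, ¬ L n a u → ¬ L n a v → ¬ L n u v → R L n u (f u) v (f v) := fun u v h1 h2 h3 =>
    S.R_trans (f1 u) hab (f1 v) (S.R_symm (f2 u h1)) (f2 v h2) h3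
  have fR2 : ∀ u v, ¬ L n c u → ¬ L n c v → ¬ L n u v → R L n u (f u) v (f v) := fun u v h1 h2 h3 =>
    S.R_trans (f1 u) hc (f1 v) (S.R_symm (f3 u h1)) (f3 v h2) h3
  have fR3 : ∀ u v, L n a u → L n c v → R L n u (f u) v (f v) := by
    intro u v h1 h2
    obtain ⟨x, hx1, hx2⟩ := S.off n a c
    have h3 : ¬ L n c u := fun h => hac (S.trans h1 (S.symm h))
    have h4 : ¬ L n a v := fun h => hac (S.trans h (S.symm h2))
    have h5 : ¬ L n u x := fun h => hx1 (S.trans h1 h)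
    have h6 : ¬ L n x v := fun h => hx2 (S.trans h2 (S.symm h))
    exact S.R_trans (f1 u) (f1 x) (f1 v) (fR2 u x h3 hx2 h5) (fR1 x v hx1 h4 h6)
      (fun h => h4 (S.trans h1 h))
  have fR : ∀ u v, ¬ L n u v → R L n u (f u) v (f v) := by
    intro u v h
    by_cases hu : L n a u
    · by_cases hv : L n c v
      · exact fR3 u v hu hv
      · exact fR2 u v (fun h => hac (S.trans hu (S.symm h))) hv h
    · by_cases hv : L n a v
      · by_cases hu' : L n c u
        · exact S.R_symm (fR3 v u hv hu')
        · exact fR2 u v hu' (fun h => hac (S.trans hv (S.symm h))) h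
      · exact fR1 u v hu hv h
  have finj : Function.Injective f := by
    intro u v huv
    by_cases h : L n u v
    · obtain ⟨w, hw, -⟩ := S.off n u u
      have hw' : ¬ L n v w := fun h' => hw (S.trans h h')
      obtain ⟨h1, m, hm, hm'⟩ := fR u w hw
      obtain ⟨h2, k, hk, hk'⟩ := fR v w hw'
      rw [huv] at hm'
      have hne : f v ≠ f w := by
        intro he
        have e1 := f1 v
        rw [he] at e1
        exact hw' (S.trans e1 (S.symm (f1 w)))
      have : m = k := by
        by_contra hmk; exact hne (S.uniq hm' hk' hmk)
      subst this
      exact S.uniq h (S.trans hm (S.symm hk)) (by rintro rfl; exact h1 hm)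
    · exfalso
      have := f1 u
      rw [huv] at this
      exact h (S.trans this (S.symm (f1 v)))
  have fL : ∀ m u v, L m u v → L m (f u) (f v) := by
    intro m u v huv
    by_cases h : L n u v
    · by_cases hmn : m = n
      · subst hmn
        exact S.trans (S.trans (S.symm (f1 u)) h) (f1 v)
      · rw [S.uniq huv h hmn]; exact S.refl _ _
    · obtain ⟨_, k, hk, hk'⟩ := fR u v h
      have hne : u ≠ v := by rintro rfl; exact h (S.refl _ _)
      have : m = k := by by_contra hmk; exact hne (S.uniq huv hk hmk)
      exact this ▸ hk'
  refine ⟨Equiv.ofBijective f (Finite.injective_iff_bijective.1 finj), ⟨f1, fun m u v => ⟨fL m u v, ?_⟩⟩, ?_⟩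
  · intro h
    obtain ⟨k, hk⟩ := S.ex u v
    have hk' := fL k u v hk
    by_cases hkm : k = m
    · exact hkm ▸ hk
    · have := finj (S.uniq hk' h hkm)
      subst this; exact S.refl _ _
  · exact (S.R_uniq hab (f1 a) (S.R_symm rac) (f3 a hca)).symm

theorem T_card [Finite A] (S : AffSp L ia ih) (n : H) (o : A) :
    Nat.card (S.T n) = Nat.card {b // L n o b} := by
  refine Nat.card_congr (Equiv.ofBijective (fun f => ⟨f.1 o, f.2.1 o⟩) ⟨?_, ?_⟩)
  · intro f g h
    simp only [Subtype.mk.injEq] at h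
    exact Subtype.ext (S.T_ext f.2 g.2 h)
  · rintro ⟨b, hb⟩
    obtain ⟨f, hf, rfl⟩ := S.T_ex hb
    exact ⟨⟨f, hf⟩, rfl⟩

theorem power [Finite A] (S : AffSp L ia ih) {q : ℕ} (hq : Even q) {n m : H} (hnm : n ≠ m) (o : A)
    (hn : Nat.card {b // L n o b} = q) (hm : Nat.card {b // L m o b} = q) : ∃ k, q = 2 ^ k := by
  rw [← S.T_card n o] at hn
  rw [← S.T_card m o] at hm
  have : Fact (Nat.Prime 2) := ⟨Nat.prime_two⟩
  obtain ⟨⟨t, ht⟩, ht2⟩ := exists_prime_orderOf_dvd_card' (G := S.T n) 2 (hn ▸ hq.two_dvd)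
  have ht1 : t ≠ 1 := by
    rintro rfl
    have : (⟨1, ht⟩ : S.T n) = 1 := rfl
    rw [this, orderOf_one] at ht2
    omega
  have htt : ∀ a, t (t a) = a := by
    intro a
    have := pow_orderOf_eq_one (⟨t, ht⟩ : S.T n)
    rw [ht2] at this
    have h2 := congrArg (fun x : S.T n => x.1 a) this
    simpa [pow_two] using h2
  have hs : ∀ s ∈ S.T m, s * s = 1 := by
    intro s hs
    by_cases hs1 : s = 1
    · simp [hs1]
    obtain ⟨k, hk⟩ := S.ex o (t (s o))
    obtain ⟨r, hr, hro⟩ := S.T_ex hk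
    have hkn : k ≠ n := by
      rintro rfl
      have h1 : L k o (s o) := S.trans hk (S.symm (ht.1 _))
      exact hs1 (S.T_fix hs (S.uniq h1 (hs.1 o) hnm).symm)
    have hkm : k ≠ m := by
      rintro rfl
      rw [S.T_comm hnm ht hs] at hk
      have h1 : L k o (t o) := S.trans hk (S.symm (hs.1 _))
      exact ht1 (S.T_fix ht (S.uniq (ht.1 o) h1 hnm).symm)
    have e : r (r o) = s (s o) := by
      rw [hro, S.T_comm hkn hr ht, S.T_comm hkm hr hs, hro, S.T_comm hnm ht hs, htt]
    have h1 : L k o (s (s o)) := e ▸ S.trans (hr.1 o) (hr.1 _)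
    have h2 : L m o (s (s o)) := S.trans (hs.1 o) (hs.1 _)
    exact S.T_fix ((S.T m).mul_mem hs hs) (a := o) (S.uniq h1 h2 hkm).symm
  have hp : IsPGroup 2 (S.T m) := by
    rintro ⟨s, hs'⟩
    refine ⟨1, Subtype.ext ?_⟩
    simpa [pow_two] using hs s hs'
  obtain ⟨k, hk⟩ := IsPGroup.iff_card.1 hp
  exact ⟨k, hm ▸ hk⟩

end AffSp

structure PolSp {S : Type} (r : S → S → Prop) (p : S) : Prop where
  symm : ∀ {s t}, r s t → r t s
  three : ∀ s t h, ∃ z, r z s ∧ r z t ∧ r z h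
  two : ∀ {s t}, s ≠ t → ∃ x y, x ≠ y ∧ r x s ∧ r x t ∧ r y s ∧ r y t
  b3 : ∀ {u v x h z w}, u ≠ v → x ≠ h → r u x → r u h → r v x → r v h →
    r z x → r z h → r w u → r w v → r z w
  out : ∀ w, w ≠ p → ∃ a, ¬ r a p ∧ ¬ r a w

namespace PolSp

variable {S : Type} {r : S → S → Prop} {p : S}

def Col (r : S → S → Prop) (s t u : S) : Prop := ∀ w, r w s → r w t → r w u

theorem col_of (Q : PolSp r p) {u v x h z : S} (huv : u ≠ v) (hxh : x ≠ h) (h1 : r u x) (h2 : r u h)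
    (h3 : r v x) (h4 : r v h) (h5 : r z x) (h6 : r z h) : Col r u v z :=
  fun _ a b => Q.symm (Q.b3 huv hxh h1 h2 h3 h4 h5 h6 a b)

theorem col_swap {u v z : S} (h : Col r u v z) : Col r v u z := fun w a b => h w b a

theorem col_exch (Q : PolSp r p) {s t u : S} (hst : s ≠ t) (hus : s ≠ u) (h : Col r s t u) :
    Col r s u t := by
  obtain ⟨x, y, hxy, h1, h2, h3, h4⟩ := Q.two hst
  exact Q.col_of hus hxy (Q.symm h1) (Q.symm h3) (Q.symm (h x h1 h2)) (Q.symm (h y h3 h4))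
    (Q.symm h2) (Q.symm h4)

theorem meet (Q : PolSp r p) {s t : S} (hst : s ≠ t) (h : S) : ∃ z, Col r s t z ∧ r z h := by
  obtain ⟨x, y, hxy, h1, h2, h3, h4⟩ := Q.two hst
  obtain ⟨z, z1, z2, z3⟩ := Q.three x y h
  exact ⟨z, Q.col_of hst hxy (Q.symm h1) (Q.symm h3) (Q.symm h2) (Q.symm h4) z1 z2, z3⟩

theorem col_trans (Q : PolSp r p) {n a b c : S} (h1 : Col r n a b) (h2 : Col r n b c) :
    Col r n a c := fun w wn wa => h2 w wn (h1 w wn wa)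

theorem aff (Q : PolSp r p) :
    AffSp (A := {a : S // ¬ r a p}) (H := {n : S // r n p}) (W := {w : S // w ≠ p})
      (fun n a b => Col r n.1 a.1 b.1) (fun a w => r a.1 w.1) (fun n w => r n.1 w.1) where
  refl n a := fun w _ h => h
  symm := by
    rintro ⟨n, hn⟩ ⟨a, ha⟩ ⟨b, hb⟩ h
    exact Q.col_exch (by rintro rfl; exact ha hn) (by rintro rfl; exact hb hn) h
  trans := by
    rintro ⟨n, hn⟩ ⟨a, ha⟩ ⟨b, hb⟩ ⟨c, hc⟩ h1 h2
    exact Q.col_trans h1 h2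
  uniq := by
    rintro ⟨n, hn⟩ ⟨m, hm⟩ ⟨a, ha⟩ ⟨b, hb⟩ h1 h2 hnm
    by_contra hab
    simp only [Subtype.mk.injEq, ne_eq] at hnm hab h1 h2
    -- p ⊥ n, m, which are on the line ab
    have hna : n ≠ a := by rintro rfl; exact ha hn
    have hnb : n ≠ b := by rintro rfl; exact hb hn
    have hma : m ≠ a := by rintro rfl; exact ha hm
    have hmb : m ≠ b := by rintro rfl; exact hb hm
    have e1 : Col r a b n := Q.col_exch hna.symm (Ne.intro hab) (col_swap h1)
    have e2 : Col r a b m := Q.col_exch hma.symm (Ne.intro hab) (col_swap h2)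
    obtain ⟨x, y, hxy, x1, x2, x3, x4⟩ := Q.two (Ne.intro hab)
    have := Q.col_of (u := n) (v := m) (z := a) hnm hxy (Q.symm (e1 x x1 x2)) (Q.symm (e1 y x3 x4))
      (Q.symm (e2 x x1 x2)) (Q.symm (e2 y x3 x4)) (Q.symm x1) (Q.symm x3)
    exact ha (Q.symm (this p (Q.symm hn) (Q.symm hm)))
  ex := by
    rintro ⟨a, ha⟩ ⟨b, hb⟩
    by_cases hab : a = b
    · subst hab
      obtain ⟨z, hz, _⟩ := Q.three p p p
      exact ⟨⟨z, hz⟩, fun w _ h => h⟩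
    · obtain ⟨z, hz, hz'⟩ := Q.meet hab p
      exact ⟨⟨z, hz'⟩, col_swap (Q.col_exch hab (by rintro rfl; exact ha hz') hz)⟩
  par := by
    rintro ⟨n, hn⟩ ⟨m, hm⟩ ⟨a, ha⟩ ⟨b, hb⟩ ⟨c, hc⟩ h1 h2
    simp only at h1 h2 ⊢
    by_cases hab : a = b
    · subst hab
      exact ⟨⟨c, hc⟩, h2, fun w _ h => h⟩
    by_cases hnm : n = m
    · subst hnm
      have hna : n ≠ a := by rintro rfl; exact ha hn
      have hnb : n ≠ b := by rintro rfl; exact hb hn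
      have hnc : n ≠ c := by rintro rfl; exact hc hn
      exact ⟨⟨a, ha⟩, Q.col_exch hna hnb h1, Q.col_exch hna hnc h2⟩
    by_cases hac : a = c
    · subst hac
      exact ⟨⟨b, hb⟩, fun w _ h => h, h1⟩
    obtain ⟨w, wa, wb, wc⟩ := Q.three a b c
    have hna : n ≠ a := by rintro rfl; exact ha hn
    have hnc : n ≠ c := by rintro rfl; exact hc hn
    have hma : m ≠ a := by rintro rfl; exact ha hm
    have hmb : m ≠ b := by rintro rfl; exact hb hm
    have wn : r w n := Q.col_exch hna.symm hab (col_swap h1) w wa wb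
    have wm : r w m := Q.col_exch hma.symm hac (col_swap h2) w wa wc
    obtain ⟨h, hwh, hhn, hhc⟩ : ∃ h, w ≠ h ∧ r h n ∧ r h c := by
      obtain ⟨x, y, hxy, h1, h2, h3, h4⟩ := Q.two hnc
      by_cases hwx : w = x
      · exact ⟨y, hwx ▸ hxy, h3, h4⟩
      · exact ⟨x, hwx, h1, h2⟩
    obtain ⟨d, d1, d2⟩ := Q.meet hmb h
    have d3 : Col r n c d := Q.col_of hnc hwh (Q.symm wn) (Q.symm hhn) (Q.symm wc) (Q.symm hhc)
      (Q.symm (d1 w wm wb)) d2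
    refine ⟨⟨d, fun hd => ?_⟩, d1, d3⟩
    have e1 : m = d := by
      by_contra hmd
      exact hb (Q.symm (Q.col_exch hmb hmd d1 p (Q.symm hm) (Q.symm hd)))
    have e2 : n = d := by
      by_contra hmd
      exact hc (Q.symm (Q.col_exch hnc hmd d3 p (Q.symm hn) (Q.symm hd)))
    exact hnm (e2.trans e1.symm)
  pl1 := by
    rintro ⟨a, ha⟩ ⟨b, hb⟩ ⟨n, hn⟩ ⟨w, hw⟩ h1 h2 h3
    exact Q.symm (h2 w (Q.symm h3) (Q.symm h1))
  pl2 := by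
    rintro ⟨a, ha⟩ ⟨b, hb⟩ ⟨n, hn⟩ ⟨w, hw⟩ h1 h2 h3 h4
    have hna : n ≠ a := by rintro rfl; exact ha hn
    simp only [Subtype.mk.injEq, ne_eq] at h3 h4
    exact Q.symm (Q.col_exch hna.symm h3 (col_swap h4) w (Q.symm h1) (Q.symm h2))
  pl3 := by
    rintro ⟨a, ha⟩ ⟨b, hb⟩ ⟨c, hc⟩
    obtain ⟨w, wa, wb, wc⟩ := Q.three a b c
    exact ⟨⟨w, by rintro rfl; exact ha (Q.symm wa)⟩, Q.symm wa, Q.symm wb, Q.symm wc⟩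
  pl3h := by
    rintro ⟨a, ha⟩ ⟨b, hb⟩ ⟨c, hc⟩
    obtain ⟨w, wa, wb, wc⟩ := Q.three a b c
    exact ⟨⟨w, by rintro rfl; exact ha (Q.symm wa)⟩, Q.symm wa, Q.symm wb, Q.symm wc⟩
  pl4 := by
    rintro ⟨a, ha⟩ ⟨n, hn⟩ ⟨m, hm⟩ ⟨w, hw⟩ ⟨w', hw'⟩ hne h1 h2 h3 h4 h5 h6
    by_contra hnm
    simp only [Subtype.mk.injEq, ne_eq] at *
    exact ha (Q.b3 (Ne.intro hnm) hne h3 h4 h5 h6 h1 h2 (Q.symm hn) (Q.symm hm))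
  col := by
    rintro ⟨m, hm⟩ ⟨k, hk⟩ ⟨l, hl⟩ ⟨w, hw⟩ ⟨w', hw'⟩ hmk h1 h2 h3 h4 h5
    simp only [Subtype.mk.injEq, ne_eq] at *
    exact Q.b3 hmk hw h1 hm h2 hk h3 hl (Q.symm h4) (Q.symm h5)
  out := by
    rintro ⟨w, hw⟩
    obtain ⟨a, h1, h2⟩ := Q.out w hw
    exact ⟨⟨a, h1⟩, h2⟩

end PolSp

namespace InversivePlane

open Finset

variable {q : ℕ} {P : Type} [Fintype P] [DecidableEq P]

/-- Orthogonality: the intersection has odd size. -/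
abbrev perp (s t : Finset P) : Prop := Odd (#(s ∩ t))

theorem perp_comm {s t : Finset P} (h : perp s t) : perp t s := by
  unfold perp at *; rwa [inter_comm]

theorem perp_sing {x : P} {t : Finset P} : perp {x} t ↔ x ∈ t := by
  unfold perp
  by_cases h : x ∈ t
  · simp [h]
  · simp [h]

theorem perp_sing' {x : P} {t : Finset P} : perp t {x} ↔ x ∈ t :=
  ⟨fun h => perp_sing.1 (perp_comm h), fun h => perp_comm (perp_sing.2 h)⟩

theorem dc (F : Finset (Finset P)) (X : Finset P) :
    ∑ D ∈ F, #(D ∩ X) = ∑ x ∈ X, #{D ∈ F | x ∈ D} := by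
  have := sum_card_bipartiteAbove_eq_sum_card_bipartiteBelow (s := F) (t := X)
    (r := fun D x => x ∈ D)
  unfold bipartiteAbove bipartiteBelow at this
  rw [← this]
  refine sum_congr rfl fun D _ => ?_
  congr 1
  ext x; simp [and_comm]

variable (I : InversivePlane q P)

/-- Circles through two points. -/
def F (p y : P) : Finset (Finset P) := {D ∈ I.circles | p ∈ D ∧ y ∈ D}

/-- All blocks: circles and singletons. -/
def B : Finset (Finset P) := I.circles ∪ univ.image (fun x => ({x} : Finset P))

/-- Common perps. -/
def M (s t : Finset P) : Finset (Finset P) := {z ∈ I.B | perp z s ∧ perp z t}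

/-- Blocks through `p` orthogonal to `s`. -/
def N (p : P) (s : Finset P) : Finset (Finset P) := {z ∈ I.B | p ∈ z ∧ perp z s}

variable {I}

theorem mem_F {p y : P} {D : Finset P} : D ∈ I.F p y ↔ D ∈ I.circles ∧ p ∈ D ∧ y ∈ D := by
  simp [F]

theorem mem_N {p : P} {s D : Finset P} : D ∈ I.N p s ↔ D ∈ I.B ∧ p ∈ D ∧ perp D s := by
  simp [N]

theorem mem_M {t s D : Finset P} : D ∈ I.M t s ↔ D ∈ I.B ∧ perp D t ∧ perp D s := by
  simp [M]

theorem mem_B {s : Finset P} : s ∈ I.B ↔ s ∈ I.circles ∨ ∃ x, s = {x} := by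
  simp [B, eq_comm]

theorem sing_B (x : P) : {x} ∈ I.B := mem_B.2 (Or.inr ⟨x, rfl⟩)

theorem circ_B {C : Finset P} (h : C ∈ I.circles) : C ∈ I.B := mem_B.2 (Or.inl h)

theorem circ_ne {C : Finset P} (h : C ∈ I.circles) (x : P) : C ≠ {x} := by
  rintro rfl
  have := I.circle_card _ h
  have := I.two_le
  simp at *
  omega

theorem F_comm (p y : P) : I.F p y = I.F y p := by
  ext D; simp only [mem_F]; tauto

theorem three_eq {C D : Finset P} (hC : C ∈ I.circles) (hD : D ∈ I.circles) {x y z : P}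
    (h1 : x ≠ y) (h2 : x ≠ z) (h3 : y ≠ z) (hx : x ∈ C) (hy : y ∈ C) (hz : z ∈ C)
    (hx' : x ∈ D) (hy' : y ∈ D) (hz' : z ∈ D) : C = D :=
  (I.three_points x y z h1 h2 h3).unique ⟨hC, hx, hy, hz⟩ ⟨hD, hx', hy', hz'⟩

theorem inter_le {C D : Finset P} (hC : C ∈ I.circles) (hD : D ∈ I.circles) (h : C ≠ D) :
    #(C ∩ D) ≤ 2 := by
  by_contra hc
  push Not at hc
  obtain ⟨x, y, z, hx, hy, hz, h1, h2, h3⟩ := two_lt_card_iff.1 hc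
  simp only [mem_inter] at hx hy hz
  exact h (three_eq hC hD h1 h2 h3 hx.1 hy.1 hz.1 hx.2 hy.2 hz.2)

theorem F_one {p y x : P} (h1 : p ≠ y) (h2 : p ≠ x) (h3 : y ≠ x) : #{D ∈ I.F p y | x ∈ D} = 1 := by
  obtain ⟨C, hC, hu⟩ := I.three_points p y x h1 h2 h3
  rw [card_eq_one]
  refine ⟨C, ?_⟩
  ext D
  simp only [mem_filter, mem_F, mem_singleton]
  constructor
  · rintro ⟨⟨a, b, c⟩, d⟩; exact hu D ⟨a, b, c, d⟩
  · rintro rfl; exact ⟨⟨hC.1, hC.2.1, hC.2.2.1⟩, hC.2.2.2⟩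

theorem F_sum {p y : P} (h : p ≠ y) {X : Finset P} (hp : p ∉ X) (hy : y ∉ X) :
    ∑ D ∈ I.F p y, #(D ∩ X) = #X := by
  rw [dc, card_eq_sum_ones]
  refine sum_congr rfl fun x hx => F_one h ?_ ?_
  · rintro rfl; exact hp hx
  · rintro rfl; exact hy hx

theorem F_card {p y : P} (h : p ≠ y) : #(I.F p y) = q + 1 := by
  have h1 := F_sum (I := I) h (X := (univ.erase p).erase y) (by simp) (by simp)
  have h2 : ∀ D ∈ I.F p y, #(D ∩ (univ.erase p).erase y) = q - 1 := by
    intro D hD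
    obtain ⟨hD, hp, hy⟩ := mem_F.1 hD
    have : D ∩ (univ.erase p).erase y = (D.erase p).erase y := by ext; simp; tauto
    rw [this, card_erase_of_mem (by simp [hy, h.symm]), card_erase_of_mem hp, I.circle_card D hD]
    omega
  rw [sum_congr rfl h2, card_erase_of_mem (by simp [h.symm]), card_erase_of_mem (by simp),
    card_univ, I.card_points] at h1
  have := I.two_le
  obtain ⟨k, rfl⟩ : ∃ k, q = k + 2 := ⟨q - 2, by omega⟩
  simp only [sum_const, smul_eq_mul] at h1
  have e : (k + 2) ^ 2 + 1 - 1 - 1 = (k + 2 + 1) * (k + 1) := by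
    ring_nf; omega
  rw [e] at h1
  exact Nat.eq_of_mul_eq_mul_right (Nat.succ_pos k) h1

theorem circ_self (hq : Even q) {C : Finset P} (hC : C ∈ I.circles) : perp C C := by
  unfold perp
  rw [inter_self, I.circle_card C hC]
  exact hq.add_one

theorem B_odd (hq : Even q) {C : Finset P} (hC : C ∈ I.B) : Odd (#C) := by
  obtain h | ⟨x, rfl⟩ := mem_B.1 hC
  · rw [I.circle_card C h]; exact hq.add_one
  · simp

/-- Parallel axiom in the derived plane at `p`. -/
theorem F_perp_one (hq : Even q) {p y : P} {C : Finset P} (h : p ≠ y) (hC : C ∈ I.circles)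
    (hp : p ∈ C) : #{D ∈ I.F p y | perp D C} = 1 := by
  by_cases hy : y ∈ C
  · rw [card_eq_one]
    refine ⟨C, ?_⟩
    ext D
    simp only [mem_filter, mem_F, mem_singleton]
    constructor
    · rintro ⟨⟨hD, hpD, hyD⟩, hperp⟩
      by_contra hne
      have h1 := inter_le hD hC hne
      have h2 : 1 < #(D ∩ C) := one_lt_card.2 ⟨p, by simp [hp, hpD], y, by simp [hy, hyD], h⟩
      have h3 : #(D ∩ C) = 2 := by omega
      unfold perp at hperp
      rw [h3] at hperp
      exact absurd hperp (by decide)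
    · rintro rfl
      exact ⟨⟨hC, hp, hy⟩, circ_self hq hC⟩
  · have h1 := F_sum (I := I) h (X := C.erase p) (by simp) (by simp [hy])
    rw [card_erase_of_mem hp, I.circle_card C hC] at h1
    have h2 : ∑ D ∈ I.F p y, (#(D ∩ C.erase p) + if perp D C then 1 else 0) = q + 1 := by
      rw [← F_card (I := I) h, card_eq_sum_ones]
      refine sum_congr rfl fun D hD => ?_
      obtain ⟨hD, hpD, hyD⟩ := mem_F.1 hD
      have e : D ∩ C.erase p = (D ∩ C).erase p := by ext; simp; tauto
      have hmem : p ∈ D ∩ C := by simp [hpD, hp]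
      have hle := inter_le hD hC (by rintro rfl; exact hy hyD)
      have hpos : 0 < #(D ∩ C) := card_pos.2 ⟨p, hmem⟩
      rw [e, card_erase_of_mem hmem]
      unfold perp
      obtain h3 | h3 : #(D ∩ C) = 1 ∨ #(D ∩ C) = 2 := by omega
      · rw [h3]; simp
      · rw [h3, if_neg (by decide)]
    rw [sum_add_distrib, h1, ← card_filter] at h2
    omega

theorem circ_mem_N {p : P} {C D : Finset P} (hD : D ∈ I.circles) : D ∈ I.N p C ↔ p ∈ D ∧ perp D C := by
  simp [mem_N, circ_B hD]

theorem N_notmem {p : P} {C D : Finset P} (hp : p ∉ C) (h : D ∈ I.N p C) : D ∈ I.circles := by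
  obtain ⟨hB, h1, h2⟩ := mem_N.1 h
  obtain h | ⟨x, rfl⟩ := mem_B.1 hB
  · exact h
  · rw [perp_sing] at h2
    simp at h1; subst h1
    exact absurd h2 hp

theorem N_filter {p y : P} {C : Finset P} (h : p ≠ y) :
    {D ∈ I.N p C | y ∈ D} = {D ∈ I.F p y | perp D C} := by
  ext D
  simp only [mem_filter, mem_N, mem_F]
  constructor
  · rintro ⟨⟨hB, h1, h2⟩, h3⟩
    obtain h4 | ⟨x, rfl⟩ := mem_B.1 hB
    · exact ⟨⟨h4, h1, h3⟩, h2⟩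
    · simp at h1 h3; subst h1; exact absurd h3.symm h
  · rintro ⟨⟨hB, h1, h2⟩, h3⟩
    exact ⟨⟨circ_B hB, h1, h3⟩, h2⟩

theorem F_perp_odd (hq : Even q) {p y : P} {C : Finset P} (h : p ≠ y) (hC : C ∈ I.circles) :
    Odd (#{D ∈ I.F p y | perp D C}) := by
  by_cases hp : p ∈ C
  · rw [F_perp_one hq h hC hp]; exact odd_one
  by_cases hy : y ∈ C
  · rw [F_comm, F_perp_one hq h.symm hC hy]; exact odd_one
  have h1 := F_sum (I := I) h hp hy
  rw [I.circle_card C hC] at h1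
  rw [← odd_sum_iff_odd_card_odd (fun D => #(D ∩ C)), h1]
  exact hq.add_one

theorem circ_perp {C D : Finset P} (hC : C ∈ I.circles) (hD : D ∈ I.B) (hne : D ≠ C)
    (h : perp D C) : #(D ∩ C) = 1 := by
  obtain h4 | ⟨x, rfl⟩ := mem_B.1 hD
  · have := inter_le h4 hC hne
    unfold perp at h
    obtain ⟨k, hk⟩ := h
    omega
  · rw [perp_sing] at h
    simp [h]

theorem N_card_notmem (hq : Even q) {p : P} {C : Finset P} (hC : C ∈ I.circles) (hp : p ∉ C) :
    #(I.N p C) = q + 1 := by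
  have h1 := dc (I.N p C) C
  have h2 : ∀ y ∈ C, #{D ∈ I.N p C | y ∈ D} = 1 := by
    intro y hy
    have hpy : p ≠ y := by rintro rfl; exact hp hy
    rw [N_filter hpy, F_comm, F_perp_one hq hpy.symm hC hy]
  have h3 : ∀ D ∈ I.N p C, #(D ∩ C) = 1 := by
    intro D hD
    obtain ⟨hB, hpD, hperp⟩ := mem_N.1 hD
    exact circ_perp hC hB (by rintro rfl; exact hp hpD) hperp
  rw [sum_congr rfl h2, sum_congr rfl h3] at h1
  simpa [I.circle_card C hC] using h1

/-- The nucleus of an oval. -/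
theorem nucleus (hq : Even q) {p : P} {C : Finset P} (hC : C ∈ I.circles) (hp : p ∉ C) :
    ∃ y, p ≠ y ∧ I.N p C = I.F p y := by
  have hq2 := I.two_le
  have hodd : ∀ y, p ≠ y → Odd (#{D ∈ I.N p C | y ∈ D}) := fun y hy => by
    rw [N_filter hy]; exact F_perp_odd hq hy hC
  have hN := N_card_notmem hq hC hp
  obtain ⟨y, hpy, hy⟩ : ∃ y, p ≠ y ∧ #{D ∈ I.N p C | y ∈ D} ≠ 1 := by
    by_contra hcon
    push Not at hcon
    have h1 := dc (I.N p C) (univ.erase p)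
    have h2 : ∀ D ∈ I.N p C, #(D ∩ univ.erase p) = q := by
      intro D hD
      have e : D ∩ univ.erase p = D.erase p := by ext; simp; tauto
      rw [e, card_erase_of_mem (mem_N.1 hD).2.1, I.circle_card D (N_notmem hp hD)]
      rfl
    have h3 : ∀ y ∈ univ.erase p, #{D ∈ I.N p C | y ∈ D} = 1 := fun y hy =>
      hcon y (by simp at hy; exact Ne.symm hy)
    rw [sum_congr rfl h2, sum_congr rfl h3] at h1
    simp [hN, card_erase_of_mem, I.card_points] at h1
    nlinarith
  refine ⟨y, hpy, ?_⟩
  have hy3 : 3 ≤ #{D ∈ I.N p C | y ∈ D} := by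
    obtain ⟨k, hk⟩ := hodd y hpy
    omega
  symm
  refine eq_of_subset_of_card_le ?_ (by rw [hN, F_card hpy])
  intro E hE
  obtain ⟨hE, hpE, hyE⟩ := mem_F.1 hE
  rw [circ_mem_N hE]
  refine ⟨hpE, ?_⟩
  by_contra hperp
  have h1 := dc (I.N p C) (E.erase p)
  have h2 : ∑ D ∈ I.N p C, #(D ∩ E.erase p) ≤ ∑ D ∈ I.N p C, 1 := by
    refine sum_le_sum fun D hD => ?_
    have hDc := N_notmem hp hD
    have hmem : p ∈ D ∩ E := by simp [hpE, (mem_N.1 hD).2.1]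
    have e : D ∩ E.erase p = (D ∩ E).erase p := by ext; simp; tauto
    have hle := inter_le hDc hE (by rintro rfl; exact hperp (mem_N.1 hD).2.2)
    rw [e, card_erase_of_mem hmem]
    omega
  have hyE' : y ∈ E.erase p := by simp [hyE, hpy.symm]
  have h3 : ∑ z ∈ (E.erase p).erase y, 1 ≤ ∑ z ∈ (E.erase p).erase y, #{D ∈ I.N p C | z ∈ D} := by
    refine sum_le_sum fun z hz => ?_
    simp only [mem_erase] at hz
    exact (hodd z (Ne.symm hz.2.1)).pos
  rw [← add_sum_erase _ _ hyE'] at h1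
  simp only [sum_const, smul_eq_mul, mul_one, hN] at h2 h3
  rw [card_erase_of_mem hyE', card_erase_of_mem hpE, I.circle_card E hE] at h3
  omega

theorem N_sing {p y : P} (h : p ≠ y) : I.N p {y} = I.F p y := by
  ext D
  simp only [mem_N, mem_F, perp_sing']
  constructor
  · rintro ⟨hB, h1, h3⟩
    obtain h4 | ⟨x, rfl⟩ := mem_B.1 hB
    · exact ⟨h4, h1, h3⟩
    · simp at h1 h3; subst h1; exact absurd h3.symm h
  · rintro ⟨hB, h1, h3⟩
    exact ⟨circ_B hB, h1, h3⟩

theorem N_card_mem (hq : Even q) {p : P} {C : Finset P} (hC : C ∈ I.circles) (hp : p ∈ C) :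
    #(I.N p C) = q + 1 := by
  have hq2 := I.two_le
  have hs : {p} ∈ I.N p C := by simp [mem_N, sing_B, perp_sing, hp]
  have h1 := dc ((I.N p C).erase {p}) (univ.erase p)
  have h2 : ∀ D ∈ (I.N p C).erase {p}, #(D ∩ univ.erase p) = q := by
    intro D hD
    obtain ⟨hne, hD⟩ := mem_erase.1 hD
    obtain ⟨hB, h1, h2⟩ := mem_N.1 hD
    have hDc : D ∈ I.circles := by
      obtain h4 | ⟨x, rfl⟩ := mem_B.1 hB
      · exact h4
      · simp at h1; subst h1; exact absurd rfl hne
    have e : D ∩ univ.erase p = D.erase p := by ext; simp; tauto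
    rw [e, card_erase_of_mem h1, I.circle_card D hDc]
    rfl
  have h3 : ∀ y ∈ univ.erase p, #{D ∈ (I.N p C).erase {p} | y ∈ D} = 1 := by
    intro y hy
    have hpy : p ≠ y := by simp at hy; exact Ne.symm hy
    have e : {D ∈ (I.N p C).erase {p} | y ∈ D} = {D ∈ I.N p C | y ∈ D} := by
      ext D
      simp only [mem_filter, mem_erase]
      constructor
      · rintro ⟨⟨_, a⟩, b⟩; exact ⟨a, b⟩
      · rintro ⟨a, b⟩
        refine ⟨⟨?_, a⟩, b⟩
        rintro rfl
        simp at b; exact hpy b.symm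
    rw [e, N_filter hpy, F_perp_one hq hpy hC hp]
  rw [sum_congr rfl h2, sum_congr rfl h3] at h1
  simp only [sum_const, smul_eq_mul, mul_one] at h1
  rw [card_erase_of_mem hs, card_erase_of_mem (mem_univ p), card_univ, I.card_points] at h1
  have hpos : 0 < #(I.N p C) := card_pos.2 ⟨_, hs⟩
  obtain ⟨k, hk⟩ : ∃ k, #(I.N p C) = k + 1 := ⟨_, (Nat.succ_pred_eq_of_pos hpos).symm⟩
  rw [hk] at h1 ⊢
  simp only [Nat.add_sub_cancel, pow_two] at h1
  rw [Nat.eq_of_mul_eq_mul_right (by omega) h1]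

/-- Classification of the pencils in the plane at `p`. -/
theorem N_type (hq : Even q) {p : P} {s : Finset P} (hs : s ∈ I.B) (hne : s ≠ {p}) :
    (∃ y, p ≠ y ∧ I.N p s = I.F p y) ∨ (s ∈ I.circles ∧ p ∈ s) := by
  obtain h | ⟨x, rfl⟩ := mem_B.1 hs
  · by_cases hp : p ∈ s
    · exact Or.inr ⟨h, hp⟩
    · exact Or.inl (nucleus hq h hp)
  · have : p ≠ x := by rintro rfl; exact hne rfl
    exact Or.inl ⟨x, this, N_sing this⟩

theorem N_card (hq : Even q) {p : P} {s : Finset P} (hs : s ∈ I.B) (hne : s ≠ {p}) :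
    #(I.N p s) = q + 1 := by
  obtain ⟨y, hy, h⟩ | ⟨h1, h2⟩ := N_type hq hs hne
  · rw [h, F_card hy]
  · exact N_card_mem hq h1 h2

theorem N_tang (hq : Even q) {p : P} {C E : Finset P} (hC : C ∈ I.circles) (hp : p ∈ C)
    (hE : E ∈ I.circles) (hEC : E ∈ I.N p C) : I.N p C = I.N p E := by
  have hpE : p ∈ E := (mem_N.1 hEC).2.1
  refine eq_of_subset_of_card_le ?_ (by rw [N_card_mem hq hC hp, N_card_mem hq hE hpE])
  intro X hX
  obtain ⟨hB, h1, h2⟩ := mem_N.1 hX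
  refine mem_N.2 ⟨hB, h1, ?_⟩
  obtain h4 | ⟨x, rfl⟩ := mem_B.1 hB
  · by_cases hXE : X = E
    · subst hXE; exact circ_self hq hE
    have : X ∩ E = {p} := by
      ext y
      simp only [mem_inter, mem_singleton]
      constructor
      · rintro ⟨a, b⟩
        by_contra hyp
        have := F_perp_one hq (Ne.symm hyp) hC hp
        obtain ⟨Y, hY⟩ := card_eq_one.1 this
        have e1 : X ∈ ({Y} : Finset (Finset P)) := by
          rw [← hY]; simp [mem_F, h4, h1, a, h2]
        have e2 : E ∈ ({Y} : Finset (Finset P)) := by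
          rw [← hY]; simp [mem_F, hE, hpE, b, (mem_N.1 hEC).2.2]
        simp at e1 e2
        exact hXE (e1.trans e2.symm)
      · rintro rfl; exact ⟨h1, hpE⟩
    unfold perp
    rw [this]; simp
  · simp at h1; subst h1
    exact perp_sing.2 hpE

theorem N_dich (hq : Even q) {p : P} {s t : Finset P} (hs : s ∈ I.B) (hne : s ≠ {p})
    (ht : t ∈ I.B) (hne' : t ≠ {p}) : I.N p s = I.N p t ∨ #(I.N p s ∩ I.N p t) = 1 := by
  have aux : ∀ {y : P} {C : Finset P}, p ≠ y → C ∈ I.circles → p ∈ C →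
      #(I.F p y ∩ I.N p C) = 1 := by
    intro y C hy hC hp
    rw [← F_perp_one hq hy hC hp]
    congr 1
    ext D
    simp only [mem_inter, mem_filter, mem_N, mem_F]
    constructor
    · rintro ⟨a, b⟩; exact ⟨a, b.2.2⟩
    · rintro ⟨a, b⟩; exact ⟨a, circ_B a.1, a.2.1, b⟩
  obtain ⟨y, hy, h⟩ | ⟨h1, h2⟩ := N_type hq hs hne
  · obtain ⟨z, hz, h'⟩ | ⟨h1, h2⟩ := N_type hq ht hne'
    · rw [h, h']
      by_cases hyz : y = z
      · left; rw [hyz]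
      · right
        rw [← F_one (I := I) hy hz hyz]
        congr 1
        ext D
        simp only [mem_inter, mem_filter, mem_F]
        tauto
    · right; rw [h]; exact aux hy h1 h2
  · obtain ⟨z, hz, h'⟩ | ⟨h1', h2'⟩ := N_type hq ht hne'
    · right; rw [h', inter_comm]; exact aux hz h1 h2
    · by_cases hE : ∃ E ∈ I.circles, E ∈ I.N p s ∧ E ∈ I.N p t
      · obtain ⟨E, hE, a, b⟩ := hE
        left
        rw [N_tang hq h1 h2 hE a, N_tang hq h1' h2' hE b]
      · right
        rw [card_eq_one]
        refine ⟨{p}, ?_⟩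
        ext X
        simp only [mem_inter, mem_singleton]
        constructor
        · rintro ⟨a, b⟩
          obtain h4 | ⟨x, rfl⟩ := mem_B.1 (mem_N.1 a).1
          · exact absurd ⟨X, h4, a, b⟩ hE
          · have := (mem_N.1 a).2.1
            simp at this; rw [this]
        · rintro rfl
          simp [mem_N, sing_B, perp_sing, h2, h2']

theorem M_filter (p : P) (s t : Finset P) : {z ∈ I.M s t | p ∈ z} = I.N p s ∩ I.N p t := by
  ext z
  simp only [mem_filter, mem_inter, mem_M, mem_N]
  tauto

theorem M_comm (s t : Finset P) : I.M s t = I.M t s := by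
  ext z
  simp only [mem_M]
  tauto

theorem M_sing (p : P) (t : Finset P) : I.M {p} t = I.N p t := by
  ext z
  simp only [mem_M, mem_N, perp_sing']

theorem N_eq_of_two (hq : Even q) {p : P} {s t x h : Finset P} (hs : s ∈ I.B) (hne : s ≠ {p})
    (ht : t ∈ I.B) (hne' : t ≠ {p}) (hxh : x ≠ h) (h1 : x ∈ I.N p s) (h2 : x ∈ I.N p t)
    (h3 : h ∈ I.N p s) (h4 : h ∈ I.N p t) : I.N p s = I.N p t := by
  obtain h' | h' := N_dich hq hs hne ht hne'
  · exact h'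
  · obtain ⟨y, hy⟩ := card_eq_one.1 h'
    have e1 : x ∈ ({y} : Finset (Finset P)) := by rw [← hy]; simp [h1, h2]
    have e2 : h ∈ ({y} : Finset (Finset P)) := by rw [← hy]; simp [h3, h4]
    simp at e1 e2
    exact absurd (e1.trans e2.symm) hxh

theorem M_odd_pt (hq : Even q) (p : P) {s t : Finset P} (hs : s ∈ I.B) (ht : t ∈ I.B)
    (hst : s ≠ t) : Odd (#{z ∈ I.M s t | p ∈ z}) := by
  have aux : ∀ {t : Finset P}, t ∈ I.B → t ≠ {p} → Odd (#{z ∈ I.M {p} t | p ∈ z}) := by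
    intro t ht hne
    have : {z ∈ I.M {p} t | p ∈ z} = I.N p t := by
      rw [M_sing]
      ext z
      simp only [mem_filter, mem_N]
      tauto
    rw [this, N_card hq ht hne]
    exact hq.add_one
  by_cases h1 : s = {p}
  · subst h1; exact aux ht hst.symm
  by_cases h2 : t = {p}
  · subst h2; rw [M_comm]; exact aux hs hst
  rw [M_filter]
  obtain h' | h' := N_dich hq hs h1 ht h2
  · rw [h', inter_self, N_card hq ht h2]; exact hq.add_one
  · rw [h']; exact odd_one

theorem M_odd (hq : Even q) {s t h : Finset P} (hs : s ∈ I.B) (ht : t ∈ I.B) (hh : h ∈ I.B)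
    (hst : s ≠ t) : Odd (#{z ∈ I.M s t | perp z h}) := by
  rw [← odd_sum_iff_odd_card_odd (fun z => #(z ∩ h)), dc, odd_sum_iff_odd_card_odd,
    filter_true_of_mem (fun p _ => M_odd_pt hq p hs ht hst)]
  exact B_odd hq hh

theorem B_card_le {s : Finset P} (hs : s ∈ I.B) : #s ≤ q + 1 := by
  obtain h | ⟨x, rfl⟩ := mem_B.1 hs
  · rw [I.circle_card s h]
  · simp

theorem exists_out {s : Finset P} (hs : s ∈ I.B) (p : P) : ∃ a, a ≠ p ∧ a ∉ s := by
  by_contra hcon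
  push Not at hcon
  have h1 : (univ : Finset P) ⊆ insert p s := by
    intro a _
    by_cases h : a = p
    · simp [h]
    · simp [hcon a h]
  have h2 := card_le_card h1
  have h3 := card_insert_le p s
  have h4 := B_card_le hs
  have h5 := I.two_le
  rw [card_univ, I.card_points] at h2
  nlinarith

theorem M_two (hq : Even q) {s t : Finset P} (hs : s ∈ I.B) (ht : t ∈ I.B)
    (hst : s ≠ t) : ∃ x y, x ≠ y ∧ x ∈ I.M s t ∧ y ∈ I.M s t := by
  have h : ∀ p, ∃ z ∈ I.M s t, p ∈ z := by
    intro p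
    obtain ⟨z, hz⟩ := card_pos.1 (M_odd_pt hq p hs ht hst).pos
    exact ⟨z, (mem_filter.1 hz).1, (mem_filter.1 hz).2⟩
  have hne : Nonempty P := by
    rw [← Fintype.card_pos_iff, I.card_points]; omega
  obtain ⟨p⟩ := hne
  obtain ⟨z, hz, -⟩ := h p
  obtain ⟨a, -, ha⟩ := exists_out (mem_M.1 hz).1 p
  obtain ⟨z', hz', ha'⟩ := h a
  exact ⟨z, z', by rintro rfl; exact ha ha', hz, hz'⟩

theorem M_card (hq : Even q) {u v : Finset P} (hu : u ∈ I.B) (hv : v ∈ I.B)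
    (huv : u ≠ v) : #(I.M u v) = q + 1 := by
  obtain hu' | ⟨x, rfl⟩ := mem_B.1 hu
  swap
  · rw [M_sing, N_card hq hv huv.symm]
  obtain hv' | ⟨x, rfl⟩ := mem_B.1 hv
  swap
  · rw [M_comm, M_sing, N_card hq hu huv]
  have h1 := dc (I.M u v) u
  simp only [M_filter] at h1
  have huc := I.circle_card u hu'
  by_cases hp : perp u v
  · obtain ⟨p, hpp⟩ := card_eq_one.1 (circ_perp hv' hu huv hp)
    have hpu : p ∈ u ∧ p ∈ v := by
      rw [← mem_inter, hpp]; simp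
    have huM : u ∈ I.M u v := mem_M.2 ⟨hu, circ_self hq hu', hp⟩
    have e1 : ∀ y ∈ u.erase p, #(I.N y u ∩ I.N y v) = 1 := by
      intro y hy
      obtain ⟨hyp, hyu⟩ := mem_erase.1 hy
      refine (N_dich hq hu (circ_ne hu' y) hv (circ_ne hv' y)).resolve_left fun h => ?_
      have : {y} ∈ I.N y v := by
        rw [← h]; simp [mem_N, sing_B, perp_sing, hyu]
      have hyv : y ∈ v := perp_sing.1 (mem_N.1 this).2.2
      have : y ∈ u ∩ v := by simp [hyu, hyv]
      rw [hpp] at this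
      exact hyp (by simpa using this)
    have e2 : I.N p u = I.N p v := N_eq_of_two hq hu (circ_ne hu' p) hv (circ_ne hv' p) huv
      (mem_N.2 ⟨hu, hpu.1, circ_self hq hu'⟩) (mem_N.2 ⟨hu, hpu.1, hp⟩)
      (mem_N.2 ⟨hv, hpu.2, perp_comm hp⟩) (mem_N.2 ⟨hv, hpu.2, circ_self hq hv'⟩)
    have e3 : ∀ z ∈ (I.M u v).erase u, #(z ∩ u) = 1 := by
      intro z hz
      obtain ⟨a, b⟩ := mem_erase.1 hz
      exact circ_perp hu' (mem_M.1 b).1 a (mem_M.1 b).2.1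
    rw [← add_sum_erase _ _ huM, ← add_sum_erase _ _ hpu.1, sum_congr rfl e1, sum_congr rfl e3, e2,
      inter_self, inter_self, N_card hq hv (circ_ne hv' p), huc] at h1
    simp only [sum_const, smul_eq_mul, mul_one] at h1
    rw [card_erase_of_mem huM, card_erase_of_mem hpu.1] at h1
    have := card_pos.2 ⟨u, huM⟩
    omega
  · have e1 : ∀ y ∈ u, #(I.N y u ∩ I.N y v) = 1 := by
      intro y hyu
      refine (N_dich hq hu (circ_ne hu' y) hv (circ_ne hv' y)).resolve_left fun h => ?_
      have : u ∈ I.N y v := by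
        rw [← h]; exact mem_N.2 ⟨hu, hyu, circ_self hq hu'⟩
      exact hp (mem_N.1 this).2.2
    have e3 : ∀ z ∈ I.M u v, #(z ∩ u) = 1 := by
      intro z b
      exact circ_perp hu' (mem_M.1 b).1 (by rintro rfl; exact hp (mem_M.1 b).2.2) (mem_M.1 b).2.1
    rw [sum_congr rfl e1, sum_congr rfl e3] at h1
    simpa [huc] using h1

theorem K (hq : Even q) {u v : Finset P} (hu : u ∈ I.B) (hv : v ∈ I.B) (huv : u ≠ v) :
    (∃ p, p ∈ u ∧ p ∈ v) ∨ ∃ p, ∀ w ∈ I.M u v, p ∈ w := by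
  by_contra hcon
  push Not at hcon
  obtain ⟨h1, h2⟩ := hcon
  obtain hu' | ⟨x, rfl⟩ := mem_B.1 hu
  swap
  · obtain ⟨w, hw, hx⟩ := h2 x
    exact hx (perp_sing'.1 (mem_M.1 hw).2.1)
  obtain hv' | ⟨x, rfl⟩ := mem_B.1 hv
  swap
  · obtain ⟨w, hw, hx⟩ := h2 x
    exact hx (perp_sing'.1 (mem_M.1 hw).2.2)
  have hM := M_card hq hu hv huv
  have e := dc (I.M u v) univ
  simp only [M_filter, inter_univ] at e
  have e1 : ∀ z ∈ I.M u v, #z = q + 1 := by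
    intro z hz
    obtain ⟨hB, a, b⟩ := mem_M.1 hz
    obtain h4 | ⟨x, rfl⟩ := mem_B.1 hB
    · exact I.circle_card z h4
    · exact absurd (perp_sing.1 b) (h1 x (perp_sing.1 a))
  have e2 : ∀ y ∈ (univ : Finset P), #(I.N y u ∩ I.N y v) = 1 := by
    intro y _
    refine (N_dich hq hu (circ_ne hu' y) hv (circ_ne hv' y)).resolve_left fun h => ?_
    have e3 : {z ∈ I.M u v | y ∈ z} = I.M u v := by
      refine eq_of_subset_of_card_le (filter_subset _ _) ?_
      rw [M_filter, h, inter_self, N_card hq hv (circ_ne hv' y), hM]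
    obtain ⟨w, hw, hx⟩ := h2 y
    rw [← e3] at hw
    exact hx (mem_filter.1 hw).2
  rw [sum_congr rfl e1, sum_congr rfl e2] at e
  simp only [sum_const, smul_eq_mul, mul_one, hM, card_univ, I.card_points] at e
  have := I.two_le
  nlinarith

theorem b3_pt (hq : Even q) {u v x h z w : Finset P} (hu : u ∈ I.B) (hv : v ∈ I.B) (hz : z ∈ I.B)
    (huv : u ≠ v) (hxh : x ≠ h) (hx : x ∈ I.M u v) (hh : h ∈ I.M u v)
    (hzx : perp z x) (hzh : perp z h) (hw : w ∈ I.M u v) {p : P} (hp : ∀ w ∈ I.M u v, p ∈ w) :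
    perp z w := by
  by_cases hzp : z = {p}
  · subst hzp; exact perp_sing.2 (hp w hw)
  have aux : ∀ {u : Finset P}, u ∈ I.B → u ≠ {p} → perp x u → perp h u → perp w u → perp z w := by
    intro u hu hne a b c
    have e : I.N p u = I.N p z := N_eq_of_two hq hu hne hz hzp hxh
      (mem_N.2 ⟨(mem_M.1 hx).1, hp x hx, a⟩) (mem_N.2 ⟨(mem_M.1 hx).1, hp x hx, perp_comm hzx⟩)
      (mem_N.2 ⟨(mem_M.1 hh).1, hp h hh, b⟩) (mem_N.2 ⟨(mem_M.1 hh).1, hp h hh, perp_comm hzh⟩)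
    have : w ∈ I.N p z := by
      rw [← e]; exact mem_N.2 ⟨(mem_M.1 hw).1, hp w hw, c⟩
    exact perp_comm (mem_N.1 this).2.2
  by_cases hup : u = {p}
  · exact aux hv (by rintro rfl; exact huv hup) (mem_M.1 hx).2.2 (mem_M.1 hh).2.2 (mem_M.1 hw).2.2
  · exact aux hu hup (mem_M.1 hx).2.1 (mem_M.1 hh).2.1 (mem_M.1 hw).2.1

theorem b3 (hq : Even q) {u v x h z w : Finset P} (hu : u ∈ I.B) (hv : v ∈ I.B) (hx : x ∈ I.B)
    (hh : h ∈ I.B) (hz : z ∈ I.B) (hw : w ∈ I.B) (huv : u ≠ v) (hxh : x ≠ h)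
    (h1 : perp u x) (h2 : perp u h) (h3 : perp v x) (h4 : perp v h)
    (h5 : perp z x) (h6 : perp z h) (h7 : perp w u) (h8 : perp w v) : perp z w := by
  have xM : x ∈ I.M u v := mem_M.2 ⟨hx, perp_comm h1, perp_comm h3⟩
  have hM : h ∈ I.M u v := mem_M.2 ⟨hh, perp_comm h2, perp_comm h4⟩
  have wM : w ∈ I.M u v := mem_M.2 ⟨hw, h7, h8⟩
  have uM : u ∈ I.M x h := mem_M.2 ⟨hu, h1, h2⟩
  have vM : v ∈ I.M x h := mem_M.2 ⟨hv, h3, h4⟩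
  have zM : z ∈ I.M x h := mem_M.2 ⟨hz, h5, h6⟩
  have swap : ∀ p, (∀ w ∈ I.M x h, p ∈ w) → perp z w := fun p hp =>
    perp_comm (b3_pt hq hx hh hw hxh huv uM vM h7 h8 zM hp)
  obtain ⟨p, hpu, hpv⟩ | ⟨p, hp⟩ := K hq hu hv huv
  · by_cases hxp : x = {p}
    · refine swap p fun y hy => ?_
      have := (mem_M.1 hy).2.1
      rw [hxp] at this
      exact perp_sing'.1 this
    by_cases hhp : h = {p}
    · refine swap p fun y hy => ?_
      have := (mem_M.1 hy).2.2
      rw [hhp] at this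
      exact perp_sing'.1 this
    have e : I.N p x = I.N p h := N_eq_of_two hq hx hxp hh hhp huv
      (mem_N.2 ⟨hu, hpu, h1⟩) (mem_N.2 ⟨hu, hpu, h2⟩)
      (mem_N.2 ⟨hv, hpv, h3⟩) (mem_N.2 ⟨hv, hpv, h4⟩)
    have e3 : {z ∈ I.M x h | p ∈ z} = I.M x h := by
      refine eq_of_subset_of_card_le (filter_subset _ _) ?_
      rw [M_filter, e, inter_self, N_card hq hh hhp, M_card hq hx hh hxh]
    refine swap p fun y hy => ?_
    rw [← e3] at hy
    exact (mem_filter.1 hy).2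
  · exact b3_pt hq hu hv hz huv hxh xM hM h5 h6 wM hp

theorem pol (hq : Even q) (p : P) :
    PolSp (S := {s : Finset P // s ∈ I.B}) (fun s t => perp s.1 t.1) ⟨{p}, sing_B p⟩ where
  symm := fun h => perp_comm h
  three := by
    have aux : ∀ s t h, s ∈ I.B → t ∈ I.B → h ∈ I.B → s ≠ t →
        ∃ z ∈ I.B, perp z s ∧ perp z t ∧ perp z h := by
      intro s t h hs ht hh hst
      obtain ⟨z, hz⟩ := card_pos.1 (M_odd hq hs ht hh hst).pos
      obtain ⟨a, b⟩ := mem_filter.1 hz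
      obtain ⟨c, d, e⟩ := mem_M.1 a
      exact ⟨z, c, d, e, b⟩
    rintro ⟨s, hs⟩ ⟨t, ht⟩ ⟨h, hh⟩
    by_cases hst : s = t
    · subst hst
      obtain ⟨a, -, ha⟩ := exists_out hs p
      obtain ⟨z, c, d, e, b⟩ := aux s {a} h hs (sing_B a) hh (by rintro rfl; simp at ha)
      exact ⟨⟨z, c⟩, d, d, b⟩
    · obtain ⟨z, c, d, e, b⟩ := aux s t h hs ht hh hst
      exact ⟨⟨z, c⟩, d, e, b⟩
  two := by
    rintro ⟨s, hs⟩ ⟨t, ht⟩ hst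
    obtain ⟨x, y, hxy, hx, hy⟩ := M_two hq hs ht (fun h => hst (Subtype.ext h))
    obtain ⟨a, b, c⟩ := mem_M.1 hx
    obtain ⟨a', b', c'⟩ := mem_M.1 hy
    exact ⟨⟨x, a⟩, ⟨y, a'⟩, fun h => hxy (congrArg Subtype.val h), b, c, b', c'⟩
  b3 := by
    rintro ⟨u, hu⟩ ⟨v, hv⟩ ⟨x, hx⟩ ⟨h, hh⟩ ⟨z, hz⟩ ⟨w, hw⟩ huv hxh
    exact b3 hq hu hv hx hh hz hw (fun h => huv (Subtype.ext h)) (fun h => hxh (Subtype.ext h))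
  out := by
    rintro ⟨w, hw⟩ -
    obtain ⟨a, hap, haw⟩ := exists_out hw p
    refine ⟨⟨{a}, sing_B a⟩, ?_, ?_⟩
    · simp only [perp_sing, mem_singleton]; exact hap
    · simp only [perp_sing]; exact haw

theorem line_count (hq : Even q) {p y : P} (hpy : p ≠ y) {n : Finset P} (hn : n ∈ I.F p y) :
    Nat.card {b : {a : {s : Finset P // s ∈ I.B} // ¬ perp a.1 {p}} //
      PolSp.Col (fun s t : {s : Finset P // s ∈ I.B} => perp s.1 t.1) ⟨n, circ_B (mem_F.1 hn).1⟩
        ⟨{y}, sing_B y⟩ b.1} = q := by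
  obtain ⟨hn, hpn, hyn⟩ := mem_F.1 hn
  have hnN : n ∈ I.N y n := mem_N.2 ⟨circ_B hn, hyn, circ_self hq hn⟩
  have hcard : Nat.card {b // b ∈ (I.N y n).erase n} = q := by
    rw [Nat.card_eq_fintype_card, Fintype.card_coe, card_erase_of_mem hnN, N_card_mem hq hn hyn]
    rfl
  refine Eq.trans (Nat.card_congr (Equiv.ofBijective
    (fun b => (⟨b.1.1.1, ?_⟩ : {b // b ∈ (I.N y n).erase n})) ⟨?_, ?_⟩)) hcard
  · obtain ⟨⟨⟨b, hb⟩, hbp⟩, hcol⟩ := b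
    have h1 := hcol ⟨{y}, sing_B y⟩ (perp_sing.2 hyn) (perp_sing.2 (mem_singleton_self y))
    have h2 := hcol ⟨n, circ_B hn⟩ (circ_self hq hn) (perp_sing'.2 hyn)
    refine mem_erase.2 ⟨?_, mem_N.2 ⟨hb, perp_sing.1 h1, perp_comm h2⟩⟩
    intro hbn
    have hbn : b = n := hbn
    exact hbp (by
      show perp b {p}
      rw [hbn]
      exact perp_sing'.2 hpn)
  · rintro ⟨⟨⟨b, hb⟩, hbp⟩, hcol⟩ ⟨⟨⟨b', hb'⟩, hbp'⟩, hcol'⟩ h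
    simp at h
    subst h
    rfl
  · rintro ⟨b, hb⟩
    obtain ⟨hne, hbN⟩ := mem_erase.1 hb
    obtain ⟨hB, hyb, hbn⟩ := mem_N.1 hbN
    refine ⟨⟨⟨⟨b, hB⟩, ?_⟩, ?_⟩, rfl⟩
    · rw [perp_sing']
      intro hpb
      obtain ⟨Y, hY⟩ := card_eq_one.1 (F_perp_one hq hpy hn hpn)
      have hbc : b ∈ I.circles := by
        obtain h4 | ⟨x, rfl⟩ := mem_B.1 hB
        · exact h4
        · simp at hyb hpb; exact absurd (hpb.trans hyb.symm) hpy
      have e1 : b ∈ ({Y} : Finset (Finset P)) := by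
        rw [← hY]; simp [mem_F, hbc, hpb, hyb, hbn]
      have e2 : n ∈ ({Y} : Finset (Finset P)) := by
        rw [← hY]; simp only [mem_filter, mem_F]; exact ⟨⟨hn, hpn, hyn⟩, circ_self hq hn⟩
      simp at e1 e2
      exact hne (e1.trans e2.symm)
    · rintro ⟨w, hw⟩ hwn hwy
      have hyw : y ∈ w := perp_sing'.1 hwy
      obtain h4 | ⟨x, rfl⟩ := mem_B.1 hB
      · have e := N_tang hq hn hyn h4 hbN
        have : w ∈ I.N y b := by
          rw [← e]; exact mem_N.2 ⟨hw, hyw, hwn⟩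
        exact (mem_N.1 this).2.2
      · simp at hyb; subst hyb
        exact perp_sing'.2 hyw

theorem main (hq : Even q) (I : InversivePlane q P) : ∃ k : ℕ, 1 ≤ k ∧ q = 2 ^ k := by
  have hq2 := I.two_le
  have hcard : 1 < Fintype.card P := by rw [I.card_points]; nlinarith
  obtain ⟨p, y, hpy⟩ := Fintype.one_lt_card_iff.1 hcard
  have hF : 1 < #(I.F p y) := by rw [F_card hpy]; omega
  obtain ⟨n, hn, m, hm, hnm⟩ := one_lt_card.1 hF
  have hA := (pol (I := I) hq p).aff
  obtain ⟨k, hk⟩ := hA.power hq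
    (n := ⟨⟨n, circ_B (mem_F.1 hn).1⟩, perp_sing'.2 (mem_F.1 hn).2.1⟩)
    (m := ⟨⟨m, circ_B (mem_F.1 hm).1⟩, perp_sing'.2 (mem_F.1 hm).2.1⟩)
    (by simpa using hnm)
    ⟨⟨{y}, sing_B y⟩, by simpa [perp_sing] using hpy.symm⟩
    (line_count hq hpy hn) (line_count hq hpy hm)
  refine ⟨k, ?_, hk⟩
  by_contra h
  have : k = 0 := by omega
  subst this
  simp at hk
  omega

end InversivePlane

/-- If there exists an inversive plane of even order `q`, then `q` is a
power of two. -/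
theorem inversive_plane_even_order_is_power_of_two
    {q : ℕ} (hq : Even q) (P : Type) [Fintype P]
    (I : InversivePlane q P) :
    ∃ k : ℕ, 1 ≤ k ∧ q = 2 ^ k := by
  classical
  exact InversivePlane.main hq I
end
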